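/- arXiv:1608.03670 — 2 statements merged into one kernel-verified Lean document; each statement's English description precedes it below -/
import Mathlib

section
/- Let x > 0 be real with x not an integer. Then ∑_{n=1}^∞ σ_{1/2}(n) n^{−1/2} e^{−2π√(2nx)} sin(π/4 + 2π√(2nx)) = (1/2)·{ (1/(π√x) − 1/√2)·ζ(1/2) − (1/(πx√2))·ζ(−1/2) } + (x/(π√2)) ∑_{n=1}^∞ σ_{1/2}(n) n^{−1/2} (√(2x) − √n)/(x² + n²). -/
section
open Complex Finset
open scoped Real BigOperators Classical

/-- Generalized divisor sum `σ_r(n) = ∑_{d ∣ n} d^r` with real exponent. -/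
noncomputable def rsigma (r : ℝ) (n : ℕ) : ℝ := ∑ d ∈ n.divisors, (d : ℝ) ^ r

end

namespace HP
open scoped Real
open MeasureTheory Set Filter Topology

/-- Sum/integral exchange for nonnegative terms. -/
lemma tonelli {ι : Type*} [Countable ι] (F : ι → ℝ → ℝ) (g : ℝ → ℝ) (a : ι → ℝ) (A : ℝ)
    (hF0 : ∀ i, ∀ u ∈ Ioi (0:ℝ), 0 ≤ F i u)
    (hFi : ∀ i, IntegrableOn (F i) (Ioi 0))
    (hFa : ∀ i, ∫ u in Ioi (0:ℝ), F i u = a i)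
    (hg : ∀ u ∈ Ioi (0:ℝ), HasSum (fun i => F i u) (g u))
    (ha : HasSum a A) :
    IntegrableOn g (Ioi 0) ∧ ∫ u in Ioi (0:ℝ), g u = A := by
  have hnorm : ∀ i, ∫ u in Ioi (0:ℝ), ‖F i u‖ = a i := by
    intro i
    rw [← hFa i]
    refine setIntegral_congr_fun measurableSet_Ioi fun u hu => ?_
    exact Real.norm_of_nonneg (hF0 i u hu)
  have hval : ∫ u in Ioi (0:ℝ), g u = A := by
    have h := hasSum_integral_of_summable_integral_norm (μ := volume.restrict (Ioi (0:ℝ))) hFi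
      (by simp_rw [hnorm]; exact ha.summable)
    have h2 : ∫ u in Ioi (0:ℝ), g u = ∫ u in Ioi (0:ℝ), ∑' i, F i u :=
      setIntegral_congr_fun measurableSet_Ioi fun u hu => (hg u hu).tsum_eq.symm
    rw [h2]
    simp_rw [hFa] at h
    exact h.unique ha
  refine ⟨?_, hval⟩
  have hmeas : AEMeasurable g (volume.restrict (Ioi 0)) := by
    have h1 : AEMeasurable (fun u => ∑' i, ENNReal.ofReal (F i u)) (volume.restrict (Ioi 0)) :=
      AEMeasurable.tsum fun i => (hFi i).aestronglyMeasurable.aemeasurable.ennreal_ofReal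
    refine h1.ennreal_toReal.congr ?_
    filter_upwards [ae_restrict_mem measurableSet_Ioi] with u hu
    rw [← ENNReal.ofReal_tsum_of_nonneg (fun i => hF0 i u hu) (hg u hu).summable,
      (hg u hu).tsum_eq, ENNReal.toReal_ofReal ((hg u hu).nonneg (fun i => hF0 i u hu))]
  have hg0 : ∀ᵐ u ∂(volume.restrict (Ioi (0:ℝ))), 0 ≤ g u := by
    filter_upwards [ae_restrict_mem measurableSet_Ioi] with u hu
    exact (hg u hu).nonneg (fun i => hF0 i u hu)
  refine ⟨hmeas.aestronglyMeasurable, ?_⟩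
  rw [hasFiniteIntegral_iff_ofReal hg0]
  have : ∫⁻ u in Ioi (0:ℝ), ENNReal.ofReal (g u) = ∑' i, ENNReal.ofReal (a i) := by
    have e1 : ∫⁻ u in Ioi (0:ℝ), ENNReal.ofReal (g u)
        = ∫⁻ u in Ioi (0:ℝ), ∑' i, ENNReal.ofReal (F i u) := by
      refine setLIntegral_congr_fun measurableSet_Ioi fun u hu => ?_
      rw [← ENNReal.ofReal_tsum_of_nonneg (fun i => hF0 i u hu) (hg u hu).summable,
        (hg u hu).tsum_eq]
    rw [e1, lintegral_tsum fun i => (hFi i).aestronglyMeasurable.aemeasurable.ennreal_ofReal]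
    congr 1
    ext i
    rw [← hFa i, ofReal_integral_eq_lintegral_ofReal (hFi i)]
    filter_upwards [ae_restrict_mem measurableSet_Ioi] with u hu using hF0 i u hu
  rw [this]
  have ha0 : ∀ i, 0 ≤ a i := fun i => by
    rw [← hFa i]; exact setIntegral_nonneg measurableSet_Ioi (hF0 i)
  rw [← ENNReal.ofReal_tsum_of_nonneg ha0 ha.summable]
  exact ENNReal.ofReal_lt_top

lemma image_div {r : ℝ} (hr : 0 < r) : (fun v : ℝ => r / v) '' Ioi 0 = Ioi 0 := by
  ext y
  constructor
  · rintro ⟨v, hv, rfl⟩; exact div_pos hr hv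
  · intro hy
    refine ⟨r / y, div_pos hr hy, ?_⟩
    have : y ≠ 0 := ne_of_gt hy
    field_simp

lemma injOn_div {r : ℝ} (hr : 0 < r) : InjOn (fun v : ℝ => r / v) (Ioi 0) := by
  intro a ha b hb h
  have ha' : a ≠ 0 := ne_of_gt ha
  have hb' : b ≠ 0 := ne_of_gt hb
  simp only at h
  field_simp at h
  exact h.symm

lemma deriv_div {r : ℝ} : ∀ v ∈ Ioi (0:ℝ),
    HasDerivWithinAt (fun v : ℝ => r / v) (-(r / v ^ 2)) (Ioi 0) v := by
  intro v hv
  have hv' : v ≠ 0 := ne_of_gt hv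
  have := (hasDerivAt_inv hv').const_mul r
  refine (this.congr_deriv ?_).hasDerivWithinAt
  field_simp

/-- inversion -/
lemma integral_inversion {r : ℝ} (hr : 0 < r) (g : ℝ → ℝ) :
    ∫ v in Ioi (0:ℝ), g v = ∫ v in Ioi (0:ℝ), (r / v ^ 2) * g (r / v) := by
  have := integral_image_eq_integral_abs_deriv_smul measurableSet_Ioi
    (deriv_div (r := r)) (injOn_div hr) g
  rw [image_div hr] at this
  rw [this]
  refine setIntegral_congr_fun measurableSet_Ioi fun v hv => ?_
  simp only [smul_eq_mul, abs_neg]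
  rw [abs_of_pos (div_pos hr (pow_pos hv 2))]

lemma integrable_inversion {r : ℝ} (hr : 0 < r) (g : ℝ → ℝ) :
    IntegrableOn g (Ioi 0) ↔ IntegrableOn (fun v => (r / v ^ 2) * g (r / v)) (Ioi 0) := by
  have := integrableOn_image_iff_integrableOn_abs_deriv_smul measurableSet_Ioi
    (deriv_div (r := r)) (injOn_div hr) g
  rw [image_div hr] at this
  rw [this]
  refine integrableOn_congr_fun (fun v hv => ?_) measurableSet_Ioi
  simp only [smul_eq_mul, abs_neg]
  rw [abs_of_pos (div_pos hr (pow_pos hv 2))]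

/-- Cauchy-Schloemilch -/
lemma gaussInv {p q : ℝ} (hp : 0 < p) (hq : 0 < q) :
    IntegrableOn (fun v : ℝ => Real.exp (-(p ^ 2 * v ^ 2 + q ^ 2 / v ^ 2))) (Ioi 0) ∧
    ∫ v in Ioi (0:ℝ), Real.exp (-(p ^ 2 * v ^ 2 + q ^ 2 / v ^ 2))
      = √π / (2 * p) * Real.exp (-(2 * p * q)) := by
  set E : ℝ → ℝ := fun v => Real.exp (-(p ^ 2 * v ^ 2 + q ^ 2 / v ^ 2)) with hE
  have hd : ∀ v ∈ Ioi (0:ℝ), HasDerivWithinAt (fun v : ℝ => p * v - q / v)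
      (p + q / v ^ 2) (Ioi 0) v := by
    intro v hv
    have h1 := ((hasDerivAt_id v).const_mul p).hasDerivWithinAt (s := Ioi 0)
    refine (h1.sub (deriv_div (r := q) v hv)).congr_deriv ?_
    ring
  have hinj : InjOn (fun v : ℝ => p * v - q / v) (Ioi 0) := by
    apply StrictMonoOn.injOn
    intro a ha b hb hab
    have h1 : q / b < q / a := div_lt_div_of_pos_left hq ha hab
    have h2 : p * a < p * b := mul_lt_mul_of_pos_left hab hp
    simp only
    linarith
  have him : (fun v : ℝ => p * v - q / v) '' Ioi 0 = univ := by
    ext y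
    simp only [mem_image, mem_Ioi, mem_univ, iff_true]
    have hs : y ^ 2 < y ^ 2 + 4 * p * q := by nlinarith [mul_pos hp hq]
    have hs1 : |y| < √(y ^ 2 + 4 * p * q) := by
      rw [← Real.sqrt_sq_eq_abs]; exact Real.sqrt_lt_sqrt (sq_nonneg y) hs
    have hpos : 0 < y + √(y ^ 2 + 4 * p * q) := by linarith [neg_abs_le y]
    have hsq : √(y ^ 2 + 4 * p * q) ^ 2 = y ^ 2 + 4 * p * q :=
      Real.sq_sqrt (by nlinarith [mul_pos hp hq, sq_nonneg y])
    refine ⟨(y + √(y ^ 2 + 4 * p * q)) / (2 * p), by positivity, ?_⟩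
    generalize √(y ^ 2 + 4 * p * q) = S at hsq hpos
    have hne : y + S ≠ 0 := hpos.ne'
    have hp' : p ≠ 0 := hp.ne'
    field_simp
    linear_combination hsq
  have key : ∀ v ∈ Ioi (0:ℝ), |p + q / v ^ 2| • Real.exp (-1 * (p * v - q / v) ^ 2)
      = Real.exp (2 * p * q) * (p * E v) + Real.exp (2 * p * q) * (q / v ^ 2 * E v) := by
    intro v hv
    have hv' : v ≠ 0 := ne_of_gt hv
    have hv0 : 0 < v := hv
    rw [abs_of_pos (by positivity), smul_eq_mul]
    have : -1 * (p * v - q / v) ^ 2 = 2 * p * q + -(p ^ 2 * v ^ 2 + q ^ 2 / v ^ 2) := by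
      field_simp
      ring
    rw [this, Real.exp_add, hE]
    ring
  have hintg : IntegrableOn (fun v => Real.exp (2 * p * q) * (p * E v)
      + Real.exp (2 * p * q) * (q / v ^ 2 * E v)) (Ioi 0) := by
    have h := (integrableOn_image_iff_integrableOn_abs_deriv_smul measurableSet_Ioi hd hinj
      (fun y => Real.exp (-1 * y ^ 2))).1 (by
        rw [him]; exact (integrable_exp_neg_mul_sq one_pos).integrableOn)
    exact (integrableOn_congr_fun key measurableSet_Ioi).1 h
  have hval1 : ∫ v in Ioi (0:ℝ), (Real.exp (2 * p * q) * (p * E v)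
      + Real.exp (2 * p * q) * (q / v ^ 2 * E v)) = √π := by
    have h := integral_image_eq_integral_abs_deriv_smul measurableSet_Ioi hd hinj
      (fun y => Real.exp (-1 * y ^ 2))
    rw [him, setIntegral_congr_fun measurableSet_Ioi key] at h
    rw [← h, Measure.restrict_univ, integral_gaussian, div_one]
  have hEm : AEStronglyMeasurable E (volume.restrict (Ioi 0)) := by
    apply Measurable.aestronglyMeasurable
    rw [hE]; fun_prop
  have hEint : IntegrableOn E (Ioi 0) := by
    have h2 : IntegrableOn (fun v => (Real.exp (2 * p * q) * p) * E v) (Ioi 0) := by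
      refine Integrable.mono' hintg (hEm.const_mul _) ?_
      filter_upwards [ae_restrict_mem measurableSet_Ioi] with v hv
      have hv0 : 0 < v := hv
      have hE0 : 0 < E v := Real.exp_pos _
      rw [Real.norm_of_nonneg (by positivity)]
      have : 0 ≤ Real.exp (2 * p * q) * (q / v ^ 2 * E v) := by positivity
      nlinarith
    have h3 := h2.const_mul (Real.exp (2 * p * q) * p)⁻¹
    refine h3.congr ?_
    filter_upwards with v
    have := Real.exp_pos (2 * p * q)
    field_simp
  refine ⟨hEint, ?_⟩
  have hr : 0 < q / p := div_pos hq hp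
  have hinvE : ∀ v ∈ Ioi (0:ℝ), (q / p / v ^ 2) * (p * E (q / p / v)) = q / v ^ 2 * E v := by
    intro v hv
    have hv' : v ≠ 0 := ne_of_gt hv
    have h1 : -(p ^ 2 * (q / p / v) ^ 2 + q ^ 2 / (q / p / v) ^ 2)
      = -(p ^ 2 * v ^ 2 + q ^ 2 / v ^ 2) := by
      field_simp
      ring
    simp only [hE]
    rw [h1]
    field_simp
  have hpE : IntegrableOn (fun v => p * E v) (Ioi 0) := hEint.const_mul p
  have hqE : IntegrableOn (fun v => q / v ^ 2 * E v) (Ioi 0) :=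
    (integrableOn_congr_fun hinvE measurableSet_Ioi).1
      ((integrable_inversion hr (fun v => p * E v)).1 hpE)
  have hqv : ∫ v in Ioi (0:ℝ), q / v ^ 2 * E v = ∫ v in Ioi (0:ℝ), p * E v := by
    rw [integral_inversion hr (fun v => p * E v), setIntegral_congr_fun measurableSet_Ioi hinvE]
  rw [integral_add (hpE.const_mul _) (hqE.const_mul _), integral_const_mul (Real.exp (2 * p * q)),
    integral_const_mul (Real.exp (2 * p * q)), hqv, integral_const_mul] at hval1
  have he : Real.exp (-(2 * p * q)) = (Real.exp (2 * p * q))⁻¹ := Real.exp_neg _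
  rw [he, ← hval1]
  have := Real.exp_pos (2 * p * q)
  field_simp
  ring

end HP

namespace HP
open scoped Real
open MeasureTheory Set Filter Topology

lemma inv_one_add_pow_four :
    IntegrableOn (fun v : ℝ => 1 / (1 + v ^ 4)) (Ioi 0) ∧
    ∫ v in Ioi (0:ℝ), 1 / (1 + v ^ 4) = π / (2 * √2) := by
  set s : ℝ := √2 with hs
  have hs2 : s ^ 2 = 2 := Real.sq_sqrt (by norm_num)
  have hs0 : 0 < s := Real.sqrt_pos.2 (by norm_num)
  let G : ℝ → ℝ := fun v => 1 / (4 * s) * (Real.log ((v ^ 2 + s * v + 1) / (v ^ 2 - s * v + 1)))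
    + 1 / (2 * s) * (Real.arctan (s * v + 1) + Real.arctan (s * v - 1))
  have hp1 : ∀ v : ℝ, 0 < v ^ 2 + s * v + 1 := fun v => by nlinarith [sq_nonneg (v + s / 2)]
  have hp2 : ∀ v : ℝ, 0 < v ^ 2 - s * v + 1 := fun v => by nlinarith [sq_nonneg (v - s / 2)]
  have hd : ∀ v ∈ Ici (0:ℝ), HasDerivAt G (1 / (1 + v ^ 4)) v := by
    intro v _
    have e1 : HasDerivAt (fun v : ℝ => v ^ 2 + s * v + 1) (2 * v + s) v := by
      have := (((hasDerivAt_id v).pow 2).add ((hasDerivAt_id v).const_mul s)).add_const 1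
      refine this.congr_deriv ?_
      simp
    have e2 : HasDerivAt (fun v : ℝ => v ^ 2 - s * v + 1) (2 * v - s) v := by
      have := (((hasDerivAt_id v).pow 2).sub ((hasDerivAt_id v).const_mul s)).add_const 1
      refine this.congr_deriv ?_
      simp
    have e3 := (e1.div e2 (hp2 v).ne').log (div_pos (hp1 v) (hp2 v)).ne'
    have e4 : HasDerivAt (fun v : ℝ => s * v + 1) s v := by
      simpa using ((hasDerivAt_id v).const_mul s).add_const 1
    have e5 : HasDerivAt (fun v : ℝ => s * v - 1) s v := by
      simpa using ((hasDerivAt_id v).const_mul s).sub_const 1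
    have e6 := (e3.const_mul (1 / (4 * s))).add ((e4.arctan.add e5.arctan).const_mul (1 / (2 * s)))
    refine e6.congr_deriv ?_
    simp only [Pi.div_apply]
    have h1 := (hp1 v).ne'
    have h2 := (hp2 v).ne'
    have h3 : 1 + (s * v + 1) ^ 2 = 2 * (v ^ 2 + s * v + 1) := by
      linear_combination v ^ 2 * hs2
    have h4 : 1 + (s * v - 1) ^ 2 = 2 * (v ^ 2 - s * v + 1) := by
      linear_combination v ^ 2 * hs2
    have h5 : 1 + v ^ 4 = (v ^ 2 + s * v + 1) * (v ^ 2 - s * v + 1) := by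
      linear_combination v ^ 2 * hs2
    rw [h3, h4, h5]
    clear h3 h4 h5 e6 e3 e1 e2
    generalize hP : v ^ 2 + s * v + 1 = P at h1 ⊢
    generalize hQ : v ^ 2 - s * v + 1 = Q at h2 ⊢
    field_simp
    rw [← hP, ← hQ]
    ring
  have hpos : ∀ v ∈ Ioi (0:ℝ), 0 ≤ 1 / (1 + v ^ 4) := fun v _ => by positivity
  have hlim : Tendsto G atTop (𝓝 (1 / (4 * s) * Real.log 1 + 1 / (2 * s) * (π / 2 + π / 2))) := by
    have t1 : Tendsto (fun v : ℝ => s * v) atTop atTop := tendsto_id.const_mul_atTop hs0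
    have a0 := tendsto_nhds_of_tendsto_nhdsWithin Real.tendsto_arctan_atTop
    have a1 := a0.comp (tendsto_atTop_add_const_right atTop (1:ℝ) t1)
    have a2 := a0.comp (tendsto_atTop_add_const_right atTop (-1:ℝ) t1)
    have a3 : Tendsto (fun v : ℝ => (v ^ 2 + s * v + 1) / (v ^ 2 - s * v + 1)) atTop (𝓝 1) := by
      have i1 : Tendsto (fun v : ℝ => v⁻¹) atTop (𝓝 0) := tendsto_inv_atTop_zero
      have n1 : Tendsto (fun v : ℝ => 1 + s * v⁻¹ + v⁻¹ * v⁻¹) atTop (𝓝 (1 + s * 0 + 0 * 0)) :=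
        ((i1.const_mul s).const_add 1).add (i1.mul i1)
      have n2 : Tendsto (fun v : ℝ => 1 - s * v⁻¹ + v⁻¹ * v⁻¹) atTop (𝓝 (1 - s * 0 + 0 * 0)) :=
        ((i1.const_mul s).const_sub 1).add (i1.mul i1)
      have n3 := n1.div n2 (by norm_num)
      norm_num at n3
      refine n3.congr' ?_
      filter_upwards [eventually_gt_atTop 0] with v hv
      have h2 := (hp2 v).ne'
      have : 1 - s * v⁻¹ + v⁻¹ * v⁻¹ = (v ^ 2 - s * v + 1) / v ^ 2 := by field_simp
      have h' : 1 + s * v⁻¹ + v⁻¹ * v⁻¹ = (v ^ 2 + s * v + 1) / v ^ 2 := by field_simp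
      simp only [Pi.div_apply]
      rw [this, h']
      field_simp
    have a4 := (Real.continuousAt_log one_ne_zero).tendsto.comp a3
    have a5 := (a4.const_mul (1 / (4 * s))).add ((a1.add a2).const_mul (1 / (2 * s)))
    exact a5
  refine ⟨integrableOn_Ioi_deriv_of_nonneg' hd hpos hlim, ?_⟩
  rw [integral_Ioi_of_hasDerivAt_of_nonneg' hd hpos hlim]
  simp only [G]
  have : Real.arctan (s * 0 - 1) = - Real.arctan 1 := by
    rw [← Real.arctan_neg]; congr 1; ring
  rw [this]
  simp
  field_simp

lemma kint {a b : ℝ} (ha : 0 < a) (hb : 0 < b) :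
    IntegrableOn (fun v : ℝ => 1 / (a ^ 4 * v ^ 4 + b ^ 4)) (Ioi 0) ∧
    ∫ v in Ioi (0:ℝ), 1 / (a ^ 4 * v ^ 4 + b ^ 4) = π / (2 * √2) / (a * b ^ 3) := by
  obtain ⟨h1, h2⟩ := inv_one_add_pow_four
  have hab : 0 < a / b := div_pos ha hb
  have hc : ∀ v : ℝ, 1 / (a ^ 4 * v ^ 4 + b ^ 4) = 1 / b ^ 4 * (1 / (1 + (a / b * v) ^ 4)) := by
    intro v
    have : 1 + (a / b * v) ^ 4 = (a ^ 4 * v ^ 4 + b ^ 4) / b ^ 4 := by field_simp; ring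
    rw [this]
    have : a ^ 4 * v ^ 4 + b ^ 4 ≠ 0 := by positivity
    field_simp
  simp_rw [hc]
  constructor
  · refine Integrable.const_mul ?_ _
    have := (integrableOn_Ioi_comp_mul_left_iff (fun v : ℝ => 1 / (1 + v ^ 4)) 0 hab).2
      (by rw [mul_zero]; exact h1)
    exact this
  · rw [integral_const_mul, integral_comp_mul_left_Ioi (fun v : ℝ => 1 / (1 + v ^ 4)) 0 hab,
      mul_zero, h2, smul_eq_mul]
    field_simp

/-- Second moment -/
lemma gauss_second {b : ℝ} (hb : 0 < b) :
    IntegrableOn (fun v : ℝ => v ^ 2 * Real.exp (-(b ^ 2 * v ^ 2))) (Ioi 0) ∧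
    ∫ v in Ioi (0:ℝ), v ^ 2 * Real.exp (-(b ^ 2 * v ^ 2)) = √π / (4 * b ^ 3) := by
  have hb2 : 0 < b ^ 2 := by positivity
  constructor
  · have := integrableOn_rpow_mul_exp_neg_mul_sq hb2 (s := 2) (by norm_num)
    simpa using this
  · have := integral_rpow_mul_exp_neg_mul_rpow (p := 2) (q := 2) (b := b ^ 2) (by norm_num)
      (by norm_num) hb2
    have h2 : ∫ v in Ioi (0:ℝ), v ^ 2 * Real.exp (-(b ^ 2 * v ^ 2))
      = ∫ (x : ℝ) in Ioi 0, x ^ (2:ℝ) * Real.exp (-b ^ 2 * x ^ (2:ℝ)) := by simp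
    rw [h2, this]
    have hG : Real.Gamma ((2 + 1) / 2) = √π / 2 := by
      have := Real.Gamma_add_one (s := 1 / 2) (by norm_num)
      rw [Real.Gamma_one_half_eq] at this
      have e : (2 + 1 : ℝ) / 2 = 1 / 2 + 1 := by norm_num
      rw [e, this]; ring
    rw [hG, ← Real.rpow_natCast b 2, ← Real.rpow_mul hb.le]
    have : b ^ (((2:ℕ):ℝ) * (-(2 + 1) / 2)) = (b ^ 3)⁻¹ := by
      have e : ((2:ℕ):ℝ) * (-(2 + 1) / 2) = -((3:ℕ):ℝ) := by norm_num
      rw [e, Real.rpow_neg hb.le, Real.rpow_natCast]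
    rw [this]
    field_simp
    norm_num

lemma gauss_diff {a b : ℝ} (ha : 0 ≤ a) (hab : a < b) :
    IntegrableOn (fun v : ℝ => (Real.exp (-(a ^ 2 * v ^ 2)) - Real.exp (-(b ^ 2 * v ^ 2))) / v ^ 2)
      (Ioi 0) ∧
    ∫ v in Ioi (0:ℝ), (Real.exp (-(a ^ 2 * v ^ 2)) - Real.exp (-(b ^ 2 * v ^ 2))) / v ^ 2
      = √π * (b - a) := by
  have hb : 0 < b := ha.trans_lt hab
  let k : ℝ → ℝ := fun v => Real.exp (-(a ^ 2 * v ^ 2)) - Real.exp (-(b ^ 2 * v ^ 2))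
  let m : ℝ → ℝ := fun v => 2 * b ^ 2 * Real.exp (-(b ^ 2) * v ^ 2)
    - 2 * a ^ 2 * Real.exp (-(a ^ 2) * v ^ 2)
  have hmc : Continuous m := by fun_prop
  have hgi : ∀ c : ℝ, 0 ≤ c →
      IntegrableOn (fun v : ℝ => 2 * c ^ 2 * Real.exp (-(c ^ 2) * v ^ 2)) (Ioi 0) ∧
      ∫ v in Ioi (0:ℝ), 2 * c ^ 2 * Real.exp (-(c ^ 2) * v ^ 2) = √π * c := by
    intro c hc
    rcases hc.eq_or_lt with rfl | hc
    · simp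
    · have hc2 : 0 < c ^ 2 := by positivity
      refine ⟨((integrable_exp_neg_mul_sq hc2).integrableOn).const_mul _, ?_⟩
      rw [integral_const_mul, integral_gaussian_Ioi, Real.sqrt_div Real.pi_pos.le,
        Real.sqrt_sq hc.le]
      field_simp
  obtain ⟨ia, va⟩ := hgi a ha
  obtain ⟨ib, vb⟩ := hgi b hb.le
  have hmi : IntegrableOn m (Ioi 0) := ib.sub ia
  have hmv : ∫ v in Ioi (0:ℝ), m v = √π * (b - a) := by
    simp only [m]
    rw [integral_sub ib ia, va, vb]; ring
  let G : ℝ → ℝ := fun v => -(k v / v) + ∫ t in (0:ℝ)..v, m t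
  have hkd : ∀ v, HasDerivAt k (v * m v) v := by
    intro v
    have e : ∀ c : ℝ, HasDerivAt (fun v : ℝ => Real.exp (-(c ^ 2 * v ^ 2)))
        (Real.exp (-(c ^ 2 * v ^ 2)) * (-(c ^ 2 * (2 * v)))) v := by
      intro c
      have := (((hasDerivAt_id v).pow 2).const_mul (c ^ 2)).neg.exp
      refine this.congr_deriv ?_
      simp
    refine ((e a).sub (e b)).congr_deriv ?_
    simp only [m, neg_mul]
    ring
  have hd : ∀ v ∈ Ioi (0:ℝ), HasDerivAt G (k v / v ^ 2) v := by
    intro v hv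
    have hv' : v ≠ 0 := ne_of_gt hv
    have h1 := ((hkd v).div (hasDerivAt_id v) hv').neg
    have h2 := intervalIntegral.integral_hasDerivAt_right (hmc.intervalIntegrable 0 v)
      (hmc.stronglyMeasurableAtFilter _ _) hmc.continuousAt
    refine (h1.add h2).congr_deriv ?_
    simp only [id]
    field_simp
    ring
  have hk0 : k 0 = 0 := by simp [k]
  have hG0 : G 0 = 0 := by simp [G]
  have hcont : ContinuousWithinAt G (Ici 0) 0 := by
    have hs := (hkd 0)
    rw [zero_mul, hasDerivAt_iff_tendsto_slope] at hs
    have c1 : ContinuousAt (fun v => k v / v) 0 := by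
      rw [continuousAt_iff_punctured_nhds]
      simp only [div_zero]
      refine hs.congr ?_
      intro v
      simp [slope_def_field, hk0]
    have c2 : ContinuousAt (fun v => ∫ t in (0:ℝ)..v, m t) 0 :=
      (intervalIntegral.integral_hasDerivAt_right (hmc.intervalIntegrable 0 0)
        (hmc.stronglyMeasurableAtFilter _ _) hmc.continuousAt).continuousAt
    exact (c1.neg.add c2).continuousWithinAt
  have hpos : ∀ v ∈ Ioi (0:ℝ), 0 ≤ k v / v ^ 2 := by
    intro v hv
    have hv0 : 0 < v := hv
    refine div_nonneg (sub_nonneg.2 (Real.exp_le_exp.2 ?_)) (by positivity)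
    have : a ^ 2 ≤ b ^ 2 := by gcongr
    nlinarith [sq_nonneg v, mul_le_mul_of_nonneg_right this (sq_nonneg v)]
  have hlim : Tendsto G atTop (𝓝 (√π * (b - a))) := by
    have l1 : Tendsto (fun v => k v / v) atTop (𝓝 0) := by
      refine squeeze_zero_norm' (a := fun v : ℝ => 2 * v⁻¹) ?_ ?_
      · filter_upwards [eventually_gt_atTop 0] with v hv
        rw [norm_div, Real.norm_of_nonneg hv.le, div_eq_mul_inv]
        have e1 : ∀ c : ℝ, Real.exp (-(c ^ 2 * v ^ 2)) ≤ 1 := fun c => by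
          rw [Real.exp_le_one_iff]; nlinarith [sq_nonneg (c * v)]
        have : ‖k v‖ ≤ 2 := by
          rw [Real.norm_eq_abs, abs_le]
          have := e1 a
          have := e1 b
          have := Real.exp_pos (-(a ^ 2 * v ^ 2))
          have := Real.exp_pos (-(b ^ 2 * v ^ 2))
          constructor <;> simp only [k] <;> linarith
        gcongr
      · simpa using tendsto_inv_atTop_zero.const_mul (2:ℝ)
    have l2 := intervalIntegral_tendsto_integral_Ioi 0 hmi tendsto_id
    rw [hmv] at l2
    simpa using l1.neg.add l2
  refine ⟨integrableOn_Ioi_deriv_of_nonneg hcont hd hpos hlim, ?_⟩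
  rw [integral_Ioi_of_hasDerivAt_of_nonneg hcont hd hpos hlim, hG0, sub_zero]

end HP

namespace HP
open scoped Real
open MeasureTheory Set Filter Topology

lemma cpow_deriv (s : ℂ) {y : ℝ} (hy : 0 < y) :
    HasDerivAt (fun y : ℝ => (y : ℂ) ^ s) (s * (y : ℂ) ^ (s - 1)) y := by
  have h := (HasDerivAt.cpow_const (c := s) (hasDerivAt_id (y : ℂ))
    (by left; simpa using hy)).comp_ofReal
  simpa using h

lemma cpow_sub_bound {s : ℂ} (hs : -1 ≤ s.re) {N y : ℝ} (hN : 0 < N) (hy : y ∈ Icc N (N+1)) :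
    ‖(y : ℂ) ^ (-s) - (N : ℂ) ^ (-s)‖ ≤ ‖s‖ * N ^ (-s.re - 1) := by
  have h := norm_image_sub_le_of_norm_deriv_le_segment' (f := fun y : ℝ => (y : ℂ) ^ (-s))
    (f' := fun y => (-s) * (y : ℂ) ^ (-s - 1)) (a := N) (b := N+1) (C := ‖s‖ * N ^ (-s.re - 1))
    (fun u hu => (cpow_deriv (-s) (lt_of_lt_of_le hN hu.1)).hasDerivWithinAt)
    (fun u hu => by
      rw [norm_mul, norm_neg, Complex.norm_cpow_eq_rpow_re_of_pos (lt_of_lt_of_le hN hu.1)]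
      gcongr ?_ * ?_
      simp only [Complex.sub_re, Complex.neg_re, Complex.one_re]
      exact Real.rpow_le_rpow_of_nonpos hN hu.1 (by linarith)) y hy
  refine h.trans ?_
  have : y - N ≤ 1 := by linarith [hy.2]
  have h0 : 0 ≤ ‖s‖ * N ^ (-s.re - 1) := by positivity
  nlinarith

/-- the terms -/
noncomputable def zt (n : ℕ) (s : ℂ) : ℂ :=
  (s - 1) * (((n : ℝ) + 1 : ℝ) : ℂ) ^ (-s) + (((n : ℝ) + 2 : ℝ) : ℂ) ^ (1 - s)
    - (((n : ℝ) + 1 : ℝ) : ℂ) ^ (1 - s)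

lemma zt_bound (n : ℕ) {s : ℂ} (hs : -1 ≤ s.re) :
    ‖zt n s‖ ≤ ‖1 - s‖ * ‖s‖ * ((n : ℝ) + 1) ^ (-s.re - 1) := by
  set N : ℝ := (n : ℝ) + 1 with hNdef
  have hN : 0 < N := by positivity
  have h := norm_image_sub_le_of_norm_deriv_le_segment'
    (f := fun y : ℝ => (y : ℂ) ^ (1 - s) + ((s - 1) * (N : ℂ) ^ (-s)) * (y : ℂ))
    (f' := fun y => (1 - s) * (y : ℂ) ^ (1 - s - 1) + ((s - 1) * (N : ℂ) ^ (-s)) * 1)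
    (a := N) (b := N+1) (C := ‖1 - s‖ * (‖s‖ * N ^ (-s.re - 1)))
    (fun u hu => ((cpow_deriv (1-s) (lt_of_lt_of_le hN hu.1)).add
      ((Complex.ofRealCLM.hasDerivAt).const_mul _)).hasDerivWithinAt)
    (fun u hu => by
      have : (1 - s) * (u : ℂ) ^ (1 - s - 1) + ((s - 1) * (N : ℂ) ^ (-s)) * 1
        = (1 - s) * ((u : ℂ) ^ (-s) - (N : ℂ) ^ (-s)) := by
        rw [show 1 - s - 1 = -s by ring]; ring
      rw [this, norm_mul]
      gcongr
      exact cpow_sub_bound hs hN ⟨hu.1, hu.2.le⟩) (N+1) ⟨by linarith, le_rfl⟩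
  have e : zt n s = ((N + 1 : ℝ) : ℂ) ^ (1 - s) + ((s - 1) * (N : ℂ) ^ (-s)) * ((N + 1 : ℝ) : ℂ)
      - ((N : ℂ) ^ (1 - s) + ((s - 1) * (N : ℂ) ^ (-s)) * (N : ℂ)) := by
    unfold zt
    rw [show (n : ℝ) + 2 = N + 1 by rw [hNdef]; ring, ← hNdef]
    push_cast; ring
  rw [e]
  refine h.trans (le_of_eq ?_)
  ring

lemma ball_re {s : ℂ} (hs : s ∈ Metric.ball (2:ℂ) (7/4)) :
    1/4 ≤ s.re ∧ ‖s‖ ≤ 4 ∧ ‖1 - s‖ ≤ 3 := by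
  rw [mem_ball_iff_norm] at hs
  refine ⟨?_, ?_, ?_⟩
  · have := Complex.abs_re_le_norm (s - 2)
    rw [abs_le] at this
    simp at this
    linarith
  · have := norm_add_le (s - 2) 2
    simp at this; linarith
  · have := norm_add_le (2 - s) (-1)
    rw [show (2 - s) + (-1) = 1 - s by ring, norm_sub_rev 2 s, norm_neg, norm_one] at this
    linarith

lemma zt_bound' (n : ℕ) {s : ℂ} (hs : s ∈ Metric.ball (2:ℂ) (7/4)) :
    ‖zt n s‖ ≤ 12 * ((n : ℝ) + 1) ^ (-(5/4) : ℝ) := by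
  obtain ⟨h1, h2, h3⟩ := ball_re hs
  refine (zt_bound n (by linarith)).trans ?_
  have : ‖1 - s‖ * ‖s‖ ≤ 12 := by nlinarith [norm_nonneg s, norm_nonneg (1-s)]
  gcongr
  · linarith [n.cast_nonneg (α := ℝ)]
  · linarith

lemma zt_summable_bound : Summable (fun n : ℕ => 12 * ((n : ℝ) + 1) ^ (-(5/4) : ℝ)) := by
  apply Summable.mul_left
  have := (summable_nat_add_iff 1).2 (Real.summable_nat_rpow (p := -(5/4)) |>.2 (by norm_num))
  simpa using this

lemma zt_tsum_of_one_lt {s : ℂ} (hs : 1 < s.re) (hs' : s ∈ Metric.ball (2:ℂ) (7/4)) :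
    ∑' n, zt n s = (s - 1) * riemannZeta s - 1 := by
  have hsum : Summable (fun n : ℕ => 1 / (((n : ℕ) : ℂ) + 1) ^ s) := by
    have := (summable_nat_add_iff 1).2 (Complex.summable_one_div_nat_cpow.2 hs)
    simpa using this
  have hz : HasSum (fun n : ℕ => (s - 1) * (1 / (((n : ℕ) : ℂ) + 1) ^ s))
      ((s - 1) * riemannZeta s) := by
    rw [zeta_eq_tsum_one_div_nat_add_one_cpow hs]
    exact hsum.hasSum.mul_left _
  have ht : Tendsto (fun n : ℕ => (((n : ℝ) + 1 : ℝ) : ℂ) ^ (1 - s)) atTop (𝓝 0) := by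
    rw [tendsto_zero_iff_norm_tendsto_zero]
    have : (fun n : ℕ => ‖(((n : ℝ) + 1 : ℝ) : ℂ) ^ (1 - s)‖)
        = fun n : ℕ => ((n : ℝ) + 1) ^ (-(s.re - 1)) := by
      ext n
      rw [Complex.norm_cpow_eq_rpow_re_of_pos (by positivity)]
      simp
    rw [this]
    exact (tendsto_rpow_neg_atTop (by linarith)).comp
      (tendsto_atTop_add_const_right _ _ tendsto_natCast_atTop_atTop)
  have hs1 : Summable (fun n => zt n s) :=
    Summable.of_norm_bounded zt_summable_bound (fun n => zt_bound' n hs')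
  have hd : HasSum (fun n : ℕ => (((n : ℝ) + 2 : ℝ) : ℂ) ^ (1 - s)
      - (((n : ℝ) + 1 : ℝ) : ℂ) ^ (1 - s)) (∑' n, zt n s - (s - 1) * riemannZeta s) := by
    have := hs1.hasSum.sub hz
    rw [show (fun n : ℕ => (((n : ℝ) + 2 : ℝ) : ℂ) ^ (1 - s) - (((n : ℝ) + 1 : ℝ) : ℂ) ^ (1 - s))
      = fun n : ℕ => zt n s - (s - 1) * (1 / (((n : ℕ) : ℂ) + 1) ^ s) from funext fun n => ?_]
    · exact this
    unfold zt
    rw [Complex.cpow_neg, one_div]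
    push_cast
    ring
  have ht2 : Tendsto (fun k : ℕ => ∑ n ∈ Finset.range k, ((((n : ℝ) + 2 : ℝ) : ℂ) ^ (1 - s)
      - (((n : ℝ) + 1 : ℝ) : ℂ) ^ (1 - s))) atTop (𝓝 (0 - 1)) := by
    have : ∀ k : ℕ, ∑ n ∈ Finset.range k, ((((n : ℝ) + 2 : ℝ) : ℂ) ^ (1 - s)
      - (((n : ℝ) + 1 : ℝ) : ℂ) ^ (1 - s)) = (((k : ℝ) + 1 : ℝ) : ℂ) ^ (1 - s) - 1 := by
      intro k
      have := Finset.sum_range_sub (fun n : ℕ => (((n : ℝ) + 1 : ℝ) : ℂ) ^ (1 - s)) k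
      rw [show (((0:ℕ) : ℝ) + 1 : ℝ) = 1 by simp, Complex.ofReal_one, Complex.one_cpow] at this
      rw [← this]
      refine Finset.sum_congr rfl fun n _ => ?_
      rw [show ((n + 1 : ℕ) : ℝ) + 1 = (n : ℝ) + 2 by push_cast; ring]
    simp_rw [this]
    exact ht.sub_const 1
  have := tendsto_nhds_unique hd.tendsto_sum_nat ht2
  linear_combination this

lemma zt_tsum_half : ∑' n, zt n (1/2) = -(1/2) * riemannZeta (1/2) - 1 := by
  have hU : IsPreconnected (Metric.ball (2:ℂ) (7/4)) := (convex_ball _ _).isPreconnected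
  have hf : DifferentiableOn ℂ (fun s => ∑' n, zt n s) (Metric.ball (2:ℂ) (7/4)) := by
    refine Complex.differentiableOn_tsum_of_summable_norm zt_summable_bound ?_ Metric.isOpen_ball
      (fun n s hs => zt_bound' n hs)
    intro n
    have h1 : (((n : ℝ) + 1 : ℝ) : ℂ) ≠ 0 := by exact_mod_cast (by positivity : (n : ℝ) + 1 ≠ 0)
    have h2 : (((n : ℝ) + 2 : ℝ) : ℂ) ≠ 0 := by exact_mod_cast (by positivity : (n : ℝ) + 2 ≠ 0)
    have : Differentiable ℂ (zt n) := by
      unfold zt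
      refine ((Differentiable.mul (by fun_prop) ?_).add ?_).sub ?_
      · exact (differentiable_id.neg).const_cpow (Or.inl h1)
      · exact ((differentiable_const _).sub differentiable_id).const_cpow (Or.inl h2)
      · exact ((differentiable_const _).sub differentiable_id).const_cpow (Or.inl h1)
    exact this.differentiableOn
  have hg : Differentiable ℂ (fun s => riemannZeta₁ s - 1) :=
    differentiable_riemannZeta₁.sub_const _
  have key := AnalyticOnNhd.eqOn_of_preconnected_of_eventuallyEq
    (hf.analyticOnNhd Metric.isOpen_ball) (hg.differentiableOn.analyticOnNhd Metric.isOpen_ball)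
    hU (z₀ := 2) (by simp) (by
      have h1 : ∀ᶠ s : ℂ in 𝓝 2, 1 < s.re :=
        (Complex.continuous_re.tendsto 2).eventually (lt_mem_nhds (by simp))
      filter_upwards [h1, Metric.ball_mem_nhds (2:ℂ) (by norm_num : (0:ℝ) < 7/4)] with s hs hs'
      have hne : s ≠ 1 := by rintro rfl; simp at hs
      have hne' : s - 1 ≠ 0 := sub_ne_zero.2 hne
      rw [zt_tsum_of_one_lt hs hs', riemannZeta_eq_inv_sub_mul hne]
      field_simp)
  have h := key (x := 1/2) (by
    rw [mem_ball_iff_norm, show (1/2 - 2 : ℂ) = ((-(3/2) : ℝ) : ℂ) by push_cast; ring,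
      Complex.norm_real]
    norm_num [abs_of_neg])
  simp only at h
  rw [h, riemannZeta_eq_inv_sub_mul (by norm_num)]
  norm_num
  ring

lemma zeta_half_series : ∃ Z : ℝ, riemannZeta (1/2) = (Z : ℂ) ∧
    HasSum (fun n : ℕ => 2 * (√((n:ℝ) + 1) - √(n:ℝ)) - 1 / √((n:ℝ) + 1)) (-Z) := by
  let r : ℕ → ℝ := fun n => √((n:ℝ) + 2) - √((n:ℝ) + 1) - 1/2 * (1 / √((n:ℝ) + 1))
  have hr : ∀ n, zt n (1/2) = (r n : ℂ) := by
    intro n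
    have e : ∀ y : ℝ, 0 < y → ((y : ℂ) ^ (1/2 : ℂ) = (√y : ℝ)) := by
      intro y hy
      rw [Real.sqrt_eq_rpow, Complex.ofReal_cpow hy.le]
      norm_num
    unfold zt
    rw [show (1 - 1/2 : ℂ) = 1/2 by norm_num, e _ (by positivity), e _ (by positivity),
      Complex.cpow_neg, e _ (by positivity)]
    simp only [r]
    push_cast
    ring
  have hsum : Summable (fun n => zt n (1/2)) :=
    Summable.of_norm_bounded zt_summable_bound (fun n => zt_bound' n (by
      rw [mem_ball_iff_norm, show (1/2 - 2 : ℂ) = ((-(3/2) : ℝ) : ℂ) by push_cast; ring,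
        Complex.norm_real]
      norm_num [abs_of_neg]))
  have hsr : Summable r := by
    have := hsum
    simp_rw [hr] at this
    exact_mod_cast this
  have hA := zt_tsum_half
  simp_rw [hr] at hA
  rw [← Complex.ofReal_tsum] at hA
  refine ⟨-2 * (∑' n, r n) - 2, ?_, ?_⟩
  · push_cast at hA ⊢
    linear_combination 2 * hA
  · let q : ℕ → ℝ := fun n => 2 * (√((n:ℝ) + 1) - √(n:ℝ)) - 1 / √((n:ℝ) + 1)
    let δ : ℕ → ℝ := fun n => √((n:ℝ) + 1) - √(n:ℝ)
    have hδ : Tendsto δ atTop (𝓝 0) := by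
      have h1 : Tendsto (fun n : ℕ => 1 / √((n:ℝ) + 1)) atTop (𝓝 0) := by
        have : Tendsto (fun n : ℕ => √((n:ℝ) + 1)) atTop atTop :=
          Real.tendsto_sqrt_atTop.comp
            (tendsto_atTop_add_const_right _ _ tendsto_natCast_atTop_atTop)
        simpa only [one_div] using! this.inv_tendsto_atTop
      refine squeeze_zero (fun n => sub_nonneg.2 (Real.sqrt_le_sqrt (by linarith))) ?_ h1
      intro n
      have a1 := Real.sq_sqrt (by positivity : (0:ℝ) ≤ (n:ℝ) + 1)
      have a2 := Real.sq_sqrt (by positivity : (0:ℝ) ≤ (n:ℝ))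
      have a3 : 0 < √((n:ℝ) + 1) := by positivity
      have a4 := Real.sqrt_nonneg (n:ℝ)
      have a5 : √(n:ℝ) ≤ √((n:ℝ) + 1) := Real.sqrt_le_sqrt (by linarith)
      simp only [δ]
      rw [le_div_iff₀ a3]
      nlinarith
    have hq0 : ∀ n, 0 ≤ q n := by
      intro n
      have a1 := Real.sq_sqrt (by positivity : (0:ℝ) ≤ (n:ℝ) + 1)
      have a2 := Real.sq_sqrt (by positivity : (0:ℝ) ≤ (n:ℝ))
      have a3 : 0 < √((n:ℝ) + 1) := by positivity
      have a4 := Real.sqrt_nonneg (n:ℝ)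
      simp only [q]
      rw [sub_nonneg, div_le_iff₀ a3]
      nlinarith [sq_nonneg (√((n:ℝ) + 1) - √(n:ℝ))]
    rw [hasSum_iff_tendsto_nat_of_nonneg hq0]
    have hqs : ∀ k : ℕ, ∑ n ∈ Finset.range k, q n
        = 2 * (∑ n ∈ Finset.range k, r n) - 2 * (δ k - 1) := by
      intro k
      have := Finset.sum_range_sub δ k
      rw [show δ 0 = 1 by simp [δ]] at this
      rw [← this, Finset.mul_sum, Finset.mul_sum, ← Finset.sum_sub_distrib]
      refine Finset.sum_congr rfl fun n _ => ?_
      simp only [q, r, δ]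
      push_cast
      rw [show (n : ℝ) + 1 + 1 = n + 2 by ring]
      ring
    change Tendsto (fun k : ℕ => ∑ n ∈ Finset.range k, q n) atTop _
    simp_rw [hqs]
    have := (hsr.hasSum.tendsto_sum_nat.const_mul 2).sub ((hδ.sub_const 1).const_mul 2)
    convert this using 2
    ring

end HP

namespace HP
open scoped Real
open MeasureTheory Set Filter Topology

lemma hasSum_of_eq {ι α : Type*} [AddCommMonoid α] [TopologicalSpace α] {f g : ι → α} {a b : α}
    (h : HasSum g a) (hfg : ∀ n, f n = g n) (hab : b = a) : HasSum f b := by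
  rw [funext hfg, hab]; exact h

/-- Bose function -/
noncomputable def bose (v : ℝ) : ℝ := 1 / (Real.exp (2 * π * v) - 1)

/-- regularized Bose function -/
noncomputable def breg (v : ℝ) : ℝ := bose v - 1 / (2 * π * v) + 1 / 2

lemma bose_hasSum {v : ℝ} (hv : 0 < v) :
    HasSum (fun d : ℕ => Real.exp (-(2 * π * ((d:ℝ) + 1) * v))) (bose v) := by
  set r := Real.exp (-(2 * π * v)) with hr
  have hr1 : r < 1 := by
    rw [hr, Real.exp_lt_one_iff]
    have : 0 < 2 * π * v := by positivity
    linarith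
  have hr0 : 0 < r := Real.exp_pos _
  have h := (hasSum_geometric_of_lt_one hr0.le hr1).mul_left r
  have e : bose v = r * (1 - r)⁻¹ := by
    unfold bose
    have : Real.exp (2 * π * v) = r⁻¹ := by rw [hr, Real.exp_neg, inv_inv]
    rw [this]
    have : 1 - r ≠ 0 := by linarith
    field_simp
  refine hasSum_of_eq h (fun d => ?_) e
  rw [← pow_succ', hr, ← Real.exp_nat_mul]
  congr 1
  push_cast
  ring

lemma breg_hasSum {v : ℝ} (hv : 0 < v) :
    HasSum (fun k : ℕ => v / π * (1 / (v ^ 2 + ((k:ℝ) + 1) ^ 2))) (breg v) := by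
  have hx : (Complex.I * v : ℂ) ∈ Complex.integerComplement := by
    rintro ⟨m, hm⟩
    have := congrArg Complex.im hm
    simp at this
    exact hv.ne this
  have h1 := cot_series_rep' hx
  have hterm : ∀ n : ℕ, (1 / ((Complex.I * v : ℂ) - (n + 1)) + 1 / ((Complex.I * v : ℂ) + (n + 1)))
      = ((-2 * π * (v / π * (1 / (v ^ 2 + ((n:ℝ) + 1) ^ 2))) : ℝ) : ℂ) * Complex.I := by
    intro n
    have p0 : (v ^ 2 + ((n:ℝ) + 1) ^ 2) ≠ 0 := by positivity
    have p1 : ((v:ℂ) ^ 2 + ((n:ℂ) + 1) ^ 2) ≠ 0 := by exact_mod_cast p0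
    have e1 : ((Complex.I * v : ℂ) - (n + 1)) * ((Complex.I * v : ℂ) + (n + 1))
        = -((v:ℂ) ^ 2 + ((n:ℂ) + 1) ^ 2) := by
      linear_combination (v:ℂ)^2 * Complex.I_sq
    have p2 : ((Complex.I * v : ℂ) - (n + 1)) ≠ 0 := by
      intro h; rw [h, zero_mul] at e1; exact p1 (neg_eq_zero.1 e1.symm)
    have p3 : ((Complex.I * v : ℂ) + (n + 1)) ≠ 0 := by
      intro h; rw [h, mul_zero] at e1; exact p1 (neg_eq_zero.1 e1.symm)
    rw [div_add_div _ _ p2 p3, e1]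
    have hπ : (π : ℂ) ≠ 0 := by exact_mod_cast Real.pi_ne_zero
    push_cast
    field_simp
    ring
  have hsum : Summable (fun k : ℕ => v / π * (1 / (v ^ 2 + ((k:ℝ) + 1) ^ 2))) := by
    apply Summable.mul_left
    have := (summable_nat_add_iff 1).2 (Real.summable_one_div_nat_pow.2 (by norm_num : 1 < 2))
    refine Summable.of_nonneg_of_le (fun k => by positivity) (fun k => ?_) this
    push_cast
    apply one_div_le_one_div_of_le (by positivity)
    nlinarith
  simp_rw [hterm] at h1
  rw [tsum_mul_right, ← Complex.ofReal_tsum, tsum_mul_left] at h1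
  have hb : ∑' k : ℕ, v / π * (1 / (v ^ 2 + ((k:ℝ) + 1) ^ 2)) = breg v := by
    rw [Complex.cot_pi_eq_exp_ratio] at h1
    have eE : (2 * π * Complex.I * (Complex.I * v) : ℂ) = ((-(2 * π * v) : ℝ) : ℂ) := by
      push_cast; linear_combination 2 * π * v * Complex.I_sq
    rw [eE, ← Complex.ofReal_exp] at h1
    set r := Real.exp (-(2 * π * v)) with hr
    have hr1 : r < 1 := by
      rw [hr, Real.exp_lt_one_iff]
      have : 0 < 2 * π * v := by positivity
      linarith
    have hr0 : 0 < r := Real.exp_pos _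
    have e2 : (π * (((r : ℂ) + 1) / (Complex.I * (1 - (r : ℂ)))) - 1 / (Complex.I * v))
        = ((-(π * ((r + 1) / (1 - r)) - 1 / v) : ℝ) : ℂ) * Complex.I := by
      have hne : (1 - (r : ℂ)) ≠ 0 := by
        have : 1 - r ≠ 0 := by linarith
        exact_mod_cast this
      have hvne : (v : ℂ) ≠ 0 := by exact_mod_cast hv.ne'
      push_cast
      field_simp
      rw [Complex.I_sq]
      ring
    rw [e2] at h1
    have h2 := mul_right_cancel₀ Complex.I_ne_zero h1
    have h3 : (-(π * ((r + 1) / (1 - r)) - 1 / v) : ℝ)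
      = -2 * π * ∑' k : ℕ, v / π * (1 / (v ^ 2 + ((k:ℝ) + 1) ^ 2)) := by exact_mod_cast h2
    have e : bose v = r * (1 - r)⁻¹ := by
      unfold bose
      have : Real.exp (2 * π * v) = r⁻¹ := by rw [hr, Real.exp_neg, inv_inv]
      rw [this]
      have : 1 - r ≠ 0 := by linarith
      field_simp
    have h4 : ∑' k : ℕ, v / π * (1 / (v ^ 2 + ((k:ℝ) + 1) ^ 2)) =
      (π * ((r + 1) / (1 - r)) - 1 / v) / (2 * π) := by
      rw [eq_div_iff (by positivity)]; linarith
    rw [h4, breg, e]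
    have : 1 - r ≠ 0 := by linarith
    have := Real.pi_ne_zero
    field_simp
    ring
  rw [← hb]
  exact hsum.hasSum

lemma breg_nonneg {v : ℝ} (hv : 0 < v) : 0 ≤ breg v :=
  (breg_hasSum hv).nonneg fun k => by positivity

lemma bose_pos {v : ℝ} (hv : 0 < v) : 0 < bose v := by
  unfold bose
  have : 1 < Real.exp (2 * π * v) := by rw [Real.one_lt_exp_iff]; positivity
  apply one_div_pos.2; linarith

end HP

namespace HP
open scoped Real
open MeasureTheory Set Filter Topology

/-- square root of successor -/
noncomputable def sq (n : ℕ) : ℝ := √((n:ℝ) + 1)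

lemma sq_pos (n : ℕ) : 0 < sq n := by unfold sq; positivity
lemma sq_sq (n : ℕ) : sq n ^ 2 = (n:ℝ) + 1 := Real.sq_sqrt (by positivity)
lemma sq_ge (n : ℕ) : 1 ≤ sq n := by
  unfold sq; rw [Real.one_le_sqrt]; linarith [n.cast_nonneg (α := ℝ)]

lemma summable_sq3 : Summable (fun n : ℕ => 1 / sq n ^ 3) := by
  have := (summable_nat_add_iff 1).2 (Real.summable_nat_rpow (p := -(3/2)) |>.2 (by norm_num))
  refine this.congr fun n => ?_
  unfold sq
  push_cast
  have h : (0:ℝ) < (n:ℝ) + 1 := by positivity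
  rw [Real.rpow_neg h.le, Real.sqrt_eq_rpow, ← Real.rpow_natCast, ← Real.rpow_mul h.le, one_div]
  norm_num

/-- ζ(3/2) -/
noncomputable def z3 : ℝ := ∑' n : ℕ, 1 / sq n ^ 3

lemma z3_hasSum : HasSum (fun n : ℕ => 1 / sq n ^ 3) z3 := summable_sq3.hasSum

lemma summable_sq33 : Summable (fun p : ℕ × ℕ => 1 / (sq p.1 * sq p.2) ^ 3) := by
  have := summable_sq3.mul_of_nonneg summable_sq3 (fun n => by have := sq_pos n; positivity)
    (fun n => by have := sq_pos n; positivity)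
  refine this.congr fun p => ?_
  rw [mul_pow]; field_simp

lemma exp_cube_bound {t y : ℝ} (ht : 0 < t) (hy : 0 < y) :
    Real.exp (-(t * y)) ≤ 6 / t ^ 3 * (1 / y ^ 3) := by
  have h := Real.pow_div_factorial_le_exp (t * y) (by positivity) 3
  rw [Real.exp_neg, inv_eq_one_div, div_le_iff₀ (Real.exp_pos _)]
  have e : (1:ℝ) = 6 / t ^ 3 * (1 / y ^ 3) * ((t * y) ^ 3 / (Nat.factorial 3)) := by
    rw [show (Nat.factorial 3 : ℝ) = 6 by norm_num [Nat.factorial]]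
    field_simp
  have h0 : (0:ℝ) ≤ 6 / t ^ 3 * (1 / y ^ 3) := by positivity
  nlinarith

lemma summable_F {t : ℝ} (ht : 0 < t) :
    Summable (fun p : ℕ × ℕ => 1 / sq p.1 * Real.exp (-(t * (sq p.1 * sq p.2)))) := by
  refine Summable.of_nonneg_of_le (fun p => ?_) (fun p => ?_) (summable_sq33.mul_left (6 / t ^ 3))
  · have := sq_pos p.1; positivity
  · have h1 := sq_ge p.1
    have h2 := sq_pos p.2
    have h := exp_cube_bound ht (by positivity : 0 < sq p.1 * sq p.2)
    refine le_trans ?_ h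
    have h3 : 1 / sq p.1 ≤ 1 := by rw [div_le_one (by linarith)]; exact h1
    have := Real.exp_pos (-(t * (sq p.1 * sq p.2)))
    nlinarith

lemma summable_G {w : ℝ} (hw : 0 < w) :
    Summable (fun p : ℕ × ℕ => 1 / sq p.1 /
      ((w + sq p.1 * sq p.2) * (w ^ 2 + (sq p.1 * sq p.2) ^ 2))) := by
  refine Summable.of_nonneg_of_le (fun p => ?_) (fun p => ?_) summable_sq33
  · have := sq_pos p.1; have := sq_pos p.2; positivity
  · have h1 := sq_ge p.1
    have h1' := sq_pos p.1
    have h2 := sq_pos p.2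
    have h3 : 1 / sq p.1 ≤ 1 := by rw [div_le_one (by linarith)]; exact h1
    apply div_le_div₀ zero_le_one h3 (by positivity)
    rw [pow_succ']
    gcongr <;> nlinarith [sq_nonneg w]

variable {σ : ℝ}

lemma I1 (hσ : 0 < σ) : IntegrableOn (fun v => v ^ 2 * bose (σ ^ 2 * v ^ 2)) (Ioi 0) ∧
    ∫ v in Ioi (0:ℝ), v ^ 2 * bose (σ ^ 2 * v ^ 2) = √π / (4 * (√2 * √π * σ) ^ 3) * z3 := by
  have hc : 0 < √2 * √π * σ := by positivity
  have hc2 : (√2 * √π * σ) ^ 2 = 2 * π * σ ^ 2 := by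
    rw [mul_pow, mul_pow, Real.sq_sqrt (by norm_num), Real.sq_sqrt Real.pi_pos.le]
  set c := √2 * √π * σ with hcd
  clear_value c
  refine tonelli (fun (d : ℕ) v => v ^ 2 * Real.exp (-((c * sq d) ^ 2 * v ^ 2))) _
    (fun d => √π / (4 * c ^ 3) * (1 / sq d ^ 3)) _ (fun d u hu => by positivity)
    (fun d => (gauss_second (mul_pos hc (sq_pos d))).1) (fun d => ?_) (fun u hu => ?_)
    (z3_hasSum.mul_left _)
  · rw [(gauss_second (mul_pos hc (sq_pos d))).2]
    have := sq_pos d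
    field_simp
  · have hu' : 0 < u := hu
    refine hasSum_of_eq ((bose_hasSum (v := σ ^ 2 * u ^ 2) (by positivity)).mul_left (u ^ 2))
      (fun d => ?_) rfl
    rw [mul_pow, hc2, sq_sq]
    ring_nf

lemma I2 (hσ : 0 < σ) {Z : ℝ}
    (hZ : HasSum (fun n : ℕ => 2 * (√((n:ℝ) + 1) - √(n:ℝ)) - 1 / √((n:ℝ) + 1)) (-Z)) :
    IntegrableOn (fun v => 1 / (2 * π * σ ^ 2 * v ^ 2) - bose (σ ^ 2 * v ^ 2)) (Ioi 0) ∧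
    ∫ v in Ioi (0:ℝ), (1 / (2 * π * σ ^ 2 * v ^ 2) - bose (σ ^ 2 * v ^ 2))
      = √π / (2 * (√2 * √π * σ)) * (-Z) := by
  have hc : 0 < √2 * √π * σ := by positivity
  have hc2 : (√2 * √π * σ) ^ 2 = 2 * π * σ ^ 2 := by
    rw [mul_pow, mul_pow, Real.sq_sqrt (by norm_num), Real.sq_sqrt Real.pi_pos.le]
  set c := √2 * √π * σ with hcd
  clear_value c
  have hab : ∀ d : ℕ, c * √(d:ℝ) < c * sq d := fun d => by
    unfold sq
    exact mul_lt_mul_of_pos_left (Real.sqrt_lt_sqrt (by positivity) (by linarith)) hc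
  have ha0 : ∀ d : ℕ, 0 ≤ c * √(d:ℝ) := fun d => by positivity
  have hg : ∀ d : ℕ, IntegrableOn (fun v : ℝ => Real.exp (-(c * sq d) ^ 2 * v ^ 2)) (Ioi 0) := by
    intro d
    have := sq_pos d
    exact (integrable_exp_neg_mul_sq (b := (c * sq d) ^ 2) (by positivity)).integrableOn
  refine tonelli (fun (d : ℕ) v => 1 / c ^ 2 *
      ((Real.exp (-((c * √(d:ℝ)) ^ 2 * v ^ 2)) - Real.exp (-((c * sq d) ^ 2 * v ^ 2))) / v ^ 2)
      - Real.exp (-(c * sq d) ^ 2 * v ^ 2)) _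
    (fun d => √π / (2 * c) * (2 * (√((d:ℝ) + 1) - √(d:ℝ)) - 1 / √((d:ℝ) + 1))) _
    (fun d u hu => ?_) (fun d => ?_) (fun d => ?_) (fun u hu => ?_)
    (hZ.mul_left _)
  · have hu' : 0 < u := hu
    have e1 : Real.exp (-((c * √(d:ℝ)) ^ 2 * u ^ 2))
        = Real.exp (-((c * sq d) ^ 2 * u ^ 2)) * Real.exp (c ^ 2 * u ^ 2) := by
      rw [← Real.exp_add, mul_pow, mul_pow, sq_sq, Real.sq_sqrt (by positivity)]
      ring_nf
    rw [e1, neg_mul]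
    have h1 := Real.add_one_le_exp (c ^ 2 * u ^ 2)
    have h2 := Real.exp_pos (-((c * sq d) ^ 2 * u ^ 2))
    rw [sub_nonneg, div_mul_div_comm, one_mul, le_div_iff₀ (by positivity)]
    nlinarith
  · exact ((gauss_diff (ha0 d) (hab d)).1.const_mul _).sub (hg d)
  · rw [integral_sub ((gauss_diff (ha0 d) (hab d)).1.const_mul _) (hg d), integral_const_mul,
      (gauss_diff (ha0 d) (hab d)).2, integral_gaussian_Ioi]
    have hs := sq_pos d
    have : √(π / (c * sq d) ^ 2) = √π / (c * sq d) := by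
      rw [Real.sqrt_div Real.pi_pos.le, Real.sqrt_sq (by positivity)]
    rw [this, ← sq]
    field_simp
  · have hu' : 0 < u := hu
    have hb := bose_hasSum (v := σ ^ 2 * u ^ 2) (by positivity)
    set r := Real.exp (-(c ^ 2 * u ^ 2)) with hr
    have hr1 : r < 1 := by
      rw [hr, Real.exp_lt_one_iff]
      have : 0 < c ^ 2 * u ^ 2 := by positivity
      linarith
    have hr0 : 0 < r := Real.exp_pos _
    have h := ((hasSum_geometric_of_lt_one hr0.le hr1).mul_left
      ((1 - r) / (c ^ 2 * u ^ 2))).sub hb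
    refine hasSum_of_eq h (fun d => ?_) ?_
    · have e1 : Real.exp (-((c * √(d:ℝ)) ^ 2 * u ^ 2)) = r ^ d := by
        rw [hr, ← Real.exp_nat_mul, mul_pow, Real.sq_sqrt (by positivity)]
        ring_nf
      have e2 : Real.exp (-((c * sq d) ^ 2 * u ^ 2)) = r ^ (d + 1) := by
        rw [hr, ← Real.exp_nat_mul, mul_pow, sq_sq]
        push_cast
        ring_nf
      have e3 : Real.exp (-(2 * π * ((d:ℝ) + 1) * (σ ^ 2 * u ^ 2))) = r ^ (d + 1) := by
        rw [hr, ← Real.exp_nat_mul, hc2]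
        push_cast
        ring_nf
      rw [neg_mul, e1, e2, e3]
      field_simp
      ring
    · rw [hc2]
      have : 1 - r ≠ 0 := by linarith
      field_simp

lemma I2' (hσ : 0 < σ) {Z : ℝ}
    (hZ : HasSum (fun n : ℕ => 2 * (√((n:ℝ) + 1) - √(n:ℝ)) - 1 / √((n:ℝ) + 1)) (-Z)) :
    IntegrableOn (fun v => 1 / v ^ 2 * (1 / (2 * π * σ ^ 2) * v ^ 2 - bose (σ ^ 2 / v ^ 2))) (Ioi 0) ∧
    ∫ v in Ioi (0:ℝ), 1 / v ^ 2 * (1 / (2 * π * σ ^ 2) * v ^ 2 - bose (σ ^ 2 / v ^ 2))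
      = √π / (2 * (√2 * √π * σ)) * (-Z) := by
  have h := I2 hσ hZ
  rw [integrable_inversion one_pos, integral_inversion one_pos] at h
  have e : (fun v : ℝ => 1 / v ^ 2 * (1 / (2 * π * σ ^ 2 * (1 / v) ^ 2) - bose (σ ^ 2 * (1 / v) ^ 2)))
     = (fun v => 1 / v ^ 2 * (1 / (2 * π * σ ^ 2) * v ^ 2 - bose (σ ^ 2 / v ^ 2))) := by
    ext v
    congr 2
    · by_cases hv : v = 0
      · simp [hv]
      · field_simp
    · ring_nf
  rw [e] at h
  exact h

lemma I3 (hσ : 0 < σ) : IntegrableOn (fun v => breg (σ ^ 2 / v ^ 2)) (Ioi 0) ∧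
    ∫ v in Ioi (0:ℝ), breg (σ ^ 2 / v ^ 2) = σ / (2 * √2) * z3 := by
  have h : IntegrableOn (fun v => 1 / v ^ 2 * breg (σ ^ 2 * v ^ 2)) (Ioi 0) ∧
    ∫ v in Ioi (0:ℝ), 1 / v ^ 2 * breg (σ ^ 2 * v ^ 2) = σ / (2 * √2) * z3 := by
    refine tonelli (fun (k : ℕ) v => σ ^ 2 / π * (1 / (σ ^ 4 * v ^ 4 + sq k ^ 4))) _
      (fun k => σ / (2 * √2) * (1 / sq k ^ 3)) _ (fun d u hu => by positivity)
      (fun k => (kint hσ (sq_pos k)).1.const_mul _) (fun k => ?_) (fun u hu => ?_)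
      (z3_hasSum.mul_left _)
    · rw [integral_const_mul, (kint hσ (sq_pos k)).2]
      have := sq_pos k
      have := Real.pi_pos
      field_simp
    · have hu' : 0 < u := hu
      refine hasSum_of_eq ((breg_hasSum (v := σ ^ 2 * u ^ 2) (by positivity)).mul_left (1 / u ^ 2))
        (fun d => ?_) rfl
      rw [← sq_sq]
      have := sq_pos d
      field_simp
  rw [integrable_inversion one_pos, integral_inversion one_pos]
  have e : (fun v : ℝ => 1 / v ^ 2 * breg (σ ^ 2 / (1 / v) ^ 2))
     = (fun v : ℝ => 1 / v ^ 2 * breg (σ ^ 2 * v ^ 2)) := by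
    ext v
    congr 2
    field_simp
  rw [e]
  exact h

lemma I4 (hσ : 0 < σ) (hσ1 : σ < 1) :
    IntegrableOn (fun v => breg (σ ^ 2 / v ^ 2) * breg (σ ^ 2 * v ^ 2)) (Ioi 0) ∧
    ∫ v in Ioi (0:ℝ), breg (σ ^ 2 / v ^ 2) * breg (σ ^ 2 * v ^ 2) =
     σ ^ 3 / π / (2 * √2) * ∑' p : ℕ × ℕ, 1 / sq p.1 /
      ((σ ^ 2 + sq p.1 * sq p.2) * ((σ ^ 2) ^ 2 + (sq p.1 * sq p.2) ^ 2)) := by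
  have hlt : ∀ p : ℕ × ℕ, σ ^ 2 - sq p.1 * sq p.2 < 0 := by
    intro p
    have h1 := sq_ge p.1
    have h2 := sq_ge p.2
    nlinarith
  let β : ℕ × ℕ → ℝ := fun p => σ ^ 4 / (σ ^ 8 - sq p.1 ^ 4 * sq p.2 ^ 4)
  let α : ℕ × ℕ → ℝ := fun p => - sq p.2 ^ 4 / (σ ^ 8 - sq p.1 ^ 4 * sq p.2 ^ 4)
  have hfac : ∀ p : ℕ × ℕ, σ ^ 8 - sq p.1 ^ 4 * sq p.2 ^ 4 = (σ ^ 2 - sq p.1 * sq p.2) *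
      (σ ^ 2 + sq p.1 * sq p.2) * (σ ^ 4 + (sq p.1 * sq p.2) ^ 2) := fun p => by ring
  have hne : ∀ p : ℕ × ℕ, σ ^ 8 - sq p.1 ^ 4 * sq p.2 ^ 4 ≠ 0 := by
    intro p
    have h1 := sq_pos p.1
    have h2 := sq_pos p.2
    rw [hfac]
    have := (hlt p).ne
    positivity
  have hpf : ∀ p : ℕ × ℕ, ∀ v : ℝ, 0 < v → α p * (1 / (σ ^ 4 * v ^ 4 + sq p.2 ^ 4))
      + β p * (1 / (sq p.1 ^ 4 * v ^ 4 + σ ^ 4)) =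
      v ^ 4 / ((σ ^ 4 * v ^ 4 + sq p.2 ^ 4) * (sq p.1 ^ 4 * v ^ 4 + σ ^ 4)) := by
    intro p v hv
    have h1 := sq_pos p.1
    have h2 := sq_pos p.2
    have h3 := hne p
    simp only [α, β]
    generalize hD : σ ^ 8 - sq p.1 ^ 4 * sq p.2 ^ 4 = D at h3 ⊢
    field_simp
    rw [← hD]
    ring
  refine tonelli (fun (p : ℕ × ℕ) v => σ ^ 4 / π ^ 2 *
      (α p * (1 / (σ ^ 4 * v ^ 4 + sq p.2 ^ 4)) + β p * (1 / (sq p.1 ^ 4 * v ^ 4 + σ ^ 4)))) _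
      (fun p => σ ^ 3 / π / (2 * √2) * (1 / sq p.1 /
      ((σ ^ 2 + sq p.1 * sq p.2) * ((σ ^ 2) ^ 2 + (sq p.1 * sq p.2) ^ 2)))) _ (fun p u hu => ?_)
      (fun p => ?_) (fun p => ?_) (fun u hu => ?_)
      ((summable_G (by positivity)).hasSum.mul_left _)
  · rw [hpf p u hu]
    positivity
  · exact (((kint hσ (sq_pos p.2)).1.const_mul _).add
      ((kint (sq_pos p.1) hσ).1.const_mul _)).const_mul _
  · rw [integral_const_mul, integral_add ((kint hσ (sq_pos p.2)).1.const_mul _)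
      ((kint (sq_pos p.1) hσ).1.const_mul _), integral_const_mul, integral_const_mul,
      (kint hσ (sq_pos p.2)).2, (kint (sq_pos p.1) hσ).2]
    have h1 := sq_pos p.1
    have h2 := sq_pos p.2
    have h3 := (hlt p).ne
    have h4 := Real.pi_pos
    simp only [α, β]
    rw [hfac]
    generalize hD : σ ^ 2 - sq p.1 * sq p.2 = D at h3 ⊢
    field_simp
    rw [← hD]
    ring
  · have hu' : 0 < u := hu
    have hR := breg_hasSum (v := σ ^ 2 * u ^ 2) (by positivity)
    have hR' := breg_hasSum (v := σ ^ 2 / u ^ 2) (by positivity)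
    have h := hR'.mul hR (hR'.summable.mul_of_nonneg hR.summable (fun k => by positivity)
      (fun k => by positivity))
    refine hasSum_of_eq h (fun p => ?_) rfl
    rw [hpf p u hu', ← sq_sq, ← sq_sq]
    have h1 := sq_pos p.1
    have h2 := sq_pos p.2
    have h4 := Real.pi_pos
    field_simp
    ring

lemma I5 (hσ : 0 < σ) :
    IntegrableOn (fun v => bose (σ ^ 2 * v ^ 2) * bose (σ ^ 2 / v ^ 2)) (Ioi 0) ∧
    ∫ v in Ioi (0:ℝ), bose (σ ^ 2 * v ^ 2) * bose (σ ^ 2 / v ^ 2) =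
     √π / (2 * (√2 * √π * σ)) * ∑' p : ℕ × ℕ,
      1 / sq p.1 * Real.exp (-(4 * π * σ ^ 2 * (sq p.1 * sq p.2))) := by
  have hc : 0 < √2 * √π * σ := by positivity
  have hc2 : (√2 * √π * σ) ^ 2 = 2 * π * σ ^ 2 := by
    rw [mul_pow, mul_pow, Real.sq_sqrt (by norm_num), Real.sq_sqrt Real.pi_pos.le]
  set c := √2 * √π * σ with hcd
  clear_value c
  refine tonelli (fun (p : ℕ × ℕ) v =>
      Real.exp (-((c * sq p.1) ^ 2 * v ^ 2 + (c * sq p.2) ^ 2 / v ^ 2))) _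
    (fun p => √π / (2 * c) * (1 / sq p.1 * Real.exp (-(4 * π * σ ^ 2 * (sq p.1 * sq p.2))))) _
    (fun d u hu => by positivity)
    (fun p => (gaussInv (mul_pos hc (sq_pos p.1)) (mul_pos hc (sq_pos p.2))).1)
    (fun p => ?_) (fun u hu => ?_)
    ((summable_F (t := 4 * π * σ ^ 2) (by positivity)).hasSum.mul_left _)
  · rw [(gaussInv (mul_pos hc (sq_pos p.1)) (mul_pos hc (sq_pos p.2))).2]
    have := sq_pos p.1
    rw [show 2 * (c * sq p.1) * (c * sq p.2) = 4 * π * σ ^ 2 * (sq p.1 * sq p.2) by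
      linear_combination 2 * sq p.1 * sq p.2 * hc2]
    field_simp
  · have hu' : 0 < u := hu
    have hB := bose_hasSum (v := σ ^ 2 * u ^ 2) (by positivity)
    have hB' := bose_hasSum (v := σ ^ 2 / u ^ 2) (by positivity)
    have h := hB.mul hB' (hB.summable.mul_of_nonneg hB'.summable (fun k => (Real.exp_pos _).le)
      (fun k => (Real.exp_pos _).le))
    refine hasSum_of_eq h (fun p => ?_) rfl
    rw [← Real.exp_add, mul_pow, mul_pow, hc2, sq_sq, sq_sq]
    ring_nf

lemma int5 {f1 f2 f3 f4 f5 : ℝ → ℝ} (a b c d : ℝ) (h1 : IntegrableOn f1 (Ioi 0))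
    (h2 : IntegrableOn f2 (Ioi 0)) (h3 : IntegrableOn f3 (Ioi 0)) (h4 : IntegrableOn f4 (Ioi 0))
    (h5 : IntegrableOn f5 (Ioi 0)) :
    ∫ v in Ioi (0:ℝ), (f1 v + a * f2 v + b * f3 v + c * f4 v + d * f5 v) =
    (∫ v in Ioi (0:ℝ), f1 v) + a * (∫ v in Ioi (0:ℝ), f2 v) + b * (∫ v in Ioi (0:ℝ), f3 v)
    + c * (∫ v in Ioi (0:ℝ), f4 v) + d * (∫ v in Ioi (0:ℝ), f5 v) := by
  have g2 := h2.const_mul a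
  have g3 := h3.const_mul b
  have g4 := h4.const_mul c
  have g5 := h5.const_mul d
  have k2 : IntegrableOn (fun v => f1 v + a * f2 v) (Ioi 0) := h1.add g2
  have k3 : IntegrableOn (fun v => f1 v + a * f2 v + b * f3 v) (Ioi 0) := k2.add g3
  have k4 : IntegrableOn (fun v => f1 v + a * f2 v + b * f3 v + c * f4 v) (Ioi 0) := k3.add g4
  rw [integral_add k4 g5, integral_add k3 g4, integral_add k2 g3, integral_add h1 g2,
    integral_const_mul, integral_const_mul, integral_const_mul, integral_const_mul]

lemma real_identity (hσ : 0 < σ) (hσ1 : σ < 1) {Z : ℝ}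
    (hZ : HasSum (fun n : ℕ => 2 * (√((n:ℝ) + 1) - √(n:ℝ)) - 1 / √((n:ℝ) + 1)) (-Z)) :
    ∑' p : ℕ × ℕ, 1 / sq p.1 * Real.exp (-(4 * π * σ ^ 2 * (sq p.1 * sq p.2)))
    = (1 / (2 * π * σ ^ 2) - 1 / 2) * Z - σ ^ 2 / 2 * z3 + z3 / (8 * π ^ 2 * (σ ^ 2) ^ 2)
      + (σ ^ 2) ^ 2 / π * ∑' p : ℕ × ℕ, 1 / sq p.1 /
      ((σ ^ 2 + sq p.1 * sq p.2) * ((σ ^ 2) ^ 2 + (sq p.1 * sq p.2) ^ 2)) := by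
  have i1 := I1 hσ
  have i2 := I2 hσ hZ
  have i2' := I2' hσ hZ
  have i3 := I3 hσ
  have i4 := I4 hσ hσ1
  have i5 := I5 hσ
  set SF := ∑' p : ℕ × ℕ, 1 / sq p.1 * Real.exp (-(4 * π * σ ^ 2 * (sq p.1 * sq p.2)))
  set SG := ∑' p : ℕ × ℕ, 1 / sq p.1 /
      ((σ ^ 2 + sq p.1 * sq p.2) * ((σ ^ 2) ^ 2 + (sq p.1 * sq p.2) ^ 2))
  have key : ∫ v in Ioi (0:ℝ), bose (σ ^ 2 * v ^ 2) * bose (σ ^ 2 / v ^ 2)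
    = ∫ v in Ioi (0:ℝ), (breg (σ ^ 2 / v ^ 2) * breg (σ ^ 2 * v ^ 2)
      + 1 / 2 * (1 / (2 * π * σ ^ 2 * v ^ 2) - bose (σ ^ 2 * v ^ 2))
      + (-(1 / 2)) * breg (σ ^ 2 / v ^ 2)
      + 1 / (2 * π * σ ^ 2) * (v ^ 2 * bose (σ ^ 2 * v ^ 2))
      + (-(1 / (2 * π * σ ^ 2))) *
        (1 / v ^ 2 * (1 / (2 * π * σ ^ 2) * v ^ 2 - bose (σ ^ 2 / v ^ 2)))) := by
    refine setIntegral_congr_fun measurableSet_Ioi fun v hv => ?_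
    have hv' : 0 < v := hv
    have := Real.pi_pos
    simp only [breg]
    field_simp
    ring
  rw [int5 _ _ _ _ i4.1 i2.1 i3.1 i1.1 i2'.1,
    i1.2, i2.2, i2'.2, i3.2, i4.2, i5.2] at key
  have hP : √π ^ 2 = π := Real.sq_sqrt Real.pi_pos.le
  have hT : √2 ^ 2 = (2:ℝ) := Real.sq_sqrt (by norm_num)
  have hP0 : 0 < √π := by positivity
  have hT0 : 0 < √(2:ℝ) := by positivity
  have hT3 : √2 ^ 3 = 2 * √2 := by rw [pow_succ, hT]
  generalize √π = P at *
  generalize √(2:ℝ) = T at *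
  have k2 := congrArg (fun y => 2 * T * σ * y) key
  have e1 : 2 * T * σ * (P / (2 * (T * P * σ)) * SF) = SF := by field_simp
  rw [e1] at k2
  rw [k2]
  have := Real.pi_pos
  rw [mul_pow, mul_pow, hT3]
  rw [← hP]
  field_simp
  ring
end HP

namespace HP
open scoped Real
open MeasureTheory Set Filter Topology

lemma zeta_three_half : riemannZeta (3/2) = (z3 : ℂ) := by
  rw [zeta_eq_tsum_one_div_nat_add_one_cpow (by norm_num), z3, Complex.ofReal_tsum]
  refine tsum_congr fun n => ?_
  have h : (0:ℝ) < (n:ℝ) + 1 := by positivity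
  have : ((n:ℂ) + 1) ^ (3/2 : ℂ) = ((sq n ^ 3 : ℝ) : ℂ) := by
    rw [sq, Real.sqrt_eq_rpow, ← Real.rpow_natCast, ← Real.rpow_mul h.le, Complex.ofReal_cpow h.le]
    push_cast
    norm_num
  rw [this]
  push_cast; rfl

lemma zeta_neg_half : riemannZeta (-1/2) = -((z3 : ℂ) / (4 * π)) := by
  have h := riemannZeta_one_sub (s := 3/2) (fun n hn => by
      have := congrArg Complex.re hn
      norm_num at this
      have h2 : (0:ℝ) ≤ n := n.cast_nonneg
      linarith) (by norm_num)
  rw [show (1 - 3/2 : ℂ) = -1/2 by norm_num] at h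
  rw [h, zeta_three_half]
  have hG : Complex.Gamma (3/2) = ((√π / 2 : ℝ) : ℂ) := by
    rw [show (3/2 : ℂ) = 1/2 + 1 by norm_num, Complex.Gamma_add_one _ (by norm_num),
      Complex.Gamma_one_half_eq, show (1/2 : ℂ) = ((1/2 : ℝ) : ℂ) by push_cast; rfl,
      ← Complex.ofReal_cpow Real.pi_pos.le, ← Real.sqrt_eq_rpow]
    push_cast; ring
  have hC : Complex.cos (π * (3/2) / 2) = ((-(√2 / 2) : ℝ) : ℂ) := by
    rw [← Real.cos_pi_div_four, ← Real.cos_pi_sub]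
    push_cast
    congr 1
    ring
  have hP : (2 * π : ℂ) ^ (-(3/2) : ℂ) = ((1 / (√2 * √π) ^ 3 : ℝ) : ℂ) := by
    rw [← Real.sqrt_mul (by norm_num), Real.sqrt_eq_rpow, ← Real.rpow_natCast,
      ← Real.rpow_mul (by positivity), one_div, ← Real.rpow_neg (by positivity),
      Complex.ofReal_cpow (by positivity)]
    push_cast
    norm_num
  rw [hG, hC, hP]
  have e1 : √π ^ 2 = π := Real.sq_sqrt Real.pi_pos.le
  have e2 : √2 ^ 2 = (2:ℝ) := Real.sq_sqrt (by norm_num)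
  have p1 : 0 < √π := by positivity
  have p2 : 0 < √(2:ℝ) := by positivity
  have : (2 * (1 / (√2 * √π) ^ 3) * (√π / 2) * (-(√2 / 2)) * z3 : ℝ) = -(z3 / (4 * π)) := by
    have e3 : (4:ℝ) * π = 2 * √2 ^ 2 * √π ^ 2 := by rw [e1, e2]; ring
    rw [e3]
    field_simp
  exact_mod_cast this

/-- Left side. -/
noncomputable def FF (p : ℕ × ℕ) (w : ℂ) : ℂ :=
  ((1 / sq p.1 : ℝ) : ℂ) * Complex.exp (-(4 * π * w * ((sq p.1 * sq p.2 : ℝ) : ℂ)))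

/-- Right side. -/
noncomputable def GG (p : ℕ × ℕ) (w : ℂ) : ℂ :=
  ((1 / sq p.1 : ℝ) : ℂ) /
    ((w + ((sq p.1 * sq p.2 : ℝ) : ℂ)) * (w ^ 2 + ((sq p.1 * sq p.2 : ℝ) : ℂ) ^ 2))

/-- Domain. -/
def UU (δ : ℝ) : Set ℂ := {w | δ < w.re} ∩ ({w | w.im - 2 * w.re < 0} ∩ {w | -w.im - 2 * w.re < 0})

lemma UU_open (δ : ℝ) : IsOpen (UU δ) := by
  refine IsOpen.inter ?_ (IsOpen.inter ?_ ?_)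
  · exact isOpen_lt continuous_const Complex.continuous_re
  · exact isOpen_lt (by fun_prop) continuous_const
  · exact isOpen_lt (by fun_prop) continuous_const

lemma UU_convex (δ : ℝ) : Convex ℝ (UU δ) := by
  intro x hx y hy a b ha hb hab
  simp only [UU, mem_inter_iff, mem_ofPred_eq] at hx hy ⊢
  simp only [Complex.add_re, Complex.add_im, Complex.real_smul, Complex.re_ofReal_mul,
    Complex.im_ofReal_mul]
  obtain ⟨h1, h2, h3⟩ := hx
  obtain ⟨k1, k2, k3⟩ := hy
  have ea : b = 1 - a := by linarith
  subst ea
  rcases eq_or_lt_of_le ha with h | h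
  · subst h; simp; exact ⟨k1, by linarith, by linarith⟩
  · refine ⟨?_, ?_, ?_⟩ <;> nlinarith

lemma norm_lower {w : ℂ} (h0 : 0 < w.re) (h1 : w.im - 2 * w.re < 0) (h2 : -w.im - 2 * w.re < 0)
    {m : ℝ} (hm : 0 < m) : 4 / 5 * m ^ 3 ≤ ‖(w + (m : ℂ)) * (w ^ 2 + (m : ℂ) ^ 2)‖ := by
  have a1 : m ≤ ‖w + (m : ℂ)‖ := by
    have := Complex.re_le_norm (w + m)
    simp at this
    linarith
  have a2 : 4 / 5 * m ^ 2 ≤ ‖w ^ 2 + (m : ℂ) ^ 2‖ := by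
    refine (sq_le_sq₀ (by positivity) (norm_nonneg _)).1 ?_
    rw [Complex.sq_norm, Complex.normSq_apply]
    simp [pow_two]
    have hB : w.im ^ 2 ≤ 4 * w.re ^ 2 := by nlinarith
    set A := w.re ^ 2 with hA
    set B := w.im ^ 2 with hBd
    have hA0 : 0 ≤ A := sq_nonneg _
    have hB0 : 0 ≤ B := sq_nonneg _
    have e : (w.re * w.re - w.im * w.im + m * m) * (w.re * w.re - w.im * w.im + m * m) +
      (w.re * w.im + w.im * w.re) * (w.re * w.im + w.im * w.re)
      = m ^ 4 + 2 * m ^ 2 * (A - B) + (A + B) ^ 2 := by rw [hA, hBd]; ring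
    nlinarith [sq_nonneg (A + B - 3/5 * m ^ 2), mul_nonneg (sq_nonneg m) (by linarith : 0 ≤ 4 * A - B)]
  rw [norm_mul]
  calc 4 / 5 * m ^ 3 = m * (4 / 5 * m ^ 2) := by ring
    _ ≤ _ := by gcongr

lemma GG_bound {w : ℂ} (h0 : 0 < w.re) (h1 : w.im - 2 * w.re < 0) (h2 : -w.im - 2 * w.re < 0)
    (p : ℕ × ℕ) : ‖GG p w‖ ≤ 5 / 4 * (1 / (sq p.1 * sq p.2) ^ 3) := by
  have q1 := sq_pos p.1
  have q2 := sq_pos p.2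
  have hm : 0 < sq p.1 * sq p.2 := by positivity
  have hb := norm_lower h0 h1 h2 hm
  have h3 : 1 / sq p.1 ≤ 1 := by rw [div_le_one q1]; exact sq_ge _
  unfold GG
  rw [norm_div, Complex.norm_real, Real.norm_of_nonneg (by positivity)]
  calc _ ≤ 1 / (4 / 5 * (sq p.1 * sq p.2) ^ 3) := by gcongr
    _ = _ := by field_simp

lemma FF_bound {w : ℂ} {δ : ℝ} (h0 : δ ≤ w.re) 
    (p : ℕ × ℕ) : ‖FF p w‖ ≤ 1 / sq p.1 * Real.exp (-(4 * π * δ * (sq p.1 * sq p.2))) := by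
  have q1 := sq_pos p.1
  have q2 := sq_pos p.2
  unfold FF
  rw [norm_mul, Complex.norm_real, Real.norm_of_nonneg (by positivity), Complex.norm_exp]
  have e : (-(4 * π * w * ((sq p.1 * sq p.2 : ℝ) : ℂ))).re = -(4 * π * w.re * (sq p.1 * sq p.2)) := by
    rw [show -(4 * π * w * ((sq p.1 * sq p.2 : ℝ) : ℂ)) = ((-(4 * π * (sq p.1 * sq p.2)) : ℝ) : ℂ) * w by
      push_cast; ring, Complex.re_ofReal_mul]
    ring
  rw [e]
  gcongr

lemma summable_FF {w : ℂ} (h0 : 0 < w.re) : Summable (fun p => FF p w) :=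
  Summable.of_norm_bounded (summable_F (t := 4 * π * w.re) (by positivity))
    (fun p => FF_bound le_rfl p)

lemma summable_GG {w : ℂ} (h0 : 0 < w.re) (h1 : w.im - 2 * w.re < 0) (h2 : -w.im - 2 * w.re < 0) :
    Summable (fun p => GG p w) :=
  Summable.of_norm_bounded (summable_sq33.mul_left _) (fun p => GG_bound h0 h1 h2 p)

lemma real_identity' {w : ℝ} (h0 : 0 < w) (h1 : w < 1) :
    ∑' p, FF p (w : ℂ) = (1 / (2 * π * (w : ℂ)) - 1 / 2) * riemannZeta (1/2)
      - (w : ℂ) / 2 * z3 + z3 / (8 * π ^ 2 * (w : ℂ) ^ 2) + (w : ℂ) ^ 2 / π * ∑' p, GG p (w : ℂ) := by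
  obtain ⟨Z, hZ1, hZ2⟩ := zeta_half_series
  have h := real_identity (σ := √w) (Real.sqrt_pos.2 h0) (by
    rw [Real.sqrt_lt' one_pos]; simpa using h1) hZ2
  rw [Real.sq_sqrt h0.le] at h
  rw [hZ1]
  have e1 : ∑' p, FF p (w : ℂ) = ((∑' p : ℕ × ℕ, 1 / sq p.1 *
      Real.exp (-(4 * π * w * (sq p.1 * sq p.2))) : ℝ) : ℂ) := by
    rw [Complex.ofReal_tsum]
    refine tsum_congr fun p => ?_
    unfold FF
    push_cast; rfl
  have e2 : ∑' p, GG p (w : ℂ) = ((∑' p : ℕ × ℕ, 1 / sq p.1 /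
      ((w + sq p.1 * sq p.2) * (w ^ 2 + (sq p.1 * sq p.2) ^ 2)) : ℝ) : ℂ) := by
    rw [Complex.ofReal_tsum]
    refine tsum_congr fun p => ?_
    unfold GG
    push_cast; rfl
  rw [e1, e2, h]
  push_cast
  ring

lemma complex_identity {w : ℂ} (h0 : 0 < w.re) (h1 : w.im - 2 * w.re < 0)
    (h2 : -w.im - 2 * w.re < 0) :
    ∑' p, FF p w = (1 / (2 * π * w) - 1 / 2) * riemannZeta (1/2)
      - w / 2 * z3 + z3 / (8 * π ^ 2 * w ^ 2) + w ^ 2 / π * ∑' p, GG p w := by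
  obtain ⟨δ, hδ0, hδ1, hδ2⟩ : ∃ δ : ℝ, 0 < δ ∧ δ < 1/2 ∧ δ < w.re :=
    ⟨min (1/4) (w.re/2), by positivity, (min_le_left _ _).trans_lt (by norm_num),
      (min_le_right _ _).trans_lt (by linarith)⟩
  have hne : ∀ z ∈ UU δ, z ≠ 0 := by
    rintro z hz rfl
    have := hz.1
    simp at this
    linarith
  have dF : DifferentiableOn ℂ (fun w => ∑' p, FF p w) (UU δ) := by
    refine Complex.differentiableOn_tsum_of_summable_norm
      (summable_F (t := 4 * π * δ) (by positivity)) (fun p => ?_) (UU_open δ)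
      (fun p z hz => FF_bound (le_of_lt hz.1) p)
    unfold FF
    fun_prop
  have dG : DifferentiableOn ℂ (fun w => ∑' p, GG p w) (UU δ) := by
    refine Complex.differentiableOn_tsum_of_summable_norm
      (summable_sq33.mul_left (5/4)) (fun p => ?_) (UU_open δ)
      (fun p z hz => GG_bound (hδ0.trans hz.1) hz.2.1 hz.2.2 p)
    unfold GG
    refine DifferentiableOn.div (by fun_prop) (by fun_prop) ?_
    intro z hz
    have hm : 0 < sq p.1 * sq p.2 := mul_pos (sq_pos _) (sq_pos _)
    have := norm_lower (hδ0.trans hz.1) hz.2.1 hz.2.2 hm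
    apply norm_pos_iff.1
    refine lt_of_lt_of_le (by positivity) this
  have hπ : (π : ℂ) ≠ 0 := by exact_mod_cast Real.pi_ne_zero
  have dR : DifferentiableOn ℂ (fun w : ℂ => (1 / (2 * π * w) - 1 / 2) * riemannZeta (1/2)
      - w / 2 * z3 + z3 / (8 * π ^ 2 * w ^ 2) + w ^ 2 / π * ∑' p, GG p w) (UU δ) := by
    refine DifferentiableOn.add (DifferentiableOn.add (DifferentiableOn.sub
      (DifferentiableOn.mul (DifferentiableOn.sub (DifferentiableOn.div (by fun_prop) (by fun_prop)
        ?_) (by fun_prop)) (by fun_prop)) (by fun_prop))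
      (DifferentiableOn.div (by fun_prop) (by fun_prop) ?_))
      (DifferentiableOn.mul (by fun_prop) dG)
    · intro z hz
      have := hne z hz
      simp [this, hπ]
    · intro z hz
      have := hne z hz
      simp [this, hπ]
  refine AnalyticOnNhd.eqOn_of_preconnected_of_frequently_eq
    (dF.analyticOnNhd (UU_open δ)) (dR.analyticOnNhd (UU_open δ)) (UU_convex δ).isPreconnected
    (z₀ := ((1/2 : ℝ) : ℂ)) ?_ ?_ ⟨hδ2, h1, h2⟩
  · simp only [UU, mem_inter_iff, mem_ofPred_eq, Complex.ofReal_re, Complex.ofReal_im]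
    exact ⟨hδ1, by norm_num, by norm_num⟩
  · have ht : Tendsto (fun n : ℕ => ((1/2 + 1/((n:ℝ)+3) : ℝ) : ℂ)) atTop (𝓝[≠] ((1/2 : ℝ) : ℂ)) := by
      rw [tendsto_nhdsWithin_iff]
      constructor
      · refine (Complex.continuous_ofReal.tendsto _).comp ?_
        have : Tendsto (fun n : ℕ => (n:ℝ)+3) atTop atTop :=
          tendsto_atTop_add_const_right _ _ tendsto_natCast_atTop_atTop
        have h3 : Tendsto (fun n : ℕ => 1/((n:ℝ)+3)) atTop (𝓝 0) := by
          simpa only [one_div] using! this.inv_tendsto_atTop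
        simpa only [add_zero] using h3.const_add (1/2)
      · refine Eventually.of_forall fun n => ?_
        simp only [mem_compl_iff, mem_singleton_iff, Complex.ofReal_inj]
        have : 0 < 1/((n:ℝ)+3) := by positivity
        linarith
    refine ht.frequently (Frequently.of_forall fun n => ?_)
    have h5 : 0 < 1/((n:ℝ)+3) := by positivity
    have h6 : 1/((n:ℝ)+3) ≤ 1/3 := by
      apply one_div_le_one_div_of_le (by norm_num)
      linarith [n.cast_nonneg (α := ℝ)]
    exact real_identity' (by linarith) (by linarith)
end HP

namespace HP
open scoped Real
open MeasureTheory Set Filter Topology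

lemma div_sum (n : ℕ) (hn : 0 < n) :
    ∑ d ∈ n.divisorsAntidiagonal, 1 / √(d.1 : ℝ)
      = (∑ d ∈ n.divisors, (d:ℝ) ^ (1/2 : ℝ)) / √(n:ℝ) := by
  rw [← Nat.map_swap_divisorsAntidiagonal, Finset.sum_map]
  have := Nat.sum_divisorsAntidiagonal (n := n) (f := fun i _ => (i:ℝ) ^ (1/2 : ℝ) / √(n:ℝ))
  rw [Finset.sum_div, ← this]
  refine Finset.sum_congr rfl fun d hd => ?_
  obtain ⟨h1, h2⟩ := Nat.mem_divisorsAntidiagonal.1 hd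
  have hd1 : 0 < d.1 := Nat.pos_of_ne_zero (by rintro h; simp [h] at h1; omega)
  have hd2 : 0 < d.2 := Nat.pos_of_ne_zero (by rintro h; simp [h] at h1; omega)
  have hd1' : (0:ℝ) < d.1 := by exact_mod_cast hd1
  have hd2' : (0:ℝ) < d.2 := by exact_mod_cast hd2
  rw [← h1, ← Real.sqrt_eq_rpow]
  push_cast
  rw [Real.sqrt_mul hd1'.le]
  have : 0 < √(d.1:ℝ) := by positivity
  have : 0 < √(d.2:ℝ) := by positivity
  simp
  field_simp

lemma divisor_sum (f : ℕ → ℝ)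
    (hs : Summable fun p : ℕ × ℕ => 1 / sq p.1 * f ((p.1 + 1) * (p.2 + 1))) :
    ∑' n : ℕ, (∑ d ∈ (n+1).divisors, (d:ℝ) ^ (1/2 : ℝ)) / √((n:ℝ) + 1) * f (n + 1)
    = ∑' p : ℕ × ℕ, 1 / sq p.1 * f ((p.1 + 1) * (p.2 + 1)) := by
  let g : ℕ+ × ℕ+ → ℝ := fun q => 1 / √((q.1:ℕ):ℝ) * f ((q.1:ℕ) * (q.2:ℕ))
  let e : ℕ × ℕ ≃ ℕ+ × ℕ+ := Equiv.prodCongr Equiv.pnatEquivNat.symm Equiv.pnatEquivNat.symm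
  have hge : (fun p : ℕ × ℕ => 1 / sq p.1 * f ((p.1 + 1) * (p.2 + 1))) = g ∘ e := by
    ext p
    simp [g, e, sq]
  have hsg : Summable g := by
    rw [hge, e.summable_iff] at hs; exact hs
  have hss : Summable (g ∘ sigmaAntidiagonalEquivProd) := sigmaAntidiagonalEquivProd.summable_iff.2 hsg
  rw [hge]
  have h1 : ∑' p, (g ∘ e) p = ∑' q, g q := e.tsum_eq g
  rw [h1, ← sigmaAntidiagonalEquivProd.tsum_eq g]
  have h2 := Summable.tsum_sigma hss
  simp only [Function.comp] at h2
  rw [h2]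
  have h3 := tsum_pnat_eq_tsum_succ
    (f := fun n : ℕ => (∑ d ∈ n.divisors, (d:ℝ) ^ (1/2 : ℝ)) / √(n:ℝ) * f n)
  push_cast at h3
  rw [← h3]
  refine tsum_congr fun n => ?_
  rw [← div_sum n n.pos, tsum_fintype, Finset.sum_mul]
  rw [← Finset.sum_coe_sort]
  refine Finset.sum_congr rfl fun d _ => ?_
  have hd := (Nat.mem_divisorsAntidiagonal.1 d.2).1
  simp only [g, sigmaAntidiagonalEquivProd, divisorsAntidiagonalFactors, Equiv.coe_fn_mk,
    PNat.mk_coe]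
  rw [hd]

section
variable {x a : ℝ}

lemma fterm (p : ℕ × ℕ) :
    ((1 / sq p.1 * (Real.exp (-(4 * π * a * (sq p.1 * sq p.2))) *
      Real.sin (π / 4 + 4 * π * a * (sq p.1 * sq p.2))) : ℝ) : ℂ)
    = 1 / (2 * Complex.I * (√2 : ℝ)) * ((1 + Complex.I) * FF p (a - a * Complex.I)
      - (1 - Complex.I) * FF p (a + a * Complex.I)) := by
  unfold FF
  generalize hm : sq p.1 * sq p.2 = m
  generalize sq p.1 = s
  generalize hθ : 4 * π * a * m = θ
  have e1 : -(4 * (π:ℂ) * (a - a * Complex.I) * (m : ℝ)) = -(θ:ℂ) + θ * Complex.I := by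
    rw [← hθ]; push_cast; ring
  have e2 : -(4 * (π:ℂ) * (a + a * Complex.I) * (m : ℝ)) = -(θ:ℂ) + ((-θ : ℝ) : ℂ) * Complex.I := by
    rw [← hθ]; push_cast; ring
  rw [e1, e2, Complex.exp_add, Complex.exp_add, Complex.exp_mul_I, Complex.exp_mul_I,
    Real.sin_add, Real.cos_pi_div_four, Real.sin_pi_div_four]
  rw [← Complex.ofReal_cos, ← Complex.ofReal_sin, ← Complex.ofReal_cos, ← Complex.ofReal_sin,
    Real.cos_neg, Real.sin_neg, ← Complex.ofReal_neg, ← Complex.ofReal_exp]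
  have hT : ((√2 : ℝ) : ℂ) ^ 2 = 2 := by
    rw [← Complex.ofReal_pow, Real.sq_sqrt (by norm_num)]; norm_num
  have hT0 : ((√2 : ℝ) : ℂ) ≠ 0 := by
    intro h; rw [h] at hT; norm_num at hT
  have hI := Complex.I_sq
  have hI0 := Complex.I_ne_zero
  push_cast
  have hi : (1 : ℂ) / (2 * Complex.I * (√2 : ℝ)) = -Complex.I * (√2 : ℝ) / 4 := by
    field_simp
    rw [hT, hI]; ring
  rw [hi]
  generalize Complex.exp (-(θ:ℂ)) = E
  generalize Complex.cos (θ:ℂ) = c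
  generalize Complex.sin (θ:ℂ) = d
  generalize ((√2 : ℝ) : ℂ) = T at *
  linear_combination (T/2*(c+d)*E/s) * hI

lemma gterm (ha : 0 < a) (hx : x = 2 * a ^ 2) (p : ℕ × ℕ) :
    ((x / (√2 * π) * (1 / sq p.1 * ((2 * a - sq p.1 * sq p.2) / (x ^ 2 + (sq p.1 * sq p.2) ^ 4))) : ℝ) : ℂ)
    = 1 / (2 * Complex.I * (√2 : ℝ)) * ((1 + Complex.I) * ((a - a * Complex.I) ^ 2 / π * GG p (a - a * Complex.I))
      - (1 - Complex.I) * ((a + a * Complex.I) ^ 2 / π * GG p (a + a * Complex.I))) := by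
  have hm : 0 < sq p.1 * sq p.2 := mul_pos (sq_pos _) (sq_pos _)
  have n1 := norm_lower (w := a - a * Complex.I) (by simpa) (by simp; linarith) (by simp; linarith) hm
  have n2 := norm_lower (w := a + a * Complex.I) (by simpa) (by simp; linarith) (by simp; linarith) hm
  unfold GG
  generalize hm : sq p.1 * sq p.2 = m at *
  have hs := sq_pos p.1
  generalize sq p.1 = s at *
  have hI := Complex.I_sq
  have hI0 := Complex.I_ne_zero
  have hT0 : ((√2 : ℝ) : ℂ) ≠ 0 := by
    have : √(2:ℝ) ≠ 0 := by positivity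
    exact_mod_cast this
  have d1 : ((a - a * Complex.I) + (m:ℂ)) * ((a - a * Complex.I) ^ 2 + (m:ℂ) ^ 2) ≠ 0 :=
    norm_pos_iff.1 (lt_of_lt_of_le (by positivity) n1)
  have d2 : ((a + a * Complex.I) + (m:ℂ)) * ((a + a * Complex.I) ^ 2 + (m:ℂ) ^ 2) ≠ 0 :=
    norm_pos_iff.1 (lt_of_lt_of_le (by positivity) n2)
  have d3 : ((x:ℂ) ^ 2 + (m:ℂ) ^ 4) ≠ 0 := by
    have : x ^ 2 + m ^ 4 ≠ 0 := by positivity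
    exact_mod_cast this
  have hxc : (x:ℂ) = 2 * (a:ℂ) ^ 2 := by rw [hx]; push_cast; ring
  have k1 : ((s:ℂ))⁻¹ / (((a - a * Complex.I) + (m:ℂ)) * ((a - a * Complex.I) ^ 2 + (m:ℂ) ^ 2))
      = (s:ℂ)⁻¹ * (m - (a - a * Complex.I)) / ((x:ℂ) ^ 2 + (m:ℂ) ^ 4) := by
    rw [div_eq_div_iff d1 d3, hxc]
    linear_combination ((s:ℂ)⁻¹*a^4*(5-4*Complex.I+Complex.I^2)) * hI
  have k2 : ((s:ℂ))⁻¹ / (((a + a * Complex.I) + (m:ℂ)) * ((a + a * Complex.I) ^ 2 + (m:ℂ) ^ 2))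
      = (s:ℂ)⁻¹ * (m - (a + a * Complex.I)) / ((x:ℂ) ^ 2 + (m:ℂ) ^ 4) := by
    rw [div_eq_div_iff d2 d3, hxc]
    linear_combination ((s:ℂ)⁻¹*a^4*(5+4*Complex.I+Complex.I^2)) * hI
  push_cast
  rw [one_div, k1, k2]
  have hπ : (π : ℂ) ≠ 0 := by exact_mod_cast Real.pi_ne_zero
  have hsc : (s:ℂ) ≠ 0 := by exact_mod_cast hs.ne'
  field_simp
  rw [hxc]
  grind

lemma main_identity (ha : 0 < a) (hx : x = 2 * a ^ 2) :
    ((∑' n : ℕ, (∑ d ∈ (n+1).divisors, (d:ℝ) ^ (1/2 : ℝ)) / √((n:ℝ) + 1) *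
        (Real.exp (-(4 * π * a * √((n + 1 : ℕ) : ℝ))) *
        Real.sin (π / 4 + 4 * π * a * √((n + 1 : ℕ) : ℝ))) : ℝ) : ℂ)
    = (1 / 2) * (((1 / (π * (√2 * a)) - 1 / √2 : ℝ) : ℂ) * riemannZeta (1 / 2)
          - ((1 / (π * x * √2) : ℝ) : ℂ) * riemannZeta (-1 / 2))
      + ((x / (√2 * π) : ℝ) : ℂ) *
        ((∑' n : ℕ, (∑ d ∈ (n+1).divisors, (d:ℝ) ^ (1/2 : ℝ)) / √((n:ℝ) + 1) *
          ((2 * a - √((n + 1 : ℕ) : ℝ)) / (x ^ 2 + (√((n + 1 : ℕ) : ℝ)) ^ 4)) : ℝ) : ℂ) := by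
  have hsq : ∀ p : ℕ × ℕ, √(((p.1 + 1) * (p.2 + 1) : ℕ) : ℝ) = sq p.1 * sq p.2 := by
    intro p
    push_cast
    rw [Real.sqrt_mul (by positivity)]; rfl
  have sF1 : Summable (fun p => FF p (a - a * Complex.I)) := summable_FF (by simpa)
  have sF2 : Summable (fun p => FF p (a + a * Complex.I)) := summable_FF (by simpa)
  have sG1 : Summable (fun p => GG p (a - a * Complex.I)) :=
    summable_GG (by simpa) (by simp; linarith) (by simp; linarith)
  have sG2 : Summable (fun p => GG p (a + a * Complex.I)) :=
    summable_GG (by simpa) (by simp; linarith) (by simp; linarith)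
  have i1 := complex_identity (w := a - a * Complex.I) (by simpa) (by simp; linarith)
    (by simp; linarith)
  have i2 := complex_identity (w := a + a * Complex.I) (by simpa) (by simp; linarith)
    (by simp; linarith)
  have hF := ((sF1.hasSum.mul_left (1 + Complex.I)).sub
    (sF2.hasSum.mul_left (1 - Complex.I))).mul_left (1 / (2 * Complex.I * (√2 : ℝ)))
  have hG := (((sG1.hasSum.mul_left ((a - a * Complex.I) ^ 2 / π)).mul_left (1 + Complex.I)).sub
    ((sG2.hasSum.mul_left ((a + a * Complex.I) ^ 2 / π)).mul_left (1 - Complex.I))).mul_left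
      (1 / (2 * Complex.I * (√2 : ℝ)))
  simp only [← fterm] at hF
  simp only [← gterm ha hx] at hG
  have hx0 : 0 < x := by rw [hx]; positivity
  have sf := Complex.summable_ofReal.1 hF.summable
  have sg := Complex.summable_ofReal.1 hG.summable
  have hT0 : 0 < √(2:ℝ) := by positivity
  rw [summable_mul_left_iff (by positivity)] at sg
  have df := divisor_sum (fun N : ℕ => Real.exp (-(4 * π * a * √(N : ℝ))) *
        Real.sin (π / 4 + 4 * π * a * √(N : ℝ))) (by simp only [hsq]; exact sf)
  have dg := divisor_sum (fun N : ℕ => (2 * a - √(N : ℝ)) / (x ^ 2 + (√(N : ℝ)) ^ 4))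
    (by simp only [hsq]; exact sg)
  simp only [hsq] at df dg
  rw [df, dg, ← Complex.ofReal_mul, ← tsum_mul_left, Complex.ofReal_tsum, Complex.ofReal_tsum,
    hF.tsum_eq, hG.tsum_eq, i1, i2, zeta_neg_half]
  have hI := Complex.I_sq
  have hI0 := Complex.I_ne_zero
  have hTc : ((√2 : ℝ) : ℂ) ≠ 0 := by exact_mod_cast hT0.ne'
  have hac : (a : ℂ) ≠ 0 := by exact_mod_cast ha.ne'
  have hπ : (π : ℂ) ≠ 0 := by exact_mod_cast Real.pi_ne_zero
  have j1 : ∀ y : ℂ, y / (a - a * Complex.I) = y * ((1 + Complex.I) / (2 * a)) := by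
    intro y
    have : (a - a * Complex.I : ℂ) ≠ 0 := by
      intro h; have := congrArg Complex.re h; simp at this; exact ha.ne' this
    rw [div_eq_iff this]
    field_simp
    linear_combination y * hI
  have j2 : ∀ y : ℂ, y / (a + a * Complex.I) = y * ((1 - Complex.I) / (2 * a)) := by
    intro y
    have : (a + a * Complex.I : ℂ) ≠ 0 := by
      intro h; have := congrArg Complex.re h; simp at this; exact ha.ne' this
    rw [div_eq_iff this]
    field_simp
    linear_combination y * hI
  have q1 : (a - a * Complex.I : ℂ) ^ 2 = -(x * Complex.I) := by
    rw [hx]; push_cast; linear_combination (a:ℂ) ^ 2 * hI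
  have q2 : (a + a * Complex.I : ℂ) ^ 2 = x * Complex.I := by
    rw [hx]; push_cast; linear_combination (a:ℂ) ^ 2 * hI
  have hxc : (x : ℂ) ≠ 0 := by exact_mod_cast hx0.ne'
  have r1 : (1:ℂ) / (2 * π * (a - a * Complex.I)) = 1 / (2 * π) * ((1 + Complex.I) / (2 * a)) := by
    rw [← div_div, j1]
  have r2 : (1:ℂ) / (2 * π * (a + a * Complex.I)) = 1 / (2 * π) * ((1 - Complex.I) / (2 * a)) := by
    rw [← div_div, j2]
  rw [q1, q2, r1, r2]
  generalize riemannZeta (1/2) = Z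
  generalize ∑' p, GG p (a - a * Complex.I) = S1
  generalize ∑' p, GG p (a + a * Complex.I) = S2
  push_cast
  field_simp
  clear i1 i2 hF hG sf sg df dg sF1 sF2 sG1 sG2 j1 j2 q1 q2 r1 r2
  grind

end
end HP


open Complex Finset
open scoped Real BigOperators Classical

theorem corollary_half_plus (x : ℝ) (hx : 0 < x) (hxint : ∀ k : ℤ, x ≠ (k : ℝ)) :
    (∑' n : ℕ, ((rsigma (1 / 2) (n + 1) / Real.sqrt ((n : ℝ) + 1) *
        Real.exp (-(2 * π * Real.sqrt (2 * ((n : ℝ) + 1) * x))) *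
        Real.sin (π / 4 + 2 * π * Real.sqrt (2 * ((n : ℝ) + 1) * x)) : ℝ) : ℂ))
    = (1 / 2) * (((1 / (π * Real.sqrt x) - 1 / Real.sqrt 2 : ℝ) : ℂ) * riemannZeta (1 / 2)
          - ((1 / (π * x * Real.sqrt 2) : ℝ) : ℂ) * riemannZeta (-1 / 2))
      + ((x / (π * Real.sqrt 2) : ℝ) : ℂ) *
        ∑' n : ℕ, ((rsigma (1 / 2) (n + 1) / Real.sqrt ((n : ℝ) + 1) *
          ((Real.sqrt (2 * x) - Real.sqrt ((n : ℝ) + 1)) /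
            (x ^ 2 + ((n : ℝ) + 1) ^ 2)) : ℝ) : ℂ) := by
  obtain ⟨a, ha, hxa⟩ : ∃ a : ℝ, 0 < a ∧ x = 2 * a ^ 2 := by
    refine ⟨Real.sqrt (x / 2), Real.sqrt_pos.2 (by positivity), ?_⟩
    rw [Real.sq_sqrt (by positivity)]; ring
  have key := HP.main_identity ha hxa
  have e1 : Real.sqrt (2 * x) = 2 * a := by
    rw [hxa, show 2 * (2 * a ^ 2) = (2 * a) ^ 2 by ring, Real.sqrt_sq (by positivity)]
  have e2 : Real.sqrt x = Real.sqrt 2 * a := by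
    rw [hxa, Real.sqrt_mul (by norm_num), Real.sqrt_sq ha.le]
  have e3 : ∀ n : ℕ, Real.sqrt (2 * ((n : ℝ) + 1) * x) = 2 * a * Real.sqrt ((n : ℝ) + 1) := by
    intro n
    rw [show 2 * ((n : ℝ) + 1) * x = 2 * x * ((n : ℝ) + 1) by ring,
      Real.sqrt_mul (by positivity), e1]
  have e4 : ∀ n : ℕ, (Real.sqrt ((n : ℝ) + 1)) ^ 4 = ((n : ℝ) + 1) ^ 2 := by
    intro n
    rw [show (4 : ℕ) = 2 * 2 from rfl, pow_mul, Real.sq_sqrt (by positivity)]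
  have e5 : ∀ y : ℝ, 2 * π * (2 * a * y) = 4 * π * a * y := fun y => by ring
  rw [← Complex.ofReal_tsum, ← Complex.ofReal_tsum]
  simp only [rsigma, e1, e2, e3, e5, mul_assoc (_ / _) (Real.exp _) _]
  simp only [Nat.cast_add, Nat.cast_one, e4] at key
  rw [mul_comm π (Real.sqrt 2)]
  exact key
end

section
/- Let x > 0 be real. Then ∑_{n=1}^∞ σ_{1/2}(n) n^{−1/2} e^{−2π√(2nx)} sin(π/4 − 2π√(2nx)) = ( 2π√x + 1/(2√2·πx) )·ζ(−1/2) − ζ(1/2)/(2√2) + (x/(π√2)) ∑_{n=1}^∞ σ_{1/2}(n)/(x² + n²). -/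
open Complex Finset
open scoped Real BigOperators Classical

open MeasureTheory Filter Topology



/-- trapezoid error -/
noncomputable def trapT (φ : ℝ → ℂ) (a : ℝ) : ℂ :=
  (φ a + φ (a + 1)) / 2 - ∫ u in a..(a + 1), φ u

lemma trapT_bound (φ φ' φ'' : ℝ → ℂ) (a C : ℝ)
    (h1 : ∀ u ∈ Set.Icc a (a + 1), HasDerivAt φ (φ' u) u)
    (h2 : ∀ u ∈ Set.Icc a (a + 1), HasDerivAt φ' (φ'' u) u)
    (h3 : ContinuousOn φ'' (Set.Icc a (a + 1)))
    (hC : ∀ u ∈ Set.Icc a (a + 1), ‖φ'' u‖ ≤ C) :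
    ‖trapT φ a‖ ≤ C := by
  have hle : a ≤ a + 1 := by linarith
  have hu : Set.uIcc a (a + 1) = Set.Icc a (a + 1) := Set.uIcc_of_le hle
  set P : ℝ → ℂ := fun u => (((u - a) * (a + 1 - u) / 2 : ℝ) : ℂ) with hP
  set P' : ℝ → ℂ := fun u => (((2 * a + 1 - 2 * u) / 2 : ℝ) : ℂ) with hP'
  have dP : ∀ u, HasDerivAt P (P' u) u := by
    intro u
    have : HasDerivAt (fun u : ℝ => (u - a) * (a + 1 - u) / 2) ((2 * a + 1 - 2 * u) / 2) u := by
      exact ((((hasDerivAt_id u).sub_const a).mul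
        ((hasDerivAt_id u).const_sub (a + 1))).div_const 2).congr_deriv (by simp; ring)
    exact this.ofReal_comp
  have dP' : ∀ u, HasDerivAt P' (-1) u := by
    intro u
    have : HasDerivAt (fun u : ℝ => (2 * a + 1 - 2 * u) / 2) (-1) u := by
      exact ((((hasDerivAt_id u).const_mul 2).const_sub (2 * a + 1)).div_const 2).congr_deriv
        (by norm_num)
    exact this.ofReal_comp.congr_deriv (by simp)
  have cφ : ContinuousOn φ (Set.Icc a (a + 1)) := fun u hu => (h1 u hu).continuousAt.continuousWithinAt
  have cP : Continuous P := by rw [continuous_iff_continuousAt]; exact fun u => (dP u).continuousAt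
  have iPφ : IntervalIntegrable (fun u => P u * φ'' u) volume a (a + 1) := by
    apply ContinuousOn.intervalIntegrable
    rw [hu]; exact cP.continuousOn.mul h3
  have iφ : IntervalIntegrable φ volume a (a + 1) := by
    apply ContinuousOn.intervalIntegrable
    rw [hu]; exact cφ
  have key : ∫ u in a..(a + 1), (P u * φ'' u + φ u) = (φ a + φ (a + 1)) / 2 := by
    have := intervalIntegral.integral_eq_sub_of_hasDerivAt
      (f := fun u => P u * φ' u - P' u * φ u) (f' := fun u => P u * φ'' u + φ u)
      (a := a) (b := a + 1) ?_ (iPφ.add iφ)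
    · rw [this]
      simp only [hP, hP']
      push_cast
      ring
    · rw [hu]
      intro u hu
      exact (((dP u).mul (h2 u hu)).sub ((dP' u).mul (h1 u hu))).congr_deriv (by ring)
  rw [intervalIntegral.integral_add iPφ iφ] at key
  have e : trapT φ a = ∫ u in a..(a + 1), P u * φ'' u := by
    unfold trapT; rw [← key]; ring
  rw [e]
  have := intervalIntegral.norm_integral_le_of_norm_le_const (a := a) (b := a + 1)
    (f := fun u => P u * φ'' u) (C := C) ?_
  · simpa using this
  · intro u hu'
    rw [Set.uIoc_of_le hle] at hu'
    have hu2 : u ∈ Set.Icc a (a + 1) := ⟨hu'.1.le, hu'.2⟩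
    rw [norm_mul]
    have : ‖P u‖ ≤ 1 := by
      simp only [hP]
      rw [Complex.norm_real, Real.norm_eq_abs, abs_le]
      constructor <;> nlinarith [hu2.1, hu2.2]
    calc ‖P u‖ * ‖φ'' u‖ ≤ 1 * C := by
          gcongr
          exact hC u hu2
      _ = C := one_mul C

lemma trapT_tsum (φ : ℝ → ℂ) (hi : IntegrableOn φ (Set.Ioi 1))
    (hs : Summable fun n : ℕ => φ ((n : ℝ) + 1))
    (hT : Summable fun n : ℕ => trapT φ ((n : ℝ) + 1)) :
    ∑' n : ℕ, trapT φ ((n : ℝ) + 1) =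
      ∑' n : ℕ, φ ((n : ℝ) + 1) - φ 1 / 2 - ∫ u in Set.Ioi 1, φ u := by
  have h1 := hT.hasSum.tendsto_sum_nat
  refine tendsto_nhds_unique h1 ?_
  have h2 := hs.hasSum.tendsto_sum_nat
  have h3 : Tendsto (fun N : ℕ => ∑ n ∈ Finset.range (N + 1), φ ((n : ℝ) + 1)) atTop
    (𝓝 (∑' n : ℕ, φ ((n : ℝ) + 1))) := h2.comp (tendsto_add_atTop_nat 1)
  have h4 : Tendsto (fun N : ℕ => ∫ u in (1 : ℝ)..((N : ℝ) + 1), φ u) atTop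
      (𝓝 (∫ u in Set.Ioi 1, φ u)) :=
    intervalIntegral_tendsto_integral_Ioi 1 hi
      (tendsto_atTop_add_const_right _ _ tendsto_natCast_atTop_atTop)
  have h5 := (((h2.div_const 2).add (h3.div_const 2)).sub_const (φ 1 / 2)).sub h4
  refine (h5.congr ?_).trans (le_of_eq ?_)
  · intro N
    have e1 : ∫ u in (1 : ℝ)..((N : ℝ) + 1), φ u =
        ∑ n ∈ Finset.range N, ∫ u in ((n : ℝ) + 1)..((n : ℝ) + 1 + 1), φ u := by
      have := intervalIntegral.sum_integral_adjacent_intervals (f := φ) (μ := volume)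
        (a := fun n : ℕ => (n : ℝ) + 1) (n := N) ?_
      · simp only [Nat.cast_zero, zero_add] at this
        rw [← this]
        refine Finset.sum_congr rfl fun n _ => ?_
        push_cast; rfl
      · intro k _
        rw [intervalIntegrable_iff_integrableOn_Ioc_of_le (by push_cast; linarith)]
        refine hi.mono_set ?_
        intro u hu
        have : (0 : ℝ) ≤ k := Nat.cast_nonneg k
        simp only [Set.mem_Ioi]; linarith [hu.1]
    rw [e1, Finset.sum_range_succ']
    simp only [trapT, Finset.sum_sub_distrib]
    push_cast
    rw [← Finset.sum_div, Finset.sum_add_distrib]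
    simp only [zero_add]
    ring
  · congr 1; ring



noncomputable def phi (s : ℂ) (t : ℝ) (u : ℝ) : ℂ := (u : ℂ) ^ (-s) * (Real.exp (-(t * u)) : ℂ)

lemma hasDerivAt_real_cpow (r : ℂ) {u : ℝ} (hu : 0 < u) :
    HasDerivAt (fun u : ℝ => (u : ℂ) ^ r) (r * (u : ℂ) ^ (r - 1)) u := by
  have := ((hasDerivAt_id (u : ℂ)).cpow_const (c := r) (Or.inl (by simpa using hu))).comp_ofReal
  exact this.congr_deriv (by simp)

lemma hasDerivAt_exp_neg_mul (t u : ℝ) :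
    HasDerivAt (fun u : ℝ => (Real.exp (-(t * u)) : ℂ)) (-(t : ℂ) * (Real.exp (-(t * u)) : ℂ)) u := by
  have : HasDerivAt (fun u : ℝ => Real.exp (-(t * u))) (-t * Real.exp (-(t * u))) u :=
    ((((hasDerivAt_id u).const_mul t).neg).exp).congr_deriv (by simp; ring)
  exact this.ofReal_comp.congr_deriv (by push_cast; ring)

lemma phi_trap_bound (s : ℂ) (t : ℝ) (ht : 0 ≤ t) (hs : -2 < s.re) (a : ℝ) (ha : 0 < a) :
    ‖trapT (phi s t) a‖ ≤ (‖s‖ * ‖s + 1‖ + 2 * ‖s‖ + 2) * a ^ (-(s.re + 2)) := by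
  set E : ℝ → ℂ := fun u => (Real.exp (-(t * u)) : ℂ) with hE
  refine trapT_bound (phi s t)
    (fun u => (-s * (u : ℂ) ^ (-s - 1) - t * (u : ℂ) ^ (-s)) * E u)
    (fun u => (s * (s + 1) * (u : ℂ) ^ (-s - 1 - 1) + 2 * s * t * (u : ℂ) ^ (-s - 1)
      + t ^ 2 * (u : ℂ) ^ (-s)) * E u) a _ ?_ ?_ ?_ ?_
  · intro u hu
    have hu0 : 0 < u := lt_of_lt_of_le ha hu.1
    exact ((hasDerivAt_real_cpow (-s) hu0).mul (hasDerivAt_exp_neg_mul t u)).congr_deriv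
      (by simp only [hE]; ring)
  · intro u hu
    have hu0 : 0 < u := lt_of_lt_of_le ha hu.1
    exact ((((hasDerivAt_real_cpow (-s - 1) hu0).const_mul (-s)).sub
      ((hasDerivAt_real_cpow (-s) hu0).const_mul (t : ℂ))).mul
      (hasDerivAt_exp_neg_mul t u)).congr_deriv (by simp only [hE, Pi.sub_apply]; ring)
  · intro u hu
    have hu0 : 0 < u := lt_of_lt_of_le ha hu.1
    have c : ∀ r : ℂ, ContinuousAt (fun u : ℝ => (u : ℂ) ^ r) u :=
      fun r => (hasDerivAt_real_cpow r hu0).continuousAt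
    exact (((((c _).const_mul _).add ((c _).const_mul _)).add ((c _).const_mul _)).mul
      (hasDerivAt_exp_neg_mul t u).continuousAt).continuousWithinAt
  · intro u hu
    have hu0 : 0 < u := lt_of_lt_of_le ha hu.1
    have huc : (u : ℂ) ≠ 0 := by exact_mod_cast hu0.ne'
    have e1 : (u : ℂ) ^ (-s - 1) = (u : ℂ) ^ (-s - 1 - 1) * u := by
      rw [cpow_sub (-s - 1) 1 huc, cpow_one]; field_simp
    have e2 : (u : ℂ) ^ (-s) = (u : ℂ) ^ (-s - 1 - 1) * u ^ 2 := by
      rw [cpow_sub _ 1 huc, cpow_sub _ 1 huc, cpow_one]; field_simp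
    have n1 : ‖(u : ℂ) ^ (-s - 1 - 1)‖ = u ^ (-(s.re + 2)) := by
      rw [Complex.norm_cpow_eq_rpow_re_of_pos hu0]; congr 1; simp; ring
    set y := t * u with hy
    have hy0 : 0 ≤ y := by positivity
    have x1 : Real.exp (-y) ≤ 1 := by simpa using hy0
    have x2 : y * Real.exp (-y) ≤ 1 := by
      rw [Real.exp_neg, ← div_eq_mul_inv, div_le_one (Real.exp_pos _)]
      linarith [Real.add_one_le_exp y]
    have x3 : y ^ 2 * Real.exp (-y) ≤ 2 := by
      rw [Real.exp_neg, ← div_eq_mul_inv, div_le_iff₀ (Real.exp_pos _)]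
      nlinarith [Real.quadratic_le_exp_of_nonneg hy0]
    have e3 : (s * (s + 1) * (u : ℂ) ^ (-s - 1 - 1) + 2 * s * t * (u : ℂ) ^ (-s - 1)
      + t ^ 2 * (u : ℂ) ^ (-s)) * E u = (u : ℂ) ^ (-s - 1 - 1) *
        (s * (s + 1) * (Real.exp (-y) : ℝ) + 2 * s * (y * Real.exp (-y) : ℝ) +
          (y ^ 2 * Real.exp (-y) : ℝ)) := by
      simp only [hE]
      rw [e1, e2, hy]; push_cast; ring
    rw [e3, norm_mul, n1, mul_comm]
    have b1 : u ^ (-(s.re + 2)) ≤ a ^ (-(s.re + 2)) :=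
      Real.rpow_le_rpow_of_nonpos ha hu.1 (by linarith)
    refine mul_le_mul ?_ b1 (by positivity) (by positivity)
    refine (norm_add₃_le).trans ?_
    have q : ∀ r : ℝ, 0 ≤ r → ‖(r : ℂ)‖ = r := fun r hr => by
      rw [Complex.norm_real, Real.norm_of_nonneg hr]
    rw [norm_mul, norm_mul, norm_mul, norm_mul, q _ (by positivity), q _ (by positivity),
      q _ (by positivity)]
    simp only [Complex.norm_ofNat]
    have := mul_le_mul_of_nonneg_left x1 (by positivity : 0 ≤ ‖s‖ * ‖s + 1‖)
    have := mul_le_mul_of_nonneg_left x2 (by positivity : 0 ≤ 2 * ‖s‖)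
    linarith

lemma phi_zero (s : ℂ) (u : ℝ) : phi s 0 u = (u : ℂ) ^ (-s) := by simp [phi]

lemma summable_add_one_rpow {p : ℝ} (hp : p < -1) : Summable fun n : ℕ => ((n : ℝ) + 1) ^ p := by
  have := (summable_nat_add_iff 1).2 (Real.summable_nat_rpow.2 hp)
  simpa using this

lemma phi_trap_summable (s : ℂ) (t : ℝ) (ht : 0 ≤ t) (hs : -1 < s.re) :
    Summable fun n : ℕ => trapT (phi s t) ((n : ℝ) + 1) := by
  refine Summable.of_norm_bounded
    ((summable_add_one_rpow (p := -(s.re + 2)) (by linarith)).mul_left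
      (‖s‖ * ‖s + 1‖ + 2 * ‖s‖ + 2)) fun n => ?_
  exact phi_trap_bound s t ht (by linarith) _ (by positivity)

lemma zeta_rep_gt (s : ℂ) (hs : 1 < s.re) :
    riemannZeta s = 1 / (s - 1) + 1 / 2 + ∑' n : ℕ, trapT (phi s 0) ((n : ℝ) + 1) := by
  have e0 : ∀ n : ℕ, phi s 0 ((n : ℝ) + 1) = 1 / ((n : ℂ) + 1) ^ s := by
    intro n; rw [phi_zero, cpow_neg]; push_cast; rw [one_div]
  have hi : IntegrableOn (phi s 0) (Set.Ioi 1) := by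
    have := integrableOn_Ioi_cpow_of_lt (a := -s) (by simpa using hs) zero_lt_one
    exact this.congr_fun (fun u _ => (phi_zero s u).symm) measurableSet_Ioi
  have hsum : Summable fun n : ℕ => phi s 0 ((n : ℝ) + 1) := by
    have := (summable_nat_add_iff 1).2 (Complex.summable_one_div_nat_cpow.2 hs)
    simp_rw [e0]
    simpa using this
  rw [trapT_tsum _ hi hsum (phi_trap_summable s 0 le_rfl (by linarith))]
  simp_rw [e0]
  rw [← zeta_eq_tsum_one_div_nat_add_one_cpow hs]
  have h1 : phi s 0 1 = 1 := by simp [phi_zero]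
  have h2 : ∫ u in Set.Ioi (1 : ℝ), phi s 0 u = 1 / (s - 1) := by
    simp_rw [phi_zero]
    rw [integral_Ioi_cpow_of_lt (by simpa using hs) zero_lt_one]
    rw [ofReal_one, one_cpow, neg_div, ← div_neg]; congr 1; ring
  rw [h1, h2]; ring

lemma trap_closed (s : ℂ) (a : ℝ) (ha : 0 < a) :
    (s - 1) * trapT (phi s 0) a = (s - 1) * ((a : ℂ) ^ (-s) + ((a + 1 : ℝ) : ℂ) ^ (-s)) / 2
      + (((a + 1 : ℝ) : ℂ) ^ (1 - s) - (a : ℂ) ^ (1 - s)) := by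
  by_cases h : s = 1
  · subst h; simp
  have h' : s - 1 ≠ 0 := sub_ne_zero.2 h
  unfold trapT
  simp_rw [phi_zero]
  rw [integral_cpow]
  · have : -s + 1 = 1 - s := by ring
    rw [this]
    have h2 : 1 - s ≠ 0 := fun h3 => h' (by linear_combination -h3)
    field_simp
    ring
  · right
    refine ⟨fun h3 => h (by linear_combination -h3), ?_⟩
    rw [Set.uIcc_of_le (by linarith)]
    intro h; linarith [h.1]

lemma zeta_rep (s : ℂ) (hs : -3 / 4 < s.re) (hs3 : ‖s‖ < 3) (h1 : s ≠ 1) :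
    riemannZeta s = 1 / (s - 1) + 1 / 2 + ∑' n : ℕ, trapT (phi s 0) ((n : ℝ) + 1) := by
  set U : Set ℂ := {s : ℂ | -3 / 4 < s.re} ∩ Metric.ball 0 3 with hU
  have Uo : IsOpen U := (isOpen_lt continuous_const Complex.continuous_re).inter Metric.isOpen_ball
  have Uc : Convex ℝ U := (convex_halfSpace_re_gt _).inter (convex_ball _ _)
  have d1 : DifferentiableOn ℂ (fun s : ℂ => ∑' n : ℕ, (s - 1) * trapT (phi s 0) ((n : ℝ) + 1)) U := by
    refine differentiableOn_tsum_of_summable_norm (u := fun n : ℕ => 80 * ((n : ℝ) + 1) ^ (-(5 / 4) : ℝ))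
      ((summable_add_one_rpow (by norm_num)).mul_left _) ?_ Uo ?_
    · intro n
      have hn : (0 : ℝ) < (n : ℝ) + 1 := by positivity
      refine DifferentiableOn.congr (f := fun s : ℂ => (s - 1) * ((((n : ℝ) + 1 : ℝ) : ℂ) ^ (-s) +
        ((((n : ℝ) + 1) + 1 : ℝ) : ℂ) ^ (-s)) / 2
        + (((((n : ℝ) + 1) + 1 : ℝ) : ℂ) ^ (1 - s) - (((n : ℝ) + 1 : ℝ) : ℂ) ^ (1 - s))) ?_
        (fun s _ => trap_closed s _ hn)
      have c1 : (((n : ℝ) + 1 : ℝ) : ℂ) ≠ 0 := by exact_mod_cast hn.ne'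
      have c2 : ((((n : ℝ) + 1) + 1 : ℝ) : ℂ) ≠ 0 := by exact_mod_cast (by positivity : ((n : ℝ) + 1) + 1 ≠ 0)
      intro s _
      apply DifferentiableAt.differentiableWithinAt
      have g : ∀ (c : ℂ) (f : ℂ → ℂ), c ≠ 0 → DifferentiableAt ℂ f s →
          DifferentiableAt ℂ (fun s => c ^ (f s)) s := fun c f hc hf => hf.const_cpow (Or.inl hc)
      have g1 := g _ (fun s => -s) c1 (by fun_prop)
      have g2 := g _ (fun s => -s) c2 (by fun_prop)
      have g3 := g _ (fun s => 1 - s) c1 (by fun_prop)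
      have g4 := g _ (fun s => 1 - s) c2 (by fun_prop)
      fun_prop
    · intro n w hw
      have hw1 : -3 / 4 < w.re := hw.1
      have hw2 : ‖w‖ < 3 := by simpa using hw.2
      have b := phi_trap_bound w 0 le_rfl (by linarith) ((n : ℝ) + 1) (by positivity)
      have b2 : ((n : ℝ) + 1) ^ (-(w.re + 2)) ≤ ((n : ℝ) + 1) ^ (-(5 / 4) : ℝ) :=
        Real.rpow_le_rpow_of_exponent_le (by linarith [(Nat.cast_nonneg n : (0 : ℝ) ≤ n)]) (by linarith)
      have b3 : ‖w + 1‖ ≤ 4 := (norm_add_le _ _).trans (by rw [norm_one]; linarith)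
      have b4 : ‖w - 1‖ ≤ 4 := (norm_sub_le _ _).trans (by rw [norm_one]; linarith)
      have b5 : ‖w‖ * ‖w + 1‖ + 2 * ‖w‖ + 2 ≤ 20 := by
        nlinarith [norm_nonneg w, norm_nonneg (w + 1)]
      rw [norm_mul]
      calc ‖w - 1‖ * ‖trapT (phi w 0) ((n : ℝ) + 1)‖
          ≤ 4 * (20 * ((n : ℝ) + 1) ^ (-(5 / 4) : ℝ)) := by
            refine mul_le_mul b4 (b.trans ?_) (norm_nonneg _) (by norm_num)
            exact mul_le_mul b5 b2 (by positivity) (by norm_num)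
        _ = _ := by ring
  have d2 : DifferentiableOn ℂ (fun s : ℂ => 1 + (s - 1) / 2 +
      ∑' n : ℕ, (s - 1) * trapT (phi s 0) ((n : ℝ) + 1)) U := by
    refine DifferentiableOn.add (by fun_prop) d1
  have key := (differentiable_riemannZeta₁.differentiableOn.analyticOnNhd
    Uo).eqOn_of_preconnected_of_eventuallyEq (d2.analyticOnNhd Uo) Uc.isPreconnected (z₀ := 2)
    ⟨by norm_num, by simp; norm_num⟩ ?_
  · have := key (x := s) ⟨hs, by simpa using hs3⟩
    have h' : s - 1 ≠ 0 := sub_ne_zero.2 h1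
    rw [riemannZeta_eq_inv_sub_mul h1, this]
    simp only
    rw [tsum_mul_left]
    field_simp
  · have : {s : ℂ | 1 < s.re} ∈ 𝓝 (2 : ℂ) :=
      (isOpen_lt continuous_const Complex.continuous_re).mem_nhds (by simp)
    filter_upwards [this] with w hw
    have hw1 : w ≠ 1 := by rintro rfl; simp at hw
    have h' : w - 1 ≠ 0 := sub_ne_zero.2 hw1
    have := zeta_rep_gt w hw
    rw [riemannZeta_eq_inv_sub_mul hw1] at this
    rw [tsum_mul_left]
    field_simp at this
    linear_combination this / 2



lemma phi_norm (s : ℂ) (t u : ℝ) (hu : 0 < u) : ‖phi s t u‖ = u ^ (-s.re) * Real.exp (-(t * u)) := by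
  unfold phi
  rw [norm_mul, Complex.norm_cpow_eq_rpow_re_of_pos hu, Complex.norm_real,
    Real.norm_of_nonneg (Real.exp_pos _).le]; simp

lemma phi_continuousOn (s : ℂ) (t : ℝ) : ContinuousOn (phi s t) (Set.Ioi 0) := fun u hu =>
  ((hasDerivAt_real_cpow (-s) hu).mul (hasDerivAt_exp_neg_mul t u)).continuousAt.continuousWithinAt

lemma phi_tendsto (s : ℂ) (u : ℝ) : Tendsto (fun t => phi s t u) (𝓝[>] 0) (𝓝 (phi s 0 u)) := by
  have : Continuous fun t : ℝ => phi s t u := by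
    unfold phi
    have : Continuous fun t : ℝ => (Real.exp (-(t * u)) : ℂ) := by fun_prop
    fun_prop
  exact (this.tendsto 0).mono_left nhdsWithin_le_nhds

lemma phi_integral_tendsto (s : ℂ) (hs : s.re < 1) (a b : ℝ) (ha : 0 ≤ a) (hab : a ≤ b) :
    Tendsto (fun t => ∫ u in a..b, phi s t u) (𝓝[>] 0) (𝓝 (∫ u in a..b, phi s 0 u)) := by
  refine intervalIntegral.tendsto_integral_filter_of_dominated_convergence
    (fun u => u ^ (-s.re)) ?_ ?_ ?_ ?_
  · refine Eventually.of_forall fun t => ?_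
    rw [Set.uIoc_of_le hab]
    exact ((phi_continuousOn s t).mono fun u hu => lt_of_le_of_lt ha hu.1).aestronglyMeasurable
      measurableSet_Ioc
  · filter_upwards [self_mem_nhdsWithin] with t ht
    refine Eventually.of_forall fun u hu => ?_
    rw [Set.uIoc_of_le hab] at hu
    have hu0 : 0 < u := lt_of_le_of_lt ha hu.1
    rw [phi_norm s t u hu0]
    have ht' : 0 < t := ht
    have : Real.exp (-(t * u)) ≤ 1 := by rw [Real.exp_le_one_iff]; nlinarith
    exact mul_le_of_le_one_right (by positivity) this
  · exact intervalIntegral.intervalIntegrable_rpow' (by linarith)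
  · exact Eventually.of_forall fun u _ => phi_tendsto s u

lemma phi_trap_tendsto (s : ℂ) (hs : s.re < 1) (a : ℝ) (ha : 0 ≤ a) :
    Tendsto (fun t => trapT (phi s t) a) (𝓝[>] 0) (𝓝 (trapT (phi s 0) a)) := by
  unfold trapT
  exact (((phi_tendsto s _).add (phi_tendsto s _)).div_const 2).sub
    (phi_integral_tendsto s hs a _ ha (by linarith))

lemma phi_integral (s : ℂ) (hs : s.re < 1) (t : ℝ) (ht : 0 < t) :
    ∫ u in Set.Ioi 0, phi s t u = (1 / (t : ℂ)) ^ (1 - s) * Complex.Gamma (1 - s) := by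
  rw [← Complex.integral_cpow_mul_exp_neg_mul_Ioi (by simpa using hs) (by simpa using ht)]
  refine setIntegral_congr_fun measurableSet_Ioi fun u _ => ?_
  simp only [phi]
  push_cast
  congr 2; ring

lemma phi_integrable (s : ℂ) (hs : s.re < 1) (t : ℝ) (ht : 0 < t) :
    IntegrableOn (phi s t) (Set.Ioi 0) := by
  refine MeasureTheory.Integrable.of_integral_ne_zero ?_
  rw [phi_integral s hs t ht]
  refine mul_ne_zero ?_ (Complex.Gamma_ne_zero_of_re_pos (by simpa using hs))
  have : (1 / (t : ℂ)) ≠ 0 := one_div_ne_zero (by exact_mod_cast ht.ne')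
  simp [cpow_eq_zero_iff, ht.ne']

lemma phi_summable (s : ℂ) (hs : -1 < s.re) (t : ℝ) (ht : 0 < t) :
    Summable fun n : ℕ => phi s t ((n : ℝ) + 1) := by
  have := (summable_nat_add_iff 1).2 (Real.summable_pow_mul_exp_neg_nat_mul 1 ht)
  refine Summable.of_norm_bounded this fun n => ?_
  rw [phi_norm s t _ (by positivity)]
  push_cast
  have h : ((n : ℝ) + 1) ^ (-s.re) ≤ ((n : ℝ) + 1) ^ (1 : ℝ) :=
    Real.rpow_le_rpow_of_exponent_le (by linarith [(Nat.cast_nonneg n : (0 : ℝ) ≤ n)]) (by linarith)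
  rw [Real.rpow_one] at h
  rw [pow_one, neg_mul]
  gcongr

lemma reg_limit (s : ℂ) (hs : -3 / 4 < s.re) (hs3 : ‖s‖ < 3) (h1 : s.re < 1) :
    Tendsto (fun t : ℝ => ∑' n : ℕ, phi s t ((n : ℝ) + 1) -
      (1 / (t : ℂ)) ^ (1 - s) * Complex.Gamma (1 - s)) (𝓝[>] 0) (𝓝 (riemannZeta s)) := by
  have hs1 : s ≠ 1 := by rintro rfl; simp at h1
  have hT : Tendsto (fun t : ℝ => ∑' n : ℕ, trapT (phi s t) ((n : ℝ) + 1)) (𝓝[>] 0)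
      (𝓝 (∑' n : ℕ, trapT (phi s 0) ((n : ℝ) + 1))) := by
    refine tendsto_tsum_of_dominated_convergence
      ((summable_add_one_rpow (p := -(s.re + 2)) (by linarith)).mul_left
      (‖s‖ * ‖s + 1‖ + 2 * ‖s‖ + 2)) (fun n => phi_trap_tendsto s h1 _ (by positivity)) ?_
    filter_upwards [self_mem_nhdsWithin] with t ht n
    exact phi_trap_bound s t (le_of_lt ht) (by linarith) _ (by positivity)
  have h01 := phi_integral_tendsto s h1 0 1 le_rfl zero_le_one
  have hp := (phi_tendsto s 1).div_const 2
  have hz := (hT.add hp).sub h01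
  have hval : ∑' n : ℕ, trapT (phi s 0) ((n : ℝ) + 1) + phi s 0 1 / 2 - ∫ u in (0 : ℝ)..1, phi s 0 u
      = riemannZeta s := by
    rw [zeta_rep s hs hs3 hs1]
    have e : ∫ u in (0 : ℝ)..1, phi s 0 u = 1 / (1 - s) := by
      simp_rw [phi_zero]
      rw [integral_cpow (Or.inl (by simpa using h1))]
      have h2 : 1 - s ≠ 0 := sub_ne_zero.2 hs1.symm
      have : -s + 1 = 1 - s := by ring
      rw [this]; simp [zero_cpow h2]
    rw [e, phi_zero]
    have h2 : 1 - s ≠ 0 := sub_ne_zero.2 hs1.symm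
    have h3 : s - 1 ≠ 0 := sub_ne_zero.2 hs1
    simp
    have : (1 - s)⁻¹ = - (s - 1)⁻¹ := by rw [← inv_neg]; congr 1; ring
    rw [this]; ring
  rw [hval] at hz
  refine hz.congr' ?_
  filter_upwards [self_mem_nhdsWithin] with t ht
  have ht' : 0 < t := ht
  have hI := phi_integrable s h1 t ht'
  have hI1 : IntegrableOn (phi s t) (Set.Ioi 1) := hI.mono_set (Set.Ioi_subset_Ioi zero_le_one)
  rw [trapT_tsum _ hI1 (phi_summable s (by linarith) t ht')
    (phi_trap_summable s t ht'.le (by linarith)), ← phi_integral s h1 t ht']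
  have := intervalIntegral.integral_interval_add_Ioi (a := 0) (b := 1) (f := phi s t) (μ := volume) hI hI1
  rw [← this]; ring

noncomputable def psi (c : ℝ) (u : ℝ) : ℂ := ((Real.exp (-(c * √u)) : ℝ) : ℂ)

lemma hasDerivAt_psi_real (c : ℝ) {u : ℝ} (hu : 0 < u) :
    HasDerivAt (fun u : ℝ => Real.exp (-(c * √u))) (-(c / (2 * √u)) * Real.exp (-(c * √u))) u := by
  exact ((((Real.hasDerivAt_sqrt hu.ne').const_mul c).neg).exp).congr_deriv (by simp only [Pi.neg_apply]; ring)

lemma psi_trap_bound (c : ℝ) (hc : 0 < c) (a : ℝ) (ha : 0 < a) :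
    ‖trapT (psi c) a‖ ≤ c * a ^ (-(3 / 2) : ℝ) := by
  refine trapT_bound (psi c)
    (fun u => ((-(c / (2 * √u)) * Real.exp (-(c * √u)) : ℝ) : ℂ))
    (fun u => (((c ^ 2 / (4 * u) + c / (4 * u * √u)) * Real.exp (-(c * √u)) : ℝ) : ℂ)) a _ ?_ ?_ ?_ ?_
  · intro u hu
    exact (hasDerivAt_psi_real c (lt_of_lt_of_le ha hu.1)).ofReal_comp
  · intro u hu
    have hu0 : 0 < u := lt_of_lt_of_le ha hu.1
    have hsq : 0 < √u := Real.sqrt_pos.2 hu0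
    have h1 : HasDerivAt (fun u : ℝ => -(c / (2 * √u))) (c / (4 * u * √u)) u := by
      have := ((Real.hasDerivAt_sqrt hu0.ne').const_mul 2).inv (by positivity)
      refine ((this.const_mul c).neg).congr_deriv ?_
      field_simp
      rw [Real.sq_sqrt hu0.le]; ring
    refine ((h1.mul (hasDerivAt_psi_real c hu0)).congr_deriv ?_).ofReal_comp
    field_simp
    linear_combination (-4 * c) * (Real.sq_sqrt hu0.le)
  · intro u hu
    have hu0 : 0 < u := lt_of_lt_of_le ha hu.1
    have hsq : 0 < √u := Real.sqrt_pos.2 hu0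
    apply ContinuousAt.continuousWithinAt
    apply Complex.continuous_ofReal.continuousAt.comp
    fun_prop (disch := positivity)
  · intro u hu
    have hu0 : 0 < u := lt_of_lt_of_le ha hu.1
    have hsq : 0 < √u := Real.sqrt_pos.2 hu0
    rw [Complex.norm_real, Real.norm_of_nonneg (by positivity)]
    have e : u ^ (-(3 / 2) : ℝ) = 1 / (u * √u) := by
      rw [Real.rpow_neg hu0.le, one_div]
      congr 1
      rw [Real.sqrt_eq_rpow, ← Real.rpow_one_add' hu0.le (by norm_num)]; norm_num
    have b1 : u ^ (-(3 / 2) : ℝ) ≤ a ^ (-(3 / 2) : ℝ) :=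
      Real.rpow_le_rpow_of_nonpos ha hu.1 (by norm_num)
    refine le_trans ?_ (mul_le_mul_of_nonneg_left b1 hc.le)
    rw [e]
    set y := c * √u with hy
    have hy0 : 0 ≤ y := by positivity
    have x1 : Real.exp (-y) ≤ 1 := by simpa using hy0
    have x2 : y * Real.exp (-y) ≤ 1 := by
      rw [Real.exp_neg, ← div_eq_mul_inv, div_le_one (Real.exp_pos _)]
      linarith [Real.add_one_le_exp y]
    have : (c ^ 2 / (4 * u) + c / (4 * u * √u)) * Real.exp (-y) =
        (c * (1 / (u * √u))) * ((y * Real.exp (-y) + Real.exp (-y)) / 4) := by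
      rw [hy]; field_simp
    rw [this]
    exact mul_le_of_le_one_right (by positivity) (by linarith)

lemma psi_trap_tendsto (a : ℝ) (ha : 0 ≤ a) :
    Tendsto (fun c : ℝ => trapT (psi c) a / c) (𝓝[>] 0) (𝓝 (-trapT (phi (-1 / 2) 0) a)) := by
  have hp : ∀ u : ℝ, 0 ≤ u → phi (-1 / 2) 0 u = ((√u : ℝ) : ℂ) := by
    intro u hu
    rw [phi_zero, Real.sqrt_eq_rpow, Complex.ofReal_cpow hu]; norm_num
  have hle : a ≤ a + 1 := by linarith
  have pt : ∀ u : ℝ, 0 ≤ u → Tendsto (fun c : ℝ => (psi c u - 1) / c) (𝓝[>] 0)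
      (𝓝 (-phi (-1 / 2) 0 u)) := by
    intro u hu
    rw [hp u hu]
    have hd : HasDerivAt (fun c : ℝ => Real.exp (-(c * √u))) (-√u) 0 := by
      exact ((((hasDerivAt_id (0 : ℝ)).mul_const (√u)).neg).exp).congr_deriv (by simp)
    have := hd.tendsto_slope.mono_left
      (nhdsWithin_mono (0 : ℝ) (fun c (hc : c ∈ Set.Ioi 0) => ne_of_gt hc))
    have := (Complex.continuous_ofReal.tendsto (-√u)).comp this
    rw [Complex.ofReal_neg] at this
    refine this.congr fun c => ?_
    simp [slope, psi]; ring
  have int : Tendsto (fun c : ℝ => ∫ u in a..(a + 1), (psi c u - 1) / c) (𝓝[>] 0)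
      (𝓝 (∫ u in a..(a + 1), -phi (-1 / 2) 0 u)) := by
    refine intervalIntegral.tendsto_integral_filter_of_dominated_convergence
      (fun u => √u) ?_ ?_ ?_ ?_
    · refine Eventually.of_forall fun c => ?_
      apply Continuous.aestronglyMeasurable
      unfold psi; fun_prop
    · filter_upwards [self_mem_nhdsWithin] with c hc
      have hc' : 0 < c := hc
      refine Eventually.of_forall fun u hu => ?_
      have : (psi c u - 1) / c = (((Real.exp (-(c * √u)) - 1) / c : ℝ) : ℂ) := by
        simp [psi]
      rw [this, Complex.norm_real, Real.norm_eq_abs, abs_div, abs_of_pos hc', div_le_iff₀ hc', abs_le]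
      have := Real.add_one_le_exp (-(c * √u))
      have h0 : 0 ≤ c * √u := by positivity
      have : Real.exp (-(c * √u)) ≤ 1 := by simpa using h0
      constructor <;> linarith
    · exact Real.continuous_sqrt.intervalIntegrable _ _
    · refine Eventually.of_forall fun u hu => pt u ?_
      rw [Set.uIoc_of_le hle] at hu
      linarith [hu.1]
  have tot := (((pt a ha).add (pt (a + 1) (by linarith))).div_const 2).sub int
  have e1 : (-phi (-1 / 2) 0 a + -phi (-1 / 2) 0 (a + 1)) / 2 - ∫ u in a..(a + 1), -phi (-1 / 2) 0 u
      = -trapT (phi (-1 / 2) 0) a := by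
    rw [intervalIntegral.integral_neg]; unfold trapT; ring
  rw [e1] at tot
  refine tot.congr fun c => ?_
  have ci : Continuous (psi c) := by unfold psi; fun_prop
  rw [intervalIntegral.integral_div, intervalIntegral.integral_sub (ci.intervalIntegrable _ _)
    (by simp)]
  unfold trapT
  simp
  ring

lemma psi_integral (c : ℝ) (hc : 0 < c) : IntegrableOn (psi c) (Set.Ioi 1) ∧
    ∫ u in Set.Ioi 1, psi c u = (((2 / c + 2 / c ^ 2) * Real.exp (-c) : ℝ) : ℂ) := by
  set G : ℝ → ℝ := fun u => -(2 / c) * ((√u + 1 / c) * Real.exp (-(c * √u))) with hG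
  have hd : ∀ u ∈ Set.Ici (1 : ℝ), HasDerivAt G (Real.exp (-(c * √u))) u := by
    intro u hu
    have hu0 : (0 : ℝ) < u := lt_of_lt_of_le one_pos hu
    have hsq : 0 < √u := Real.sqrt_pos.2 hu0
    refine ((((Real.hasDerivAt_sqrt hu0.ne').add_const (1 / c)).mul
      (hasDerivAt_psi_real c hu0)).const_mul (-(2 / c))).congr_deriv ?_
    field_simp
    ring
  have hlim : Tendsto G atTop (𝓝 0) := by
    have h1 : Tendsto (fun y : ℝ => -(2 / c) * ((y + 1 / c) * Real.exp (-(c * y)))) atTop (𝓝 0) := by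
      have a1 := Real.tendsto_pow_mul_exp_neg_atTop_nhds_zero 1
      have a2 := Real.tendsto_exp_neg_atTop_nhds_zero
      have hcy : Tendsto (fun y : ℝ => c * y) atTop atTop := tendsto_id.const_mul_atTop hc
      have := (((a1.comp hcy).add (a2.comp hcy)).const_mul (-(2 / c) * (1 / c)))
      simp only [add_zero, mul_zero] at this
      refine this.congr fun y => ?_
      simp only [Function.comp, pow_one]
      field_simp
    exact h1.comp Real.tendsto_sqrt_atTop
  have hi := integrableOn_Ioi_deriv_of_nonneg' hd (fun u _ => (Real.exp_pos _).le) hlim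
  have hv := integral_Ioi_of_hasDerivAt_of_nonneg' hd (fun u _ => (Real.exp_pos _).le) hlim
  refine ⟨hi.ofReal, ?_⟩
  unfold psi
  rw [integral_complex_ofReal, hv]
  congr 1
  simp [hG]; field_simp

lemma psi_summable (c : ℝ) (hc : 0 < c) : Summable fun n : ℕ => psi c ((n : ℝ) + 1) := by
  refine Summable.of_norm_bounded
    ((summable_add_one_rpow (p := -2) (by norm_num)).mul_left (24 / c ^ 4)) fun n => ?_
  have hn : (0 : ℝ) < (n : ℝ) + 1 := by positivity
  unfold psi
  rw [Complex.norm_real, Real.norm_of_nonneg (Real.exp_pos _).le]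
  have h := Real.pow_div_factorial_le_exp (c * √((n : ℝ) + 1)) (by positivity) 4
  rw [Real.exp_neg, Real.rpow_neg hn.le]
  have e : (c * √((n : ℝ) + 1)) ^ 4 = c ^ 4 * ((n : ℝ) + 1) ^ 2 := by
    rw [mul_pow]; congr 1
    rw [show (4 : ℕ) = 2 * 2 from rfl, pow_mul, Real.sq_sqrt hn.le]
  rw [e] at h
  have h2 : ((n : ℝ) + 1) ^ (2 : ℝ) = ((n : ℝ) + 1) ^ 2 := Real.rpow_natCast _ 2
  rw [h2]
  have : 24 / c ^ 4 * (((n : ℝ) + 1) ^ 2)⁻¹ = (c ^ 4 * ((n : ℝ) + 1) ^ 2 / (Nat.factorial 4 : ℝ))⁻¹ := by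
    simp [Nat.factorial]; field_simp
  rw [this]
  exact inv_anti₀ (by positivity) h

lemma elem_limit : Tendsto (fun c : ℝ => (Real.exp (-c) / 2 + 1 / 2 +
    (2 / c + 2 / c ^ 2) * Real.exp (-c) - 2 / c ^ 2) / c) (𝓝[>] 0) (𝓝 (1 / 6)) := by
  rw [tendsto_iff_norm_sub_tendsto_zero]
  refine squeeze_zero' (Eventually.of_forall fun _ => norm_nonneg _) (g := fun c : ℝ => 10 * c) ?_ ?_
  · have : Set.Ioo (0 : ℝ) 1 ∈ 𝓝[>] (0 : ℝ) := Ioo_mem_nhdsGT one_pos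
    filter_upwards [this] with c hc
    obtain ⟨h0, h1⟩ := hc
    have hb := Real.exp_bound (x := -c) (by rw [abs_neg, abs_of_pos h0]; exact h1.le) (n := 4) (by norm_num)
    rw [abs_neg, abs_of_pos h0] at hb
    simp [Finset.sum_range_succ, Nat.factorial] at hb
    set r := Real.exp (-c) - (1 + -c + c ^ 2 / 2 + (-c) ^ 3 / 6) with hr
    have hb' : |r| ≤ c ^ 4 := hb.trans (by nlinarith [pow_pos h0 4])
    have he : Real.exp (-c) = r + (1 + -c + c ^ 2 / 2 + (-c) ^ 3 / 6) := by rw [hr]; ring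
    rw [he, Real.norm_eq_abs]
    have : ((r + (1 + -c + c ^ 2 / 2 + (-c) ^ 3 / 6)) / 2 + 1 / 2 + (2 / c + 2 / c ^ 2) *
        (r + (1 + -c + c ^ 2 / 2 + (-c) ^ 3 / 6)) - 2 / c ^ 2) / c - 1 / 6
        = (r * (c ^ 2 / 2 + 2 * c + 2) + c ^ 4 * (-1 / 12 - c / 12)) / c ^ 3 := by
      field_simp; ring
    rw [this, abs_div, abs_of_pos (pow_pos h0 3), div_le_iff₀ (pow_pos h0 3)]
    refine (abs_add_le _ _).trans ?_
    rw [abs_mul, abs_mul, abs_of_pos (pow_pos h0 4), abs_of_pos (by positivity : 0 < c ^ 2 / 2 + 2 * c + 2)]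
    have q1 : |-1 / 12 - c / 12| ≤ 1 := by rw [abs_le]; constructor <;> linarith
    have q2 : c ^ 2 / 2 + 2 * c + 2 ≤ 5 := by nlinarith
    have q3 := mul_le_mul hb' q2 (by positivity) (by positivity)
    have q4 := mul_le_mul_of_nonneg_left q1 (pow_pos h0 4).le
    nlinarith [pow_pos h0 4]
  · have : Continuous fun c : ℝ => 10 * c := by fun_prop
    have := (this.tendsto 0).mono_left (nhdsWithin_le_nhds (s := Set.Ioi 0))
    simpa using this

lemma sqrt_limit : Tendsto (fun c : ℝ => (∑' n : ℕ, psi c ((n : ℝ) + 1) - 2 / (c : ℂ) ^ 2 + 1 / 2) / c)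
    (𝓝[>] 0) (𝓝 (-riemannZeta (-1 / 2))) := by
  have hT : Tendsto (fun c : ℝ => ∑' n : ℕ, trapT (psi c) ((n : ℝ) + 1) / c) (𝓝[>] 0)
      (𝓝 (∑' n : ℕ, -trapT (phi (-1 / 2) 0) ((n : ℝ) + 1))) := by
    refine tendsto_tsum_of_dominated_convergence
      (summable_add_one_rpow (p := -(3 / 2)) (by norm_num))
      (fun n => psi_trap_tendsto _ (by positivity)) ?_
    filter_upwards [self_mem_nhdsWithin] with c hc n
    have hc' : 0 < c := hc
    rw [norm_div, Complex.norm_real, Real.norm_of_nonneg hc'.le, div_le_iff₀ hc', mul_comm]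
    exact psi_trap_bound c hc' _ (by positivity)
  have hE := (Complex.continuous_ofReal.tendsto _).comp elem_limit
  have := hT.add hE
  have hv : ∑' n : ℕ, -trapT (phi (-1 / 2) 0) ((n : ℝ) + 1) + ((1 / 6 : ℝ) : ℂ)
      = -riemannZeta (-1 / 2) := by
    rw [zeta_rep (-1 / 2) (by norm_num) (by norm_num) (by norm_num), tsum_neg]
    push_cast; ring
  rw [hv] at this
  refine this.congr' ?_
  filter_upwards [self_mem_nhdsWithin] with c hc
  have hc' : 0 < c := hc
  obtain ⟨i1, i2⟩ := psi_integral c hc'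
  have hTs : Summable fun n : ℕ => trapT (psi c) ((n : ℝ) + 1) := by
    refine Summable.of_norm_bounded
      ((summable_add_one_rpow (p := -(3 / 2)) (by norm_num)).mul_left c) fun n => ?_
    exact psi_trap_bound c hc' _ (by positivity)
  rw [tsum_div_const, trapT_tsum _ i1 (psi_summable c hc') hTs, i2]
  have : psi c 1 = ((Real.exp (-c) : ℝ) : ℂ) := by simp [psi]
  rw [this]
  simp only [Function.comp]
  push_cast
  ring



noncomputable def gE (z : ℝ) : ℝ := ∫ s in (0 : ℝ)..z, Real.exp (-s ^ 2)

lemma gE_deriv (z : ℝ) : HasDerivAt gE (Real.exp (-z ^ 2)) z := by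
  have hc : Continuous fun s : ℝ => Real.exp (-s ^ 2) := by fun_prop
  exact intervalIntegral.integral_hasDerivAt_right (hc.intervalIntegrable _ _)
    (hc.stronglyMeasurableAtFilter _ _) hc.continuousAt

lemma gE_top : Tendsto gE atTop (𝓝 (√π / 2)) := by
  have hi : IntegrableOn (fun s : ℝ => Real.exp (-s ^ 2)) (Set.Ioi 0) := by
    have := (integrable_exp_neg_mul_sq (b := 1) one_pos).integrableOn (s := Set.Ioi 0)
    simpa using this
  have h := intervalIntegral_tendsto_integral_Ioi (0 : ℝ) hi (tendsto_id (α := ℝ) (x := atTop))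
  have hv := integral_gaussian_Ioi 1
  simp only [neg_mul, one_mul, div_one] at hv
  rw [hv] at h
  exact h

lemma gE_neg (z : ℝ) : gE (-z) = -gE z := by
  unfold gE
  have := intervalIntegral.integral_comp_neg (a := 0) (b := z) (fun s : ℝ => Real.exp (-s ^ 2))
  simp only [neg_sq, neg_zero] at this
  rw [this, intervalIntegral.integral_symm]

lemma gE_bot : Tendsto gE atBot (𝓝 (-(√π / 2))) := by
  have := (gE_top.comp tendsto_neg_atBot_atTop).neg
  refine this.congr fun z => ?_
  simp [gE_neg]

noncomputable def hB (B u : ℝ) : ℝ := 1 / √u * Real.exp (-(B / u))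

lemma real_int_ab (a b : ℝ) (ha : 0 < a) (hb : 0 < b) :
    IntegrableOn (fun u => hB (b ^ 2) u * Real.exp (-(a ^ 2 * u))) (Set.Ioi 0) ∧
    ∫ u in Set.Ioi 0, hB (b ^ 2) u * Real.exp (-(a ^ 2 * u)) = √π / a * Real.exp (-(2 * a * b)) := by
  set L0 : ℝ := Real.exp (2 * a * b) * (√π / 2) + Real.exp (-(2 * a * b)) * (-(√π / 2)) with hL0
  set L1 : ℝ := Real.exp (2 * a * b) * (√π / 2) + Real.exp (-(2 * a * b)) * (√π / 2) with hL1
  set G : ℝ → ℝ := fun u => Real.exp (2 * a * b) * gE (a * √u + b / √u) +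
    Real.exp (-(2 * a * b)) * gE (a * √u - b / √u) with hG
  set g : ℝ → ℝ := fun u => if u ≤ 0 then L0 else G u with hg
  have sq0 : Tendsto (fun u : ℝ => √u) (𝓝[>] 0) (𝓝[>] 0) := by
    rw [tendsto_nhdsWithin_iff]
    constructor
    · have := (Real.continuous_sqrt.tendsto 0).mono_left (nhdsWithin_le_nhds (s := Set.Ioi 0))
      simpa using this
    · filter_upwards [self_mem_nhdsWithin] with u hu using Real.sqrt_pos.2 hu
  have bd0 : Tendsto (fun u : ℝ => b / √u) (𝓝[>] 0) atTop := by
    have := (tendsto_inv_nhdsGT_zero.comp sq0).const_mul_atTop hb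
    exact this.congr fun u => by simp [div_eq_mul_inv]
  have as0 : Tendsto (fun u : ℝ => a * √u) (𝓝[>] 0) (𝓝 0) := by
    have := (sq0.mono_right nhdsWithin_le_nhds).const_mul a
    simpa using this
  have G0 : Tendsto G (𝓝[>] 0) (𝓝 L0) := by
    have t1 : Tendsto (fun u : ℝ => a * √u + b / √u) (𝓝[>] 0) atTop := as0.add_atTop bd0
    have t2 : Tendsto (fun u : ℝ => a * √u - b / √u) (𝓝[>] 0) atBot := by
      have := as0.add_atBot (tendsto_neg_atTop_atBot.comp bd0)
      exact this.congr fun u => by simp [sub_eq_add_neg]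
    exact ((gE_top.comp t1).const_mul _).add ((gE_bot.comp t2).const_mul _)
  have GT : Tendsto G atTop (𝓝 L1) := by
    have s1 : Tendsto (fun u : ℝ => a * √u) atTop atTop :=
      Real.tendsto_sqrt_atTop.const_mul_atTop ha
    have s2 : Tendsto (fun u : ℝ => b / √u) atTop (𝓝 0) :=
      Real.tendsto_sqrt_atTop.const_div_atTop b
    have t1 : Tendsto (fun u : ℝ => a * √u + b / √u) atTop atTop := s1.atTop_add s2
    have t2 : Tendsto (fun u : ℝ => a * √u - b / √u) atTop atTop := by
      have := s1.atTop_add s2.neg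
      exact this.congr fun u => by simp [sub_eq_add_neg]
    exact ((gE_top.comp t1).const_mul _).add ((gE_top.comp t2).const_mul _)
  have hcont : ContinuousWithinAt g (Set.Ici 0) 0 := by
    rw [← continuousWithinAt_Ioi_iff_Ici]
    unfold ContinuousWithinAt
    have : g 0 = L0 := by simp [hg]
    rw [this]
    refine G0.congr' ?_
    filter_upwards [self_mem_nhdsWithin] with u hu
    have : ¬ u ≤ 0 := not_le.2 hu
    simp [hg, this]
  have hd : ∀ u ∈ Set.Ioi (0 : ℝ), HasDerivAt g (a * (hB (b ^ 2) u * Real.exp (-(a ^ 2 * u)))) u := by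
    intro u hu
    have hu0 : 0 < u := hu
    have hsq : 0 < √u := Real.sqrt_pos.2 hu0
    have hss : √u ^ 2 = u := Real.sq_sqrt hu0.le
    have e : g =ᶠ[𝓝 u] G := by
      filter_upwards [lt_mem_nhds hu0] with v hv
      have : ¬ v ≤ 0 := not_le.2 hv
      simp [hg, this]
    refine HasDerivAt.congr_of_eventuallyEq ?_ e
    have d1 := (Real.hasDerivAt_sqrt hu0.ne').const_mul a
    have d2 : HasDerivAt (fun u : ℝ => b / √u) (-(b / (2 * u * √u))) u := by
      refine (((Real.hasDerivAt_sqrt hu0.ne').inv hsq.ne').const_mul b).congr_deriv ?_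
      field_simp; rw [hss]
    have d3 := ((gE_deriv (a * √u + b / √u)).comp u (d1.add d2)).const_mul (Real.exp (2 * a * b))
    have d4 := ((gE_deriv (a * √u - b / √u)).comp u (d1.sub d2)).const_mul (Real.exp (-(2 * a * b)))
    refine (d3.add d4).congr_deriv ?_
    have q1 : Real.exp (2 * a * b) * Real.exp (-(a * √u + b / √u) ^ 2) =
        Real.exp (-(b ^ 2 / u)) * Real.exp (-(a ^ 2 * u)) := by
      rw [← Real.exp_add, ← Real.exp_add]; congr 1
      field_simp
      rw [hss]; ring
    have q2 : Real.exp (-(2 * a * b)) * Real.exp (-(a * √u - b / √u) ^ 2) =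
        Real.exp (-(b ^ 2 / u)) * Real.exp (-(a ^ 2 * u)) := by
      rw [← Real.exp_add, ← Real.exp_add]; congr 1
      field_simp
      rw [hss]; ring
    rw [← mul_assoc, ← mul_assoc, q1, q2]
    unfold hB
    field_simp
    ring
  have hpos : ∀ u ∈ Set.Ioi (0 : ℝ), 0 ≤ a * (hB (b ^ 2) u * Real.exp (-(a ^ 2 * u))) := by
    intro u hu; unfold hB; positivity
  have gT : Tendsto g atTop (𝓝 L1) := by
    refine GT.congr' ?_
    filter_upwards [eventually_gt_atTop 0] with u hu
    have : ¬ u ≤ 0 := not_le.2 hu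
    simp [hg, this]
  have r1 := integrableOn_Ioi_deriv_of_nonneg hcont hd hpos gT
  have r2 := integral_Ioi_of_hasDerivAt_of_nonneg hcont hd hpos gT
  refine ⟨?_, ?_⟩
  · have := r1.const_mul (a⁻¹)
    refine this.congr (Eventually.of_forall fun u => ?_)
    field_simp
  · rw [integral_const_mul] at r2
    have : g 0 = L0 := by simp [hg]
    rw [this, hL0, hL1] at r2
    rw [div_mul_eq_mul_div, eq_div_iff ha.ne']
    linarith

lemma real_int (B r : ℝ) (hBp : 0 < B) (hr : 0 < r) :
    IntegrableOn (fun u => hB B u * Real.exp (-(r * u))) (Set.Ioi 0) ∧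
    ∫ u in Set.Ioi 0, hB B u * Real.exp (-(r * u)) = √π / √r * Real.exp (-(2 * √r * √B)) := by
  have := real_int_ab (√r) (√B) (Real.sqrt_pos.2 hr) (Real.sqrt_pos.2 hBp)
  rwa [Real.sq_sqrt hr.le, Real.sq_sqrt hBp.le] at this

lemma hB_cont (B : ℝ) : ContinuousOn (hB B) (Set.Ioi 0) := by
  intro u hu
  have hu0 : 0 < u := hu
  have hsq : 0 < √u := Real.sqrt_pos.2 hu0
  apply ContinuousAt.continuousWithinAt
  unfold hB
  fun_prop (disch := positivity)

lemma hB_nonneg (B u : ℝ) : 0 ≤ hB B u := by unfold hB; positivity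

noncomputable def Kw (B : ℝ) (w : ℂ) (u : ℝ) : ℂ := (hB B u : ℂ) * cexp (-(w * u))

lemma Kw_meas (B : ℝ) (w : ℂ) : AEStronglyMeasurable (Kw B w) (volume.restrict (Set.Ioi 0)) := by
  refine ContinuousOn.aestronglyMeasurable ?_ measurableSet_Ioi
  unfold Kw
  exact (Complex.continuous_ofReal.comp_continuousOn (hB_cont B)).mul (by fun_prop)

lemma Kw_norm (B : ℝ) (w : ℂ) (u : ℝ) : ‖Kw B w u‖ = hB B u * Real.exp (-(w.re * u)) := by
  unfold Kw
  rw [norm_mul, Complex.norm_real, Real.norm_of_nonneg (hB_nonneg B u), Complex.norm_exp]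
  simp

lemma Kw_int (B : ℝ) (hBp : 0 < B) (w : ℂ) (hw : 0 < w.re) : IntegrableOn (Kw B w) (Set.Ioi 0) := by
  refine Integrable.mono' (real_int B w.re hBp hw).1 (Kw_meas B w) ?_
  exact Eventually.of_forall fun u => (Kw_norm B w u).le

lemma Kw_diff (B : ℝ) (hBp : 0 < B) (w : ℂ) (hw : 0 < w.re) :
    DifferentiableAt ℂ (fun w => ∫ u in Set.Ioi 0, Kw B w u) w := by
  set δ := w.re / 2 with hδ
  have hδ0 : 0 < δ := by positivity
  have := hasDerivAt_integral_of_dominated_loc_of_deriv_le (μ := volume.restrict (Set.Ioi (0 : ℝ)))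
    (𝕜 := ℂ) (F := Kw B) (F' := fun w u => -(u : ℂ) * Kw B w u) (x₀ := w)
    (bound := fun u => (2 / δ) * (hB B u * Real.exp (-(δ / 2 * u)))) (s := Metric.ball w δ)
    (Metric.ball_mem_nhds w hδ0) (Eventually.of_forall fun w => Kw_meas B w)
    (Kw_int B hBp w hw) ?_ ?_ ?_ ?_
  · exact this.2.differentiableAt
  · exact (Complex.continuous_ofReal.neg.aestronglyMeasurable).mul (Kw_meas B w)
  · refine (ae_restrict_mem measurableSet_Ioi).mono fun u hu z hz => ?_
    have hu0 : 0 < u := hu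
    have hre : δ < z.re := by
      have h1 : |(z - w).re| ≤ ‖z - w‖ := Complex.abs_re_le_norm _
      have h2 : ‖z - w‖ < δ := by simpa [dist_eq_norm] using hz
      have h3 := abs_lt.1 (lt_of_le_of_lt h1 h2)
      rw [Complex.sub_re] at h3
      have : w.re = 2 * δ := by rw [hδ]; ring
      linarith [h3.1]
    rw [norm_mul, norm_neg, Complex.norm_real, Real.norm_of_nonneg hu0.le, Kw_norm]
    have e1 : Real.exp (-(z.re * u)) ≤ Real.exp (-(δ * u)) := by
      apply Real.exp_le_exp.2; nlinarith
    have e2 : Real.exp (-(δ * u)) = Real.exp (-(δ / 2 * u)) * Real.exp (-(δ / 2 * u)) := by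
      rw [← Real.exp_add]; congr 1; ring
    have e3 : u * Real.exp (-(δ / 2 * u)) ≤ 2 / δ := by
      rw [Real.exp_neg, ← div_eq_mul_inv, div_le_div_iff₀ (Real.exp_pos _) hδ0]
      have := Real.add_one_le_exp (δ / 2 * u)
      nlinarith
    have hp := hB_nonneg B u
    calc u * (hB B u * Real.exp (-(z.re * u))) ≤ u * (hB B u * Real.exp (-(δ * u))) := by gcongr
      _ = (u * Real.exp (-(δ / 2 * u))) * (hB B u * Real.exp (-(δ / 2 * u))) := by rw [e2]; ring
      _ ≤ _ := by gcongr
  · exact ((real_int B (δ / 2) hBp (by positivity)).1).const_mul _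
  · refine Eventually.of_forall fun u z _ => ?_
    unfold Kw
    exact ((((hasDerivAt_id z).mul_const (u : ℂ)).neg.cexp).const_mul _).congr_deriv (by simp; ring)

lemma Kw_integral (B : ℝ) (hBp : 0 < B) (w : ℂ) (hw : 0 < w.re) :
    ∫ u in Set.Ioi 0, Kw B w u =
      (√π : ℂ) * w ^ (-(1 / 2) : ℂ) * cexp (-(2 * w ^ (1 / 2 : ℂ) * √B)) := by
  set U : Set ℂ := {w : ℂ | 0 < w.re}
  have Uo : IsOpen U := isOpen_lt continuous_const Complex.continuous_re
  have Uc : Convex ℝ U := convex_halfSpace_re_gt _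
  have d1 : DifferentiableOn ℂ (fun w => ∫ u in Set.Ioi 0, Kw B w u) U :=
    fun w hw => (Kw_diff B hBp w hw).differentiableWithinAt
  have d2 : DifferentiableOn ℂ (fun w : ℂ => (√π : ℂ) * w ^ (-(1 / 2) : ℂ) *
      cexp (-(2 * w ^ (1 / 2 : ℂ) * √B))) U := by
    intro w hw
    have hs : w ∈ slitPlane := Or.inl hw
    apply DifferentiableAt.differentiableWithinAt
    have c : ∀ r : ℂ, DifferentiableAt ℂ (fun w : ℂ => w ^ r) w := fun r =>
      ((hasDerivAt_id w).cpow_const (c := r) hs).differentiableAt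
    have c1 := c (-(1 / 2))
    have c2 := c (1 / 2)
    fun_prop
  refine (d1.analyticOnNhd Uo).eqOn_of_preconnected_of_frequently_eq (d2.analyticOnNhd Uo)
    Uc.isPreconnected (z₀ := 1) (by simp [U]) ?_ hw
  have ht : Tendsto (fun r : ℝ => (r : ℂ)) (𝓝[≠] 1) (𝓝[≠] 1) := by
    rw [tendsto_nhdsWithin_iff]
    constructor
    · have := (Complex.continuous_ofReal.tendsto 1).mono_left (nhdsWithin_le_nhds (s := {1}ᶜ))
      simpa using this
    · filter_upwards [self_mem_nhdsWithin] with r hr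
      simpa using hr
  refine ht.frequently (Eventually.frequently ?_)
  have : Set.Ioi (0 : ℝ) ∈ 𝓝[≠] (1 : ℝ) := nhdsWithin_le_nhds (Ioi_mem_nhds one_pos)
  filter_upwards [this] with r hr
  have hr0 : 0 < r := hr
  have e1 : ∫ u in Set.Ioi 0, Kw B (r : ℂ) u =
      ((∫ u in Set.Ioi 0, hB B u * Real.exp (-(r * u)) : ℝ) : ℂ) := by
    rw [← integral_complex_ofReal]
    refine integral_congr_ae (Eventually.of_forall fun u => ?_)
    simp [Kw]
  rw [e1, (real_int B r hBp hr0).2]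
  have e2 : (r : ℂ) ^ (1 / 2 : ℂ) = ((√r : ℝ) : ℂ) := by
    rw [Real.sqrt_eq_rpow, Complex.ofReal_cpow hr0.le]; norm_num
  rw [cpow_neg, e2]
  push_cast
  rw [div_eq_mul_inv]


noncomputable def Hh (B : ℝ) (w : ℂ) : ℂ :=
  (√π : ℂ) * w ^ (-(1 / 2) : ℂ) * cexp (-(2 * w ^ (1 / 2 : ℂ) * √B))

lemma hB_nonpos (B u : ℝ) (hu : u ≤ 0) : hB B u = 0 := by
  unfold hB; simp [Real.sqrt_eq_zero_of_nonpos hu]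

lemma hB_nn (B u : ℝ) : 0 ≤ hB B u := by unfold hB; positivity

lemma hB_le (B u : ℝ) (hBp : 0 < B) : hB B u ≤ √u / B := by
  rcases le_or_gt u 0 with hu | hu
  · rw [hB_nonpos B u hu]; positivity
  · unfold hB
    have h1 : Real.exp (-(B / u)) ≤ u / B := by
      rw [Real.exp_neg, show u / B = (B / u)⁻¹ from (inv_div B u).symm]
      have := Real.add_one_le_exp (B / u)
      have h2 : 0 < B / u := by positivity
      exact inv_anti₀ h2 (by linarith)
    calc 1 / √u * Real.exp (-(B / u)) ≤ 1 / √u * (u / B) := by gcongr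
      _ = √u / B := by
        have hs : 0 < √u := Real.sqrt_pos.2 hu
        have : √u * √u = u := Real.mul_self_sqrt hu.le
        field_simp; nlinarith

lemma hB_continuous (B : ℝ) (hBp : 0 < B) : Continuous (hB B) := by
  rw [continuous_iff_continuousAt]
  intro u
  rcases le_or_gt u 0 with hu | hu
  · rw [ContinuousAt, hB_nonpos B u hu]
    refine tendsto_of_tendsto_of_tendsto_of_le_of_le tendsto_const_nhds ?_
      (fun v => hB_nn B v) (fun v => hB_le B v hBp)
    have : Continuous fun v : ℝ => √v / B := by fun_prop
    have h := this.tendsto u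
    simpa [Real.sqrt_eq_zero_of_nonpos hu] using h
  · exact (hB_cont B).continuousAt (Ioi_mem_nhds hu)

noncomputable def fB (B r : ℝ) (u : ℝ) : ℂ := ((hB B u * Real.exp (-(r * u)) : ℝ) : ℂ)

lemma fB_continuous (B r : ℝ) (hBp : 0 < B) : Continuous (fB B r) := by
  unfold fB
  have := hB_continuous B hBp
  fun_prop

lemma exp_neg_le_two (y : ℝ) (hy : 0 < y) : Real.exp (-y) ≤ 2 / y ^ 2 := by
  rw [Real.exp_neg, ← inv_div (y ^ 2) 2]
  have := Real.quadratic_le_exp_of_nonneg hy.le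
  refine inv_anti₀ (by positivity) (by nlinarith)

lemma exp_neg_le_four (y : ℝ) (hy : 0 < y) : Real.exp (-y) ≤ 24 / y ^ 4 := by
  rw [Real.exp_neg, ← inv_div (y ^ 4) 24]
  have := Real.pow_div_factorial_le_exp y hy.le 4
  refine inv_anti₀ (by positivity) ?_
  simpa [Nat.factorial] using this

lemma fB_decay (B r : ℝ) (hBp : 0 < B) (hr : 0 < r) :
    fB B r =O[cocompact ℝ] fun x : ℝ => |x| ^ (-(3 / 2) : ℝ) := by
  refine Asymptotics.IsBigO.of_bound (2 / (B * r ^ 2)) (Eventually.of_forall fun u => ?_)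
  unfold fB
  rw [Complex.norm_real, Real.norm_of_nonneg (by have := hB_nn B u; positivity),
    Real.norm_of_nonneg (by positivity)]
  rcases le_or_gt u 0 with hu | hu
  · rw [hB_nonpos B u hu]; simp; positivity
  · rw [abs_of_pos hu]
    calc hB B u * Real.exp (-(r * u)) ≤ (√u / B) * (2 / (r * u) ^ 2) := by
          gcongr
          · exact hB_le B u hBp
          · exact exp_neg_le_two _ (by positivity)
      _ = 2 / (B * r ^ 2) * u ^ (-(3 / 2) : ℝ) := by
          have e : u ^ (-(3 / 2) : ℝ) = √u / u ^ 2 := by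
            rw [Real.sqrt_eq_rpow, ← Real.rpow_natCast, ← Real.rpow_sub hu]; norm_num
          rw [e]; field_simp

lemma fB_fourier (B r : ℝ) (hBp : 0 < B) (hr : 0 < r) (k : ℝ) :
    FourierTransform.fourier (fB B r) k = Hh B (r + 2 * π * I * k) := by
  rw [Real.fourier_real_eq_integral_exp_smul]
  have hw : 0 < ((r : ℂ) + 2 * π * I * k).re := by simp [hr]
  unfold Hh
  rw [← Kw_integral B hBp _ hw]
  rw [← integral_indicator measurableSet_Ioi]
  congr 1
  ext u
  rcases le_or_gt u 0 with hu | hu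
  · simp [fB, hB_nonpos B u hu, hu]
  · rw [Set.indicator_of_mem (Set.mem_Ioi.2 hu)]
    unfold fB Kw
    push_cast
    rw [smul_eq_mul, mul_left_comm, ← Complex.exp_add]
    congr 2
    ring

lemma cpow_half_sq (w : ℂ) : (w ^ (1 / 2 : ℂ)) ^ 2 = w := by
  rw [← Complex.cpow_nat_mul]; norm_num

lemma cpow_half_re (w : ℂ) (hw : 0 ≤ w.re) : √(‖w‖ / 2) ≤ (w ^ (1 / 2 : ℂ)).re := by
  set z := w ^ (1 / 2 : ℂ) with hz
  have h2 : z ^ 2 = w := cpow_half_sq w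
  have h0 : 0 ≤ z.re := by
    by_cases hw0 : w = 0
    · simp [hz, hw0]
    have := Complex.abs_arg_le_pi_div_two_iff.2 hw
    rw [hz, Complex.cpow_def_of_ne_zero hw0, Complex.exp_re]
    refine mul_nonneg (Real.exp_pos _).le (Real.cos_nonneg_of_mem_Icc ?_)
    have e : (Complex.log w * (1 / 2)).im = w.arg / 2 := by
      rw [show (1 / 2 : ℂ) = ((1 / 2 : ℝ) : ℂ) by push_cast; rfl, Complex.im_mul_ofReal, Complex.log_im]; ring
    rw [e]
    rw [abs_le] at this
    constructor <;> linarith [Real.pi_pos]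
  have h3 : ‖w‖ = z.re ^ 2 + z.im ^ 2 := by
    rw [← h2, norm_pow, Complex.sq_norm, Complex.normSq_apply]; ring
  have h4 : w.re = z.re ^ 2 - z.im ^ 2 := by
    rw [← h2, pow_two, Complex.mul_re]; ring
  apply Real.sqrt_le_iff.2
  refine ⟨h0, by linarith⟩

lemma Hh_norm (B : ℝ) (hBp : 0 < B) (w : ℂ) (hw : 0 ≤ w.re) (hw1 : 1 ≤ ‖w‖) :
    ‖Hh B w‖ ≤ 6 * √π / (B ^ 2 * ‖w‖ ^ 2) := by
  have hw0 : w ≠ 0 := by rintro rfl; simp at hw1; linarith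
  unfold Hh
  have hn : 0 < ‖w‖ := by linarith
  rw [norm_mul, norm_mul, Complex.norm_real, Real.norm_of_nonneg (by positivity), Complex.norm_exp]
  have e1 : ‖w ^ (-(1 / 2) : ℂ)‖ ≤ 1 := by
    have := Complex.norm_cpow_real w (-(1 / 2))
    push_cast at this
    rw [this]
    exact Real.rpow_le_one_of_one_le_of_nonpos hw1 (by norm_num)
  have e2 : (-(2 * w ^ (1 / 2 : ℂ) * √B)).re ≤ -(2 * √(‖w‖ / 2) * √B) := by
    rw [Complex.neg_re, Complex.re_mul_ofReal]
    have : (2 * w ^ (1 / 2 : ℂ)).re = 2 * (w ^ (1 / 2 : ℂ)).re := by simp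
    rw [this]
    have := cpow_half_re w hw
    gcongr
  have e3 : Real.exp (-(2 * √(‖w‖ / 2) * √B)) ≤ 6 / (B ^ 2 * ‖w‖ ^ 2) := by
    refine (exp_neg_le_four _ (by positivity)).trans (le_of_eq ?_)
    have h1 : (2 * √(‖w‖ / 2) * √B) ^ 4 = 16 * (√(‖w‖ / 2) ^ 2) ^ 2 * (√B ^ 2) ^ 2 := by ring
    rw [h1, Real.sq_sqrt (by positivity), Real.sq_sqrt (by positivity)]
    field_simp; norm_num
  calc √π * ‖w ^ (-(1 / 2) : ℂ)‖ * Real.exp (-(2 * w ^ (1 / 2 : ℂ) * √B)).re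
      ≤ √π * 1 * (6 / (B ^ 2 * ‖w‖ ^ 2)) := by
        gcongr
        exact (Real.exp_le_exp.2 e2).trans e3
    _ = _ := by ring

/-- frequency point -/
noncomputable def wk (r k : ℝ) : ℂ := r + 2 * π * I * k

lemma wk_re (r k : ℝ) : (wk r k).re = r := by simp [wk]
lemma wk_im (r k : ℝ) : (wk r k).im = 2 * π * k := by simp [wk]

lemma wk_norm (r k : ℝ) : |k| ≤ ‖wk r k‖ := by
  refine le_trans ?_ (Complex.abs_im_le_norm _)
  rw [wk_im, abs_mul]
  have : 1 ≤ |2 * π| := by rw [abs_of_pos (by positivity)]; linarith [Real.pi_gt_three]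
  nlinarith [abs_nonneg k]

lemma Hh_wk (B : ℝ) (hBp : 0 < B) (r k : ℝ) (hr : 0 ≤ r) (hk : 1 ≤ |k|) :
    ‖Hh B (wk r k)‖ ≤ 6 * √π / (B ^ 2 * k ^ 2) := by
  have h := wk_norm r k
  refine (Hh_norm B hBp _ (by rw [wk_re]; exact hr) (hk.trans h)).trans ?_
  rw [← sq_abs k]
  gcongr

lemma summable_inv_sq : Summable fun n : ℕ => 1 / ((n : ℝ) + 1) ^ 2 := by
  have := summable_add_one_rpow (p := -2) (by norm_num)
  refine this.congr fun n => ?_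
  rw [Real.rpow_neg (by positivity)]
  simp

lemma Hh_summ1 (B : ℝ) (hBp : 0 < B) (r : ℝ) (hr : 0 ≤ r) :
    Summable (fun n : ℕ => Hh B (wk r ((n : ℝ) + 1))) ∧
    Summable (fun n : ℕ => Hh B (wk r (-((n : ℝ) + 1)))) := by
  have hb := summable_inv_sq.mul_left (6 * √π / B ^ 2)
  constructor
  · refine Summable.of_norm_bounded hb fun n => ?_
    refine (Hh_wk B hBp r _ hr ?_).trans (le_of_eq ?_)
    · rw [abs_of_pos (by positivity)]; linarith [Nat.cast_nonneg (α := ℝ) n]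
    · field_simp
  · refine Summable.of_norm_bounded hb fun n => ?_
    refine (Hh_wk B hBp r _ hr ?_).trans (le_of_eq ?_)
    · rw [abs_neg, abs_of_pos (by positivity)]; linarith [Nat.cast_nonneg (α := ℝ) n]
    · rw [neg_sq]; field_simp

lemma poissonB (B r : ℝ) (hBp : 0 < B) (hr : 0 < r) :
    ∑' n : ℕ, fB B r ((n : ℝ) + 1) =
      Hh B r + ∑' n : ℕ, (Hh B (wk r ((n : ℝ) + 1)) + Hh B (wk r (-((n : ℝ) + 1)))) := by
  obtain ⟨s1, s2⟩ := Hh_summ1 B hBp r hr.le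
  have hF : (fun n : ℤ => FourierTransform.fourier (fB B r) (n : ℝ)) = fun n : ℤ => Hh B (wk r n) := by
    ext n; rw [fB_fourier B r hBp hr]; rfl
  have hs1 := s1.hasSum
  have hs2 := s2.hasSum
  have hsZ : HasSum (fun n : ℤ => Hh B (wk r n))
      (∑' n : ℕ, Hh B (wk r ((n : ℝ) + 1)) + Hh B (wk r (0 : ℤ)) + ∑' n : ℕ, Hh B (wk r (-((n : ℝ) + 1)))) := by
    refine HasSum.of_add_one_of_neg_add_one (f := fun n : ℤ => Hh B (wk r n)) ?_ ?_
    · simpa using hs1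
    · simpa using hs2
  have hsum : Summable fun n : ℤ => FourierTransform.fourier (fB B r) (n : ℝ) := by
    rw [hF]; exact hsZ.summable
  have P := Real.tsum_eq_tsum_fourier_of_rpow_decay_of_summable (fB_continuous B r hBp)
    (by norm_num : (1 : ℝ) < 3 / 2) (fB_decay B r hBp hr) hsum 0
  simp only [zero_add] at P
  have R : ∑' n : ℤ, FourierTransform.fourier (fB B r) (n : ℝ) * fourier n ((0 : ℝ) : UnitAddCircle) =
      Hh B r + ∑' n : ℕ, (Hh B (wk r ((n : ℝ) + 1)) + Hh B (wk r (-((n : ℝ) + 1)))) := by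
    have : (fun n : ℤ => FourierTransform.fourier (fB B r) (n : ℝ) * fourier n ((0 : ℝ) : UnitAddCircle))
        = fun n : ℤ => Hh B (wk r n) := by
      ext n
      rw [congrFun hF n]
      simp
    rw [this, hsZ.tsum_eq, s1.tsum_add s2]
    have : wk r ((0 : ℤ) : ℝ) = r := by simp [wk]
    rw [this]; ring
  have L : ∑' n : ℤ, fB B r n = ∑' n : ℕ, fB B r ((n : ℝ) + 1) := by
    have hinj : Function.Injective (fun n : ℕ => (n : ℤ) + 1) := fun a b h => by simpa using h
    have := hinj.tsum_eq (f := fun n : ℤ => fB B r n) ?_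
    · rw [← this]; simp
    · intro n hn
      by_contra hcon
      apply hn
      have : n ≤ 0 := by
        by_contra hpos
        push Not at hpos
        exact hcon ⟨(n - 1).toNat, by simp; omega⟩
      have h0 : (n : ℝ) ≤ 0 := by exact_mod_cast this
      simp [fB, hB_nonpos B n h0]
  rw [← L, P, R]


lemma Hh_sq (B : ℝ) (z : ℂ) (hz : 0 < z.re) :
    Hh B (z ^ 2) = (√π : ℂ) * z⁻¹ * cexp (-(2 * z * √B)) := by
  have h : (z ^ 2) ^ (1 / 2 : ℂ) = z := by
    rw [one_div]; exact Complex.sq_cpow_two_inv hz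
  unfold Hh
  rw [Complex.cpow_neg, h]

lemma Hh_real (B t : ℝ) (ht : 0 < t) :
    Hh B t = (√π / √t : ℝ) * ((Real.exp (-(2 * √t * √B)) : ℝ) : ℂ) := by
  have : (t : ℂ) = ((√t : ℝ) : ℂ) ^ 2 := by
    rw [← Complex.ofReal_pow, Real.sq_sqrt ht.le]
  conv_lhs => rw [this]
  rw [Hh_sq B _ (by rw [Complex.ofReal_re]; exact Real.sqrt_pos.2 ht)]
  push_cast
  ring_nf

lemma Hh_pair (B k : ℝ) (hk : 0 < k) :
    Hh B (wk 0 k) + Hh B (wk 0 (-k)) =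
      ((√2 / √k * (Real.exp (-(2 * √(π * k) * √B)) *
        Real.sin (π / 4 - 2 * √(π * k) * √B)) : ℝ) : ℂ) := by
  set a := √(π * k) with ha
  have hpk : 0 < π * k := by positivity
  have hap : 0 < a := Real.sqrt_pos.2 hpk
  have ha2 : (a : ℂ) ^ 2 = π * k := by
    rw [← Complex.ofReal_pow, ha, Real.sq_sqrt hpk.le]; push_cast; rfl
  have e1 : wk 0 k = ((a : ℂ) * (1 + I)) ^ 2 := by
    rw [mul_pow, ha2]; unfold wk
    have : (1 + I) ^ 2 = 2 * I := by ring_nf; rw [I_sq]; ring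
    rw [this]; push_cast; ring
  have e2 : wk 0 (-k) = ((a : ℂ) * (1 - I)) ^ 2 := by
    rw [mul_pow, ha2]; unfold wk
    have : (1 - I) ^ 2 = -2 * I := by ring_nf; rw [I_sq]; ring
    rw [this]; push_cast; ring
  rw [e1, e2, Hh_sq _ _ (by simpa using hap), Hh_sq _ _ (by simpa using hap)]
  set v := 2 * a * √B with hv
  have f1 : cexp (-(2 * ((a : ℂ) * (1 + I)) * √B)) = cexp (-(v : ℂ)) * (Complex.cos v - Complex.sin v * I) := by
    have : -(2 * ((a : ℂ) * (1 + I)) * √B) = -(v : ℂ) + (-(v : ℂ)) * I := by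
      rw [hv]; push_cast; ring
    rw [this, Complex.exp_add, Complex.exp_mul_I, Complex.cos_neg, Complex.sin_neg]; ring
  have f2 : cexp (-(2 * ((a : ℂ) * (1 - I)) * √B)) = cexp (-(v : ℂ)) * (Complex.cos v + Complex.sin v * I) := by
    have : -(2 * ((a : ℂ) * (1 - I)) * √B) = -(v : ℂ) + (v : ℂ) * I := by
      rw [hv]; push_cast; ring
    rw [this, Complex.exp_add, Complex.exp_mul_I]
  rw [f1, f2]
  have g1 : ((a : ℂ) * (1 + I))⁻¹ = (1 - I) / (2 * a) := by
    have h1 : (1 + I) * (1 - I) = 2 := by ring_nf; rw [I_sq]; ring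
    have ha0 : (a : ℂ) ≠ 0 := by exact_mod_cast hap.ne'
    apply inv_eq_of_mul_eq_one_right
    rw [mul_div_assoc', mul_assoc, h1]; field_simp
  have g2 : ((a : ℂ) * (1 - I))⁻¹ = (1 + I) / (2 * a) := by
    have h1 : (1 - I) * (1 + I) = 2 := by ring_nf; rw [I_sq]; ring
    have ha0 : (a : ℂ) ≠ 0 := by exact_mod_cast hap.ne'
    apply inv_eq_of_mul_eq_one_right
    rw [mul_div_assoc', mul_assoc, h1]; field_simp
  rw [g1, g2]
  have s1 : √2 * Real.sin (π / 4 - v) = Real.cos v - Real.sin v := by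
    rw [Real.sin_sub, Real.sin_pi_div_four, Real.cos_pi_div_four]
    have : √2 * √2 = 2 := Real.mul_self_sqrt (by norm_num)
    linear_combination (Real.cos v - Real.sin v) / 2 * this
  have s2 : √2 / √k * (Real.exp (-v) * Real.sin (π / 4 - v)) =
      √π / a * (Real.exp (-v) * (Real.cos v - Real.sin v)) := by
    rw [← s1, ha, Real.sqrt_mul Real.pi_pos.le]
    have : √π ≠ 0 := (Real.sqrt_pos.2 Real.pi_pos).ne'
    field_simp
  rw [s2]
  push_cast
  linear_combination ((√π : ℂ) / a * cexp (-(v : ℂ)) * Complex.sin v) * I_sq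

lemma coth_id (z : ℝ) (hz : 0 < z) :
    ∑' n : ℕ, Real.exp (-(2 * π * z * ((n : ℝ) + 1))) =
      1 / (2 * π * z) - 1 / 2 + z / π * ∑' n : ℕ, 1 / (z ^ 2 + ((n : ℝ) + 1) ^ 2) := by
  have him : 0 < (I * (z : ℂ)).im := by simpa using hz
  set τ : UpperHalfPlane := ⟨I * z, him⟩ with hτ
  have hc : (τ : ℂ) = I * z := rfl
  have h1 := pi_mul_cot_pi_q_exp τ
  have h2 := cot_series_rep' (UpperHalfPlane.coe_mem_integerComplement τ)
  rw [hc] at h1 h2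
  have hq : cexp (2 * π * I * (I * z)) = ((Real.exp (-(2 * π * z)) : ℝ) : ℂ) := by
    push_cast; congr 1; linear_combination (2 * π * z) * I_sq
  have hlt : Real.exp (-(2 * π * z)) < 1 := by
    rw [Real.exp_lt_one_iff]; have : 0 < 2 * π * z := by positivity
    linarith
  have hsumm := summable_geometric_of_lt_one (Real.exp_pos _).le hlt
  have hq2 : ∑' n : ℕ, cexp (2 * π * I * (I * z)) ^ n =
      ((1 + ∑' n : ℕ, Real.exp (-(2 * π * z * ((n : ℝ) + 1))) : ℝ) : ℂ) := by
    rw [hq]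
    have : ∑' n : ℕ, Real.exp (-(2 * π * z)) ^ n = 1 + ∑' n : ℕ, Real.exp (-(2 * π * z * ((n : ℝ) + 1))) := by
      rw [hsumm.tsum_eq_zero_add]
      congr 1
      refine tsum_congr fun n => ?_
      rw [← Real.exp_nat_mul]; congr 1; push_cast; ring
    rw [← this, Complex.ofReal_tsum]
    simp
  have hT : ∑' n : ℕ, (1 / (I * (z : ℂ) - (n + 1)) + 1 / (I * (z : ℂ) + (n + 1))) =
      -(2 * I * z) * ((∑' n : ℕ, 1 / (z ^ 2 + ((n : ℝ) + 1) ^ 2) : ℝ) : ℂ) := by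
    rw [Complex.ofReal_tsum, ← tsum_mul_left]
    refine tsum_congr fun n => ?_
    have hpos : 0 < z ^ 2 + ((n : ℝ) + 1) ^ 2 := by positivity
    have hne : ((z ^ 2 + ((n : ℝ) + 1) ^ 2 : ℝ) : ℂ) ≠ 0 := by exact_mod_cast hpos.ne'
    push_cast at hne
    have hprod : (I * (z : ℂ) - (n + 1)) * (I * (z : ℂ) + (n + 1)) = -((z : ℂ) ^ 2 + ((n : ℂ) + 1) ^ 2) := by
      linear_combination (z : ℂ) ^ 2 * I_sq
    have n1 : (I * (z : ℂ) - (n + 1)) ≠ 0 := by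
      intro h; rw [h, zero_mul] at hprod; exact hne (by linear_combination hprod)
    have n2 : (I * (z : ℂ) + (n + 1)) ≠ 0 := by
      intro h; rw [h, mul_zero] at hprod; exact hne (by linear_combination hprod)
    rw [div_add_div _ _ n1 n2, hprod]
    push_cast
    field_simp
    ring
  rw [hq2] at h1
  rw [hT, h1] at h2
  set S := ∑' n : ℕ, Real.exp (-(2 * π * z * ((n : ℝ) + 1)))
  set T := ∑' n : ℕ, 1 / (z ^ 2 + ((n : ℝ) + 1) ^ 2)
  have hz0 : (z : ℂ) ≠ 0 := by exact_mod_cast hz.ne'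
  have hi : (1 : ℂ) / (I * z) = -I / z := by
    field_simp; rw [I_sq]; norm_num
  rw [hi] at h2
  have h3 : ((-π - 2 * π * S + 1 / z + 2 * z * T : ℝ) : ℂ) * I = 0 := by
    push_cast
    push_cast at h2
    linear_combination h2
  have h4 : -π - 2 * π * S + 1 / z + 2 * z * T = 0 := by
    have := (mul_eq_zero.1 h3).resolve_right I_ne_zero
    exact_mod_cast this
  have hp : π ≠ 0 := Real.pi_pos.ne'
  field_simp at h4 ⊢
  linarith

lemma Hh_tendsto (B : ℝ) (k : ℝ) (hk : k ≠ 0) :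
    Tendsto (fun t : ℝ => Hh B (wk t k)) (𝓝[>] 0) (𝓝 (Hh B (wk 0 k))) := by
  have hs : wk 0 k ∈ slitPlane := by
    right; rw [wk_im]; have := Real.pi_pos; positivity
  have c1 : ContinuousAt (fun w : ℂ => Hh B w) (wk 0 k) := by
    unfold Hh
    have q1 : ContinuousAt (fun w : ℂ => w ^ (-(1 / 2) : ℂ)) (wk 0 k) :=
      continuousAt_cpow_const hs
    have q2 : ContinuousAt (fun w : ℂ => w ^ (1 / 2 : ℂ)) (wk 0 k) :=
      continuousAt_cpow_const hs
    exact (continuousAt_const.mul q1).mul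
      (((continuousAt_const.mul q2).mul continuousAt_const).neg.cexp)
  have c2 : Continuous fun t : ℝ => wk t k := by unfold wk; fun_prop
  exact (c1.tendsto.comp (c2.tendsto 0)).mono_left nhdsWithin_le_nhds


/-- The dominating double series. -/
lemma summable_dbl (p q : ℝ) (hp : p < -1) (hq : q < -1) (C : ℝ) :
    Summable fun j : ℕ × ℕ => C * (((j.1 : ℝ) + 1) ^ p * ((j.2 : ℝ) + 1) ^ q) :=
  (Summable.mul_of_nonneg (summable_add_one_rpow hp) (summable_add_one_rpow hq)
    (fun n => by positivity) (fun n => by positivity)).mul_left C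

/-- paired nonzero frequencies; `j.1` is `m`, `j.2` is `k` -/
noncomputable def Dt (x t : ℝ) (j : ℕ × ℕ) : ℂ :=
  Hh (2 * π * x * ((j.1 : ℝ) + 1)) (wk t ((j.2 : ℝ) + 1)) +
    Hh (2 * π * x * ((j.1 : ℝ) + 1)) (wk t (-((j.2 : ℝ) + 1)))

lemma Dt_bound (x : ℝ) (hx : 0 < x) (t : ℝ) (ht : 0 ≤ t) (j : ℕ × ℕ) :
    ‖Dt x t j‖ ≤ 12 * √π / (2 * π * x) ^ 2 * (((j.1 : ℝ) + 1) ^ (-2 : ℝ) * ((j.2 : ℝ) + 1) ^ (-2 : ℝ)) := by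
  unfold Dt
  have hB : 0 < 2 * π * x * ((j.1 : ℝ) + 1) := by positivity
  have hk : 1 ≤ |(j.2 : ℝ) + 1| := by
    rw [abs_of_pos (by positivity)]; linarith [Nat.cast_nonneg (α := ℝ) j.2]
  have h1 := Hh_wk _ hB t _ ht hk
  have h2 := Hh_wk _ hB t (-((j.2 : ℝ) + 1)) ht (by rwa [abs_neg])
  refine (norm_add_le _ _).trans ((add_le_add h1 h2).trans (le_of_eq ?_))
  rw [neg_sq, Real.rpow_neg (by positivity), Real.rpow_neg (by positivity)]
  norm_num [Real.rpow_ofNat]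
  field_simp
  norm_num

lemma Dt_summable (x : ℝ) (hx : 0 < x) (t : ℝ) (ht : 0 ≤ t) : Summable (Dt x t) :=
  Summable.of_norm_bounded (summable_dbl _ _ (by norm_num) (by norm_num) _) (Dt_bound x hx t ht)

lemma Dt_tendsto (x : ℝ) (hx : 0 < x) :
    Tendsto (fun t => ∑' j, Dt x t j) (𝓝[>] 0) (𝓝 (∑' j, Dt x 0 j)) := by
  refine tendsto_tsum_of_dominated_convergence
    (summable_dbl (-2) (-2) (by norm_num) (by norm_num) (12 * √π / (2 * π * x) ^ 2)) ?_ ?_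
  · intro j
    have hk : (j.2 : ℝ) + 1 ≠ 0 := by positivity
    exact (Hh_tendsto _ _ hk).add (Hh_tendsto _ _ (neg_ne_zero.2 hk))
  · filter_upwards [self_mem_nhdsWithin] with t ht j
    exact Dt_bound x hx t (le_of_lt ht) j

/-- `j.1 = d`, `j.2 = m`. -/
noncomputable def Et (x t : ℝ) (j : ℕ × ℕ) : ℝ :=
  Real.exp (-(t * ((j.1 : ℝ) + 1))) * √((j.1 : ℝ) + 1) /
    (x ^ 2 + (((j.1 : ℝ) + 1) * ((j.2 : ℝ) + 1)) ^ 2)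

lemma Et_bound (x t : ℝ) (ht : 0 ≤ t) (j : ℕ × ℕ) :
    ‖Et x t j‖ ≤ 1 * (((j.1 : ℝ) + 1) ^ (-(3 / 2) : ℝ) * ((j.2 : ℝ) + 1) ^ (-2 : ℝ)) := by
  unfold Et
  rw [Real.norm_of_nonneg (by positivity)]
  have h1 : Real.exp (-(t * ((j.1 : ℝ) + 1))) ≤ 1 := by
    rw [Real.exp_le_one_iff]; have : 0 ≤ t * ((j.1 : ℝ) + 1) := by positivity
    linarith
  set d := (j.1 : ℝ) + 1 with hd
  set m := (j.2 : ℝ) + 1 with hm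
  have hdp : 0 < d := by positivity
  have hmp : 0 < m := by positivity
  have e : d ^ (-(3 / 2) : ℝ) = √d / d ^ 2 := by
    rw [Real.sqrt_eq_rpow, ← Real.rpow_natCast, ← Real.rpow_sub hdp]; norm_num
  have e2 : m ^ (-2 : ℝ) = 1 / m ^ 2 := by
    rw [Real.rpow_neg hmp.le]; norm_num [Real.rpow_ofNat]
  rw [e, e2]
  calc Real.exp (-(t * d)) * √d / (x ^ 2 + (d * m) ^ 2) ≤ 1 * √d / ((d * m) ^ 2) := by
        gcongr
        nlinarith [sq_nonneg x]
    _ = _ := by field_simp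

lemma Et_summable (x t : ℝ) (ht : 0 ≤ t) : Summable (Et x t) :=
  Summable.of_norm_bounded (summable_dbl _ _ (by norm_num) (by norm_num) 1) (Et_bound x t ht)

lemma Et_tendsto (x : ℝ) :
    Tendsto (fun t => ∑' j, Et x t j) (𝓝[>] 0) (𝓝 (∑' j, Et x 0 j)) := by
  refine tendsto_tsum_of_dominated_convergence
    (summable_dbl (-(3 / 2)) (-2) (by norm_num) (by norm_num) 1) ?_ ?_
  · intro j
    have : Continuous fun t => Et x t j := by unfold Et; fun_prop
    exact (this.tendsto 0).mono_left nhdsWithin_le_nhds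
  · filter_upwards [self_mem_nhdsWithin] with t ht j
    exact Et_bound x t (le_of_lt ht) j

/-- `j.1 = m`, `j.2 = d`. -/
noncomputable def At (x t : ℝ) (j : ℕ × ℕ) : ℝ :=
  hB (2 * π * x * ((j.1 : ℝ) + 1)) ((j.2 : ℝ) + 1) * Real.exp (-(t * ((j.2 : ℝ) + 1)))

lemma At_summable (x t : ℝ) (hx : 0 < x) (ht : 0 < t) : Summable (At x t) := by
  refine Summable.of_norm_bounded (summable_dbl (-2) (-2) (by norm_num) (by norm_num)
    (2 / (2 * π * x) ^ 2 * (24 / t ^ 4))) fun j => ?_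
  unfold At hB
  set m := (j.1 : ℝ) + 1 with hm
  set d := (j.2 : ℝ) + 1 with hd
  have hdp : 0 < d := by positivity
  have hd1 : 1 ≤ d := by rw [hd]; linarith [Nat.cast_nonneg (α := ℝ) j.2]
  have hmp : 0 < m := by positivity
  rw [Real.norm_of_nonneg (by positivity), Real.rpow_neg hmp.le, Real.rpow_neg hdp.le]
  norm_num [Real.rpow_ofNat]
  have h1 := exp_neg_le_two (2 * π * x * m / d) (by positivity)
  have h2 := exp_neg_le_four (t * d) (by positivity)
  have h3 : (√d)⁻¹ ≤ 1 := inv_le_one_of_one_le₀ (by rw [Real.one_le_sqrt]; exact hd1)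
  calc (√d)⁻¹ * Real.exp (-(2 * π * x * m / d)) * Real.exp (-(t * d))
      ≤ 1 * (2 / (2 * π * x * m / d) ^ 2) * (24 / (t * d) ^ 4) := by gcongr
    _ = _ := by field_simp

lemma phi_mhalf (t u : ℝ) (hu : 0 < u) : phi (-1 / 2) t u = ((√u * Real.exp (-(t * u)) : ℝ) : ℂ) := by
  unfold phi
  have : (u : ℂ) ^ (-(-1 / 2 : ℂ)) = ((√u : ℝ) : ℂ) := by
    rw [Real.sqrt_eq_rpow, Complex.ofReal_cpow hu.le]; push_cast; congr 1; ring
  rw [this]; push_cast; rfl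

lemma phi_half (t u : ℝ) (hu : 0 < u) : phi (1 / 2) t u = ((1 / √u * Real.exp (-(t * u)) : ℝ) : ℂ) := by
  unfold phi
  have : (u : ℂ) ^ (-(1 / 2 : ℂ)) = ((1 / √u : ℝ) : ℂ) := by
    rw [Real.sqrt_eq_rpow, one_div (u ^ (1 / 2 : ℝ)), ← Real.rpow_neg hu.le, Complex.ofReal_cpow hu.le]; push_cast; rfl
  rw [this]; push_cast; rfl

lemma A_inner (x t d : ℝ) (hx : 0 < x) (hd : 0 < d) :
    ∑' m : ℕ, hB (2 * π * x * ((m : ℝ) + 1)) d * Real.exp (-(t * d)) =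
      1 / (2 * π * x) * (√d * Real.exp (-(t * d))) - 1 / 2 * (1 / √d * Real.exp (-(t * d)))
        + x / π * ∑' m : ℕ, Real.exp (-(t * d)) * √d / (x ^ 2 + (d * ((m : ℝ) + 1)) ^ 2) := by
  have hc := coth_id (x / d) (by positivity)
  have hs : 0 < √d := Real.sqrt_pos.2 hd
  have hss : √d ^ 2 = d := Real.sq_sqrt hd.le
  have e1 : ∑' m : ℕ, hB (2 * π * x * ((m : ℝ) + 1)) d * Real.exp (-(t * d)) =
      (1 / √d * Real.exp (-(t * d))) * ∑' n : ℕ, Real.exp (-(2 * π * (x / d) * ((n : ℝ) + 1))) := by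
    rw [← tsum_mul_left]
    refine tsum_congr fun m => ?_
    unfold hB
    rw [show 2 * π * x * ((m : ℝ) + 1) / d = 2 * π * (x / d) * ((m : ℝ) + 1) by ring]
    ring
  have e2 : ∑' m : ℕ, Real.exp (-(t * d)) * √d / (x ^ 2 + (d * ((m : ℝ) + 1)) ^ 2) =
      (Real.exp (-(t * d)) * √d / d ^ 2) * ∑' n : ℕ, 1 / ((x / d) ^ 2 + ((n : ℝ) + 1) ^ 2) := by
    rw [← tsum_mul_left]
    refine tsum_congr fun m => ?_
    field_simp
  rw [e1, e2, hc]
  set T := ∑' n : ℕ, 1 / ((x / d) ^ 2 + ((n : ℝ) + 1) ^ 2)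
  have hd' : (1 / √d) = √d / d := by field_simp; exact hss.symm
  rw [hd']
  have hp := Real.pi_pos
  field_simp

lemma A_eval (x t : ℝ) (hx : 0 < x) (ht : 0 < t) :
    ((∑' j, At x t j : ℝ) : ℂ) = 1 / (2 * π * x) * ∑' n : ℕ, phi (-1 / 2) t ((n : ℝ) + 1)
      - 1 / 2 * ∑' n : ℕ, phi (1 / 2) t ((n : ℝ) + 1) + x / π * ((∑' j, Et x t j : ℝ) : ℂ) := by
  have s1 : Summable fun n : ℕ => √((n : ℝ) + 1) * Real.exp (-(t * ((n : ℝ) + 1))) := by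
    have := phi_summable (-1 / 2) (by norm_num) t ht
    rw [← Complex.summable_ofReal]
    exact this.congr fun n => phi_mhalf t _ (by positivity)
  have s2 : Summable fun n : ℕ => 1 / √((n : ℝ) + 1) * Real.exp (-(t * ((n : ℝ) + 1))) := by
    have := phi_summable (1 / 2) (by norm_num) t ht
    rw [← Complex.summable_ofReal]
    exact this.congr fun n => phi_half t _ (by positivity)
  have s3 := Et_summable x t ht.le
  have hA := At_summable x t hx ht
  have hA' : Summable fun j : ℕ × ℕ => At x t j.swap := hA.prod_symm
  have r1 : ∑' j, At x t j = ∑' d : ℕ, ∑' m : ℕ, At x t (m, d) := by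
    rw [← (Equiv.prodComm ℕ ℕ).tsum_eq (At x t)]
    exact hA'.tsum_prod
  have r2 : ∑' j, At x t j = 1 / (2 * π * x) * ∑' n : ℕ, √((n : ℝ) + 1) * Real.exp (-(t * ((n : ℝ) + 1)))
      - 1 / 2 * ∑' n : ℕ, 1 / √((n : ℝ) + 1) * Real.exp (-(t * ((n : ℝ) + 1)))
      + x / π * ∑' j, Et x t j := by
    rw [r1, s3.tsum_prod, ← tsum_mul_left, ← tsum_mul_left, ← tsum_mul_left,
      ← (s1.mul_left _).tsum_sub (s2.mul_left _),
      ← ((s1.mul_left _).sub (s2.mul_left _)).tsum_add (s3.prod.mul_left _)]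
    refine tsum_congr fun d => ?_
    exact A_inner x t ((d : ℝ) + 1) hx (by positivity)
  have q1 : ∑' n : ℕ, phi (-1 / 2) t ((n : ℝ) + 1) =
      ((∑' n : ℕ, √((n : ℝ) + 1) * Real.exp (-(t * ((n : ℝ) + 1))) : ℝ) : ℂ) := by
    rw [Complex.ofReal_tsum]
    exact tsum_congr fun n => phi_mhalf t _ (by positivity)
  have q2 : ∑' n : ℕ, phi (1 / 2) t ((n : ℝ) + 1) =
      ((∑' n : ℕ, 1 / √((n : ℝ) + 1) * Real.exp (-(t * ((n : ℝ) + 1))) : ℝ) : ℂ) := by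
    rw [Complex.ofReal_tsum]
    exact tsum_congr fun n => phi_half t _ (by positivity)
  rw [r2, q1, q2, Complex.ofReal_add, Complex.ofReal_sub, Complex.ofReal_mul, Complex.ofReal_mul,
    Complex.ofReal_mul]
  norm_num

lemma A_poisson (x t : ℝ) (hx : 0 < x) (ht : 0 < t) :
    ((∑' j, At x t j : ℝ) : ℂ) = (√π / √t : ℝ) * ∑' n : ℕ, psi (2 * √(2 * π * x * t)) ((n : ℝ) + 1)
      + ∑' j, Dt x t j := by
  have hA := At_summable x t hx ht
  have hD := Dt_summable x hx t ht.le
  have hP := psi_summable (2 * √(2 * π * x * t)) (by positivity)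
  rw [hA.tsum_prod, hD.tsum_prod, ← tsum_mul_left, ← (hP.mul_left _).tsum_add hD.prod, Complex.ofReal_tsum]
  refine tsum_congr fun m => ?_
  have hBp : 0 < 2 * π * x * ((m : ℝ) + 1) := by positivity
  have P := poissonB (2 * π * x * ((m : ℝ) + 1)) t hBp ht
  rw [Hh_real _ t ht] at P
  have e : 2 * √t * √(2 * π * x * ((m : ℝ) + 1)) = 2 * √(2 * π * x * t) * √((m : ℝ) + 1) := by
    rw [mul_assoc, mul_assoc 2 (√_) (√_), ← Real.sqrt_mul ht.le, ← Real.sqrt_mul (by positivity)]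
    congr 2; ring
  rw [e] at P
  rw [Complex.ofReal_tsum]
  exact P

/-- The key identity before divisor rearrangement. -/
lemma key (x : ℝ) (hx : 0 < x) :
    1 / (2 * π * x) * riemannZeta (-1 / 2) - 1 / 2 * riemannZeta (1 / 2)
      + x / π * ((∑' j, Et x 0 j : ℝ) : ℂ) =
    (2 * √π * √(2 * π * x) : ℝ) * (-riemannZeta (-1 / 2)) + ∑' j, Dt x 0 j := by
  have L1 := reg_limit (-1 / 2) (by norm_num) (by norm_num) (by norm_num)
  have L2 := reg_limit (1 / 2) (by norm_num) (by norm_num) (by norm_num)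
  have hc : Tendsto (fun t : ℝ => 2 * √(2 * π * x * t)) (𝓝[>] 0) (𝓝[>] 0) := by
    refine tendsto_nhdsWithin_iff.2 ⟨?_, ?_⟩
    · have : Continuous fun t : ℝ => 2 * √(2 * π * x * t) := by fun_prop
      have h := this.tendsto 0
      simp only [mul_zero, Real.sqrt_zero] at h
      exact h.mono_left nhdsWithin_le_nhds
    · filter_upwards [self_mem_nhdsWithin] with t ht
      have : (0 : ℝ) < t := ht
      simp only [Set.mem_Ioi]; positivity
  have L3 := sqrt_limit.comp hc
  have L4 := Dt_tendsto x hx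
  have L5 := (Complex.continuous_ofReal.tendsto _).comp (Et_tendsto x)
  have LL := ((L1.const_mul (1 / (2 * π * x : ℂ))).sub (L2.const_mul (1 / 2 : ℂ))).add
    (L5.const_mul (x / π : ℂ))
  have LR := (L3.const_mul ((2 * √π * √(2 * π * x) : ℝ) : ℂ)).add L4
  refine tendsto_nhds_unique (LL.congr' ?_) LR
  filter_upwards [self_mem_nhdsWithin] with t ht
  have ht : (0 : ℝ) < t := ht
  have h := (A_eval x t hx ht).symm.trans (A_poisson x t hx ht)
  simp only [Function.comp_apply]
  set X1 := ∑' n : ℕ, phi (-1 / 2) t ((n : ℝ) + 1)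
  set X2 := ∑' n : ℕ, phi (1 / 2) t ((n : ℝ) + 1)
  set c := 2 * √(2 * π * x * t) with hcdef
  set X3 := ∑' n : ℕ, psi c ((n : ℝ) + 1)
  have hcp : 0 < c := by positivity
  have g2 : (1 / (t : ℂ)) ^ (1 - 1 / 2 : ℂ) * Complex.Gamma (1 - 1 / 2) = ((√π / √t : ℝ) : ℂ) := by
    rw [show (1 - 1 / 2 : ℂ) = 1 / 2 by norm_num, Complex.Gamma_one_half_eq]
    have a1 : (1 / (t : ℂ)) ^ (1 / 2 : ℂ) = ((1 / √t : ℝ) : ℂ) := by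
      rw [← Real.sqrt_one, ← Real.sqrt_div (by norm_num), Real.sqrt_eq_rpow, Complex.ofReal_cpow (by positivity)]
      push_cast; rfl
    have a2 : (π : ℂ) ^ (1 / 2 : ℂ) = ((√π : ℝ) : ℂ) := by
      rw [Real.sqrt_eq_rpow, Complex.ofReal_cpow (by positivity)]; push_cast; rfl
    rw [a1, a2]; push_cast; ring
  have g1 : (1 / (t : ℂ)) ^ (1 - -1 / 2 : ℂ) * Complex.Gamma (1 - -1 / 2) = ((√π / √t / (2 * t) : ℝ) : ℂ) := by
    have ht0 : (1 / (t : ℂ)) ≠ 0 := by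
      have : (t : ℂ) ≠ 0 := by exact_mod_cast ht.ne'
      exact one_div_ne_zero this
    rw [show (1 - -1 / 2 : ℂ) = (1 - 1 / 2) + 1 by norm_num, Complex.cpow_add _ _ ht0, Complex.cpow_one,
      Complex.Gamma_add_one _ (by norm_num)]
    have : (1 / (t : ℂ)) ^ (1 - 1 / 2 : ℂ) * (1 / (t : ℂ)) * ((1 - 1 / 2) * Complex.Gamma (1 - 1 / 2))
      = ((1 / (t : ℂ)) ^ (1 - 1 / 2 : ℂ) * Complex.Gamma (1 - 1 / 2)) * (1 / (2 * t)) := by ring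
    rw [this, g2]; push_cast; ring
  rw [g1, g2]
  have k1 : 2 * √π * √(2 * π * x) / c = √π / √t := by
    rw [hcdef, Real.sqrt_mul (by positivity : (0:ℝ) ≤ 2 * π * x) t]
    field_simp
  have k2 : 1 / (2 * π * x) * (√π / √t / (2 * t)) = √π / √t * (2 / c ^ 2) := by
    rw [hcdef, mul_pow, Real.sq_sqrt (by positivity)]
    field_simp
  have k1' : ((2 * √π * √(2 * π * x) : ℝ) : ℂ) / c = ((√π / √t : ℝ) : ℂ) := by
    rw [← k1]; push_cast; rfl
  have k2' : 1 / (2 * π * x : ℂ) * ((√π / √t / (2 * t) : ℝ) : ℂ) = ((√π / √t : ℝ) : ℂ) * (2 / (c : ℂ) ^ 2) := by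
    have := congrArg (fun r : ℝ => (r : ℂ)) k2
    push_cast at this
    push_cast
    exact this
  have k3 : ((2 * √π * √(2 * π * x) : ℝ) : ℂ) * ((X3 - 2 / (c : ℂ) ^ 2 + 1 / 2) / c) =
      ((√π / √t : ℝ) : ℂ) * (X3 - 2 / (c : ℂ) ^ 2 + 1 / 2) := by
    rw [← k1']; ring
  rw [k3]
  linear_combination h - k2'


lemma divisor_rearr (F : ℕ → ℕ → ℂ) (hF : Summable fun j : ℕ × ℕ => F (j.1 + 1) (j.2 + 1)) :
    ∑' j : ℕ × ℕ, F (j.1 + 1) (j.2 + 1) =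
      ∑' n : ℕ, ∑ p ∈ (n + 1).divisorsAntidiagonal, F p.1 p.2 := by
  let e : ℕ × ℕ ≃ ℕ+ × ℕ+ := Equiv.prodCongr Equiv.pnatEquivNat.symm Equiv.pnatEquivNat.symm
  have he : ∀ j : ℕ × ℕ, F (j.1 + 1) (j.2 + 1) = (fun q : ℕ+ × ℕ+ => F q.1 q.2) (e j) := by
    intro j; simp [e]
  have hF2 : Summable fun q : ℕ+ × ℕ+ => F q.1 q.2 := by
    rw [← e.summable_iff]
    exact hF.congr he
  have h1 : ∑' j : ℕ × ℕ, F (j.1 + 1) (j.2 + 1) = ∑' q : ℕ+ × ℕ+, F q.1 q.2 := by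
    rw [← e.tsum_eq]
    exact tsum_congr he
  have hF3 := (sigmaAntidiagonalEquivProd.summable_iff (f := fun q : ℕ+ × ℕ+ => F q.1 q.2)).2 hF2
  rw [h1, ← sigmaAntidiagonalEquivProd.tsum_eq]
  have h2 := hF3.tsum_sigma
  simp only [Function.comp_def] at h2
  rw [h2, ← Equiv.pnatEquivNat.symm.tsum_eq]
  refine tsum_congr fun n => ?_
  rw [tsum_fintype]
  exact Finset.sum_coe_sort (n + 1).divisorsAntidiagonal (fun p => F p.1 p.2)

lemma rsigma_eq (n : ℕ) : rsigma (1 / 2) n = ∑ p ∈ n.divisorsAntidiagonal, √(p.1 : ℝ) := by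
  unfold rsigma
  rw [Nat.sum_divisorsAntidiagonal (f := fun d _ => √(d : ℝ))]
  refine Finset.sum_congr rfl fun d _ => ?_
  rw [Real.sqrt_eq_rpow]

lemma rsigma_div (n : ℕ) (hn : 0 < n) :
    rsigma (1 / 2) n / √(n : ℝ) = ∑ p ∈ n.divisorsAntidiagonal, 1 / √(p.2 : ℝ) := by
  rw [rsigma_eq, Finset.sum_div]
  refine Finset.sum_congr rfl fun p hp => ?_
  obtain ⟨h, _⟩ := Nat.mem_divisorsAntidiagonal.1 hp
  have h1 : 0 < p.1 := Nat.pos_of_ne_zero (by rintro h0; rw [h0, zero_mul] at h; omega)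
  have h2 : 0 < p.2 := Nat.pos_of_ne_zero (by rintro h0; rw [h0, mul_zero] at h; omega)
  rw [← h]
  push_cast
  have h1' : (0 : ℝ) < p.1 := by exact_mod_cast h1
  have h2' : (0 : ℝ) < p.2 := by exact_mod_cast h2
  rw [Real.sqrt_mul h1'.le]
  field_simp

lemma E_rearr (x : ℝ) :
    ((∑' j, Et x 0 j : ℝ) : ℂ) =
      ∑' n : ℕ, ((rsigma (1 / 2) (n + 1) / (x ^ 2 + ((n : ℝ) + 1) ^ 2) : ℝ) : ℂ) := by
  let F : ℕ → ℕ → ℂ := fun d m => ((√(d : ℝ) / (x ^ 2 + ((d : ℝ) * m) ^ 2) : ℝ) : ℂ)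
  have hE : ∀ j, ((Et x 0 j : ℝ) : ℂ) = F (j.1 + 1) (j.2 + 1) := by
    intro j; simp only [F, Et]; push_cast; simp
  have hs : Summable fun j : ℕ × ℕ => F (j.1 + 1) (j.2 + 1) :=
    (Complex.summable_ofReal.2 (Et_summable x 0 le_rfl)).congr hE
  rw [Complex.ofReal_tsum, tsum_congr hE, divisor_rearr F hs]
  refine tsum_congr fun n => ?_
  rw [rsigma_eq, Finset.sum_div, Complex.ofReal_sum]
  refine Finset.sum_congr rfl fun p hp => ?_
  obtain ⟨h, _⟩ := Nat.mem_divisorsAntidiagonal.1 hp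
  have h' : (p.1 : ℝ) * p.2 = n + 1 := by exact_mod_cast h
  simp only [F]
  rw [h']

lemma D_rearr (x : ℝ) (hx : 0 < x) :
    ∑' j, Dt x 0 j = (√2 : ℝ) *
      ∑' n : ℕ, ((rsigma (1 / 2) (n + 1) / Real.sqrt ((n : ℝ) + 1) *
        Real.exp (-(2 * π * Real.sqrt (2 * ((n : ℝ) + 1) * x))) *
        Real.sin (π / 4 - 2 * π * Real.sqrt (2 * ((n : ℝ) + 1) * x)) : ℝ) : ℂ) := by
  let g : ℝ → ℝ := fun y => Real.exp (-(2 * π * Real.sqrt (2 * y * x))) *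
        Real.sin (π / 4 - 2 * π * Real.sqrt (2 * y * x))
  let F : ℕ → ℕ → ℂ := fun m k => ((√2 / √(k : ℝ) * g ((m : ℝ) * k) : ℝ) : ℂ)
  have hD : ∀ j, Dt x 0 j = F (j.1 + 1) (j.2 + 1) := by
    intro j
    unfold Dt
    rw [Hh_pair _ _ (by positivity)]
    have : 2 * √(π * ((j.2 : ℝ) + 1)) * √(2 * π * x * ((j.1 : ℝ) + 1)) =
        2 * π * √(2 * (((j.1 : ℝ) + 1) * ((j.2 : ℝ) + 1)) * x) := by
      rw [mul_assoc, ← Real.sqrt_mul (by positivity),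
        show π * ((j.2 : ℝ) + 1) * (2 * π * x * ((j.1 : ℝ) + 1)) =
          π ^ 2 * (2 * (((j.1 : ℝ) + 1) * ((j.2 : ℝ) + 1)) * x) by ring,
        Real.sqrt_mul (by positivity), Real.sqrt_sq Real.pi_pos.le]
      ring
    rw [this]
    simp only [F, g]
    push_cast
    rfl
  have hs : Summable fun j : ℕ × ℕ => F (j.1 + 1) (j.2 + 1) :=
    (Dt_summable x hx 0 le_rfl).congr hD
  rw [tsum_congr hD, divisor_rearr F hs, ← tsum_mul_left]
  refine tsum_congr fun n => ?_
  have hr := rsigma_div (n + 1) (Nat.succ_pos n)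
  push_cast at hr
  rw [hr, ← Complex.ofReal_mul, mul_assoc, Finset.sum_mul, Finset.mul_sum, Complex.ofReal_sum]
  refine Finset.sum_congr rfl fun p hp => ?_
  obtain ⟨h, _⟩ := Nat.mem_divisorsAntidiagonal.1 hp
  have h' : (p.1 : ℝ) * p.2 = n + 1 := by exact_mod_cast h
  simp only [F, g]
  rw [h']
  congr 1
  ring

theorem corollary_half_minus (x : ℝ) (hx : 0 < x) :
    (∑' n : ℕ, ((rsigma (1 / 2) (n + 1) / Real.sqrt ((n : ℝ) + 1) *
        Real.exp (-(2 * π * Real.sqrt (2 * ((n : ℝ) + 1) * x))) *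
        Real.sin (π / 4 - 2 * π * Real.sqrt (2 * ((n : ℝ) + 1) * x)) : ℝ) : ℂ))
    = ((2 * π * Real.sqrt x + 1 / (2 * Real.sqrt 2 * π * x) : ℝ) : ℂ) * riemannZeta (-1 / 2)
      - riemannZeta (1 / 2) / ((2 * Real.sqrt 2 : ℝ) : ℂ)
      + ((x / (π * Real.sqrt 2) : ℝ) : ℂ) *
        ∑' n : ℕ, ((rsigma (1 / 2) (n + 1) / (x ^ 2 + ((n : ℝ) + 1) ^ 2) : ℝ) : ℂ) := by
  have hk := key x hx
  rw [E_rearr x, D_rearr x hx] at hk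
  set L := ∑' n : ℕ, ((rsigma (1 / 2) (n + 1) / Real.sqrt ((n : ℝ) + 1) *
        Real.exp (-(2 * π * Real.sqrt (2 * ((n : ℝ) + 1) * x))) *
        Real.sin (π / 4 - 2 * π * Real.sqrt (2 * ((n : ℝ) + 1) * x)) : ℝ) : ℂ)
  set S := ∑' n : ℕ, ((rsigma (1 / 2) (n + 1) / (x ^ 2 + ((n : ℝ) + 1) ^ 2) : ℝ) : ℂ)
  have e1 : 2 * √π * √(2 * π * x) = √2 * (2 * π * √x) := by
    rw [show 2 * π * x = π * (2 * x) by ring, Real.sqrt_mul Real.pi_pos.le,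
      Real.sqrt_mul (by norm_num)]
    have := Real.mul_self_sqrt Real.pi_pos.le
    linear_combination (2 * √2 * √x) * this
  rw [e1] at hk
  have h2 : (√2 : ℂ) ≠ 0 := by
    have : √2 ≠ 0 := by positivity
    exact_mod_cast this
  have hp : (π : ℂ) ≠ 0 := by exact_mod_cast Real.pi_pos.ne'
  have hx0 : (x : ℂ) ≠ 0 := by exact_mod_cast hx.ne'
  apply mul_left_cancel₀ h2
  push_cast at hk ⊢
  have c1 : (√2 : ℂ) * (2 * π * √x + 1 / (2 * √2 * π * x)) = √2 * (2 * π * √x) + 1 / (2 * π * x) := by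
    field_simp
  have c2 : (√2 : ℂ) * (riemannZeta (1 / 2) / (2 * √2)) = 1 / 2 * riemannZeta (1 / 2) := by
    field_simp
  have c3 : (√2 : ℂ) * (x / (π * √2)) = x / π := by
    field_simp
  linear_combination -hk - riemannZeta (-1 / 2) * c1 + c2 - S * c3
end
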